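/- arXiv:1610.01365 — 2 statements merged into one kernel-verified Lean document; each statement's English description precedes it below -/
import Mathlib

section
/- Let Ω ⊆ ℂ be a domain, let X be the connected component of ∞ in (ℂ∪{∞})∖Ω, and set Ω̂ := (ℂ∪{∞})∖X ⊆ ℂ. Then Ω̂ is a simply connected domain in ℂ containing Ω, and Ω̂ ⊆ G for every simply connected domain G with Ω ⊆ G ⊆ ℂ; consequently Ω̂ equals the intersection of all simply connected domains G with Ω ⊆ G ⊆ ℂ. -/
open Set OnePoint

/-- The crossing cochain of the upward half line left of `(p,q)` is a coboundary on `V`. -/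
def EnvGood (V : Finset (ℤ × ℤ)) (p q : ℤ) : Prop :=
  ∃ u : ℤ → ℤ → ℤ,
    (∀ a b, (a, b) ∈ V → (a + 1, b) ∈ V →
      u (a + 1) b = u a b + if a + 1 = p ∧ q < b then 1 else 0) ∧
    (∀ a b, (a, b) ∈ V → (a, b + 1) ∈ V → u a (b + 1) = u a b)

theorem EnvGood.up (V : Finset (ℤ × ℤ)) (p q : ℤ) (h1 : (p, q + 1) ∉ V) :
    EnvGood V p q ↔ EnvGood V p (q + 1) := by
  have key : ∀ a b, (a + 1, b) ∈ V → ((a + 1 = p ∧ q < b) ↔ (a + 1 = p ∧ q + 1 < b)) := by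
    intro a b hb
    constructor
    · rintro ⟨h, h'⟩
      refine ⟨h, ?_⟩
      by_contra hc
      have : b = q + 1 := by omega
      subst this; subst h; exact h1 hb
    · rintro ⟨h, h'⟩; exact ⟨h, by omega⟩
  constructor
  · rintro ⟨u, hu, hv⟩
    refine ⟨u, fun a b ha hb => ?_, hv⟩
    rw [hu a b ha hb]; simp only [key a b hb]
  · rintro ⟨u, hu, hv⟩
    refine ⟨u, fun a b ha hb => ?_, hv⟩
    rw [hu a b ha hb]; simp only [key a b hb]

theorem EnvGood.right (V : Finset (ℤ × ℤ)) (p q q' : ℤ) (h : (p, q) ∉ V) (h' : (p + 1, q') ∉ V)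
    (hq : q' ≤ q + 1) (hq' : q ≤ q' + 1) :
    EnvGood V p q ↔ EnvGood V (p + 1) q' := by
  have hne : ∀ a b, (a, b) ∈ V → ¬ (a = p ∧ b = q) := by
    rintro a b hab ⟨rfl, rfl⟩; exact h hab
  have hne' : ∀ a b, (a, b) ∈ V → ¬ (a = p + 1 ∧ b = q') := by
    rintro a b hab ⟨rfl, rfl⟩; exact h' hab
  constructor
  · rintro ⟨u, hu, hv⟩
    refine ⟨fun a b => u a b - if a = p ∧ q < b then 1 else 0, fun a b ha hb => ?_,
      fun a b ha hb => ?_⟩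
    · have := hu a b ha hb
      have := hne _ _ ha
      have := hne _ _ hb
      have := hne' _ _ ha
      have := hne' _ _ hb
      dsimp only
      split_ifs at * <;> omega
    · have := hv a b ha hb
      have := hne _ _ ha
      have := hne _ _ hb
      dsimp only
      split_ifs at * <;> omega
  · rintro ⟨u, hu, hv⟩
    refine ⟨fun a b => u a b + if a = p ∧ q < b then 1 else 0, fun a b ha hb => ?_,
      fun a b ha hb => ?_⟩
    · have := hu a b ha hb
      have := hne _ _ ha
      have := hne _ _ hb
      have := hne' _ _ ha
      have := hne' _ _ hb
      dsimp only
      split_ifs at * <;> omega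
    · have := hv a b ha hb
      have := hne _ _ ha
      have := hne _ _ hb
      dsimp only
      split_ifs at * <;> omega

theorem EnvGood.adj (V : Finset (ℤ × ℤ)) (p q p' q' : ℤ) (h : (p, q) ∉ V) (h' : (p', q') ∉ V)
    (h1 : p' ≤ p + 1) (h2 : p ≤ p' + 1) (h3 : q' ≤ q + 1) (h4 : q ≤ q' + 1) :
    EnvGood V p q ↔ EnvGood V p' q' := by
  rcases (by omega : p' = p + 1 ∨ p = p' + 1 ∨ p' = p) with rfl | rfl | rfl
  · exact EnvGood.right V p q q' h h' h3 h4
  · exact (EnvGood.right V p' q' q h' h h4 h3).symm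
  · rcases (by omega : q' = q + 1 ∨ q = q' + 1 ∨ q' = q) with rfl | rfl | rfl
    · exact EnvGood.up V _ q h'
    · exact (EnvGood.up V _ q' h).symm
    · rfl

theorem EnvGood.far (V : Finset (ℤ × ℤ)) (M p q : ℤ)
    (hV : ∀ a b, (a, b) ∈ V → -M ≤ a ∧ a ≤ M ∧ -M ≤ b ∧ b ≤ M)
    (hp : p < -M ∨ M < p ∨ q < -M ∨ M < q) : EnvGood V p q := by
  by_cases hq : q < -M
  · refine ⟨fun a b => if p ≤ a then 1 else 0, fun a b ha hb => ?_, fun a b ha hb => rfl⟩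
    have := hV _ _ ha
    have := hV _ _ hb
    dsimp only
    split_ifs <;> omega
  · refine ⟨fun a b => 0, fun a b ha hb => ?_, fun a b ha hb => rfl⟩
    have := hV _ _ ha
    have := hV _ _ hb
    dsimp only
    split_ifs <;> omega

theorem env_gauge {G : Type*} [Group G] (E : ℤ × ℤ → ℤ × ℤ → G) : ∀ (n : ℕ) (V : Finset (ℤ × ℤ)),
    V.card = n → (∀ p q, (p, q) ∉ V → EnvGood V p q) →
    (∀ a b, (a, b) ∈ V → (a + 1, b) ∈ V → (a, b + 1) ∈ V → (a + 1, b + 1) ∈ V →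
      E (a, b) (a + 1, b) * E (a + 1, b) (a + 1, b + 1) =
      E (a, b) (a, b + 1) * E (a, b + 1) (a + 1, b + 1)) →
    ∃ h : ℤ × ℤ → G,
      (∀ a b, (a, b) ∈ V → (a + 1, b) ∈ V → h (a + 1, b) = h (a, b) * E (a, b) (a + 1, b)) ∧
      (∀ a b, (a, b) ∈ V → (a, b + 1) ∈ V → h (a, b + 1) = h (a, b) * E (a, b) (a, b + 1)) := by
  intro n
  induction n with
  | zero =>
    intro V hV _ _
    rw [Finset.card_eq_zero] at hV
    subst hV
    exact ⟨fun _ => 1, by simp, by simp⟩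
  | succ n ih =>
    intro V hcard hgood hflat
    have hne : V.Nonempty := by rw [← Finset.card_pos]; omega
    obtain ⟨v, hv, hmax⟩ := Finset.exists_max_image V
      (fun p : ℤ × ℤ => toLex (p.2, -p.1)) hne
    obtain ⟨a₀, b₀⟩ := v
    have hmax' : ∀ a b, (a, b) ∈ V → b < b₀ ∨ (b = b₀ ∧ a₀ ≤ a) := by
      intro a b hab
      have := hmax _ hab
      rw [Prod.Lex.toLex_le_toLex] at this
      simp only at this
      omega
    set W := V.erase (a₀, b₀) with hW
    have hWmem : ∀ a b, (a, b) ∈ W ↔ (a, b) ∈ V ∧ ¬ (a = a₀ ∧ b = b₀) := by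
      intro a b; rw [hW, Finset.mem_erase]; simp [Prod.ext_iff, and_comm]
    have hWg : ∀ p q, (p, q) ∉ W → EnvGood W p q := by
      intro p q hpq
      by_cases hpv : (p, q) ∈ V
      · have : p = a₀ ∧ q = b₀ := by
          by_contra hc; exact hpq ((hWmem _ _).2 ⟨hpv, hc⟩)
        obtain ⟨rfl, rfl⟩ := this
        refine ⟨fun _ _ => 0, fun a b ha hb => ?_, fun a b ha hb => rfl⟩
        have := hmax' _ _ ((hWmem _ _).1 ha).1
        dsimp only
        split_ifs <;> omega
      · obtain ⟨u, hu, hv⟩ := hgood p q hpv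
        exact ⟨u, fun a b ha hb => hu a b ((hWmem _ _).1 ha).1 ((hWmem _ _).1 hb).1,
          fun a b ha hb => hv a b ((hWmem _ _).1 ha).1 ((hWmem _ _).1 hb).1⟩
    obtain ⟨h, hh, hh'⟩ := ih W (by rw [hW, Finset.card_erase_of_mem hv, hcard]; rfl) hWg
      (fun a b h1 h2 h3 h4 => hflat a b ((hWmem _ _).1 h1).1 ((hWmem _ _).1 h2).1
        ((hWmem _ _).1 h3).1 ((hWmem _ _).1 h4).1)
    -- it suffices to produce a gauge on `W` and a compatible value at the removed point
    suffices hs : ∃ (k : ℤ × ℤ → G) (g : G),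
        (∀ a b, (a, b) ∈ W → (a + 1, b) ∈ W → k (a + 1, b) = k (a, b) * E (a, b) (a + 1, b)) ∧
        (∀ a b, (a, b) ∈ W → (a, b + 1) ∈ W → k (a, b + 1) = k (a, b) * E (a, b) (a, b + 1)) ∧
        ((a₀ + 1, b₀) ∈ V → k (a₀ + 1, b₀) = g * E (a₀, b₀) (a₀ + 1, b₀)) ∧
        ((a₀, b₀ - 1) ∈ V → g = k (a₀, b₀ - 1) * E (a₀, b₀ - 1) (a₀, b₀)) by
      obtain ⟨k, g, k1, k2, k3, k4⟩ := hs
      refine ⟨Function.update k (a₀, b₀) g, fun a b ha hb => ?_, fun a b ha hb => ?_⟩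
      · have m1 := hmax' _ _ ha
        have m2 := hmax' _ _ hb
        have n2 : (a + 1, b) ≠ (a₀, b₀) := by
          intro hc; rw [Prod.mk.injEq] at hc; omega
        rw [Function.update_of_ne n2]
        by_cases hc : a = a₀ ∧ b = b₀
        · obtain ⟨rfl, rfl⟩ := hc
          rw [Function.update_self]; exact k3 hb
        · have n1 : (a, b) ≠ (a₀, b₀) := by
            intro hc'; rw [Prod.mk.injEq] at hc'; exact hc hc'
          rw [Function.update_of_ne n1]
          exact k1 a b ((hWmem _ _).2 ⟨ha, hc⟩) ((hWmem _ _).2 ⟨hb, by omega⟩)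
      · have m1 := hmax' _ _ ha
        have m2 := hmax' _ _ hb
        have n1 : (a, b) ≠ (a₀, b₀) := by
          intro hc; rw [Prod.mk.injEq] at hc; omega
        rw [Function.update_of_ne n1]
        by_cases hc : a = a₀ ∧ b + 1 = b₀
        · obtain ⟨rfl, rfl⟩ := hc
          rw [Function.update_self]
          have := k4 (by simpa using ha)
          simpa using this
        · have n2 : (a, b + 1) ≠ (a₀, b₀) := by
            intro hc'; rw [Prod.mk.injEq] at hc'; exact hc hc'
          rw [Function.update_of_ne n2]
          exact k2 a b ((hWmem _ _).2 ⟨ha, by omega⟩) ((hWmem _ _).2 ⟨hb, hc⟩)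
    by_cases hR : (a₀ + 1, b₀) ∈ V
    · by_cases hD : (a₀, b₀ - 1) ∈ V
      · by_cases hDR : (a₀ + 1, b₀ - 1) ∈ V
        · refine ⟨h, h (a₀, b₀ - 1) * E (a₀, b₀ - 1) (a₀, b₀), hh, hh', fun _ => ?_, fun _ => rfl⟩
          have e1 := hflat a₀ (b₀ - 1) hD hDR (by simpa using hv) (by simpa using hR)
          have e2 := hh a₀ (b₀ - 1) ((hWmem _ _).2 ⟨hD, by omega⟩) ((hWmem _ _).2 ⟨hDR, by omega⟩)
          have e3 := hh' (a₀ + 1) (b₀ - 1) ((hWmem _ _).2 ⟨hDR, by omega⟩)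
            ((hWmem _ _).2 ⟨by simpa using hR, by omega⟩)
          simp only [sub_add_cancel] at e1 e3
          rw [e3, e2, mul_assoc, e1, mul_assoc]
        · obtain ⟨u, hu, hu'⟩ := hgood _ _ hDR
          have d1 := hu' a₀ (b₀ - 1) hD (by simpa using hv)
          have d2 := hu a₀ b₀ hv hR
          rw [if_pos ⟨rfl, by omega⟩] at d2
          rw [sub_add_cancel] at d1
          -- gauge transformation on a level set of `u`
          let g := h (a₀, b₀ - 1) * E (a₀, b₀ - 1) (a₀, b₀)
          let c := g * E (a₀, b₀) (a₀ + 1, b₀) * (h (a₀ + 1, b₀))⁻¹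
          refine ⟨fun p => if u p.1 p.2 = u (a₀ + 1) b₀ then c * h p else h p, g, ?_, ?_, ?_, ?_⟩
          · intro a b ha hb
            have e := hu a b ((hWmem _ _).1 ha).1 ((hWmem _ _).1 hb).1
            rw [if_neg, add_zero] at e
            · simp only [e]
              split_ifs
              · rw [hh a b ha hb]; exact (mul_assoc _ _ _).symm
              · exact hh a b ha hb
            · rintro ⟨h1, h2⟩
              have := hmax' _ _ ((hWmem _ _).1 ha).1
              have := ((hWmem _ _).1 ha).2
              omega
          · intro a b ha hb
            have e := hu' a b ((hWmem _ _).1 ha).1 ((hWmem _ _).1 hb).1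
            simp only [e]
            split_ifs
            · rw [hh' a b ha hb]; exact (mul_assoc _ _ _).symm
            · exact hh' a b ha hb
          · intro _
            simp [c]
          · intro _
            simp only
            rw [if_neg (by omega)]
      · refine ⟨h, h (a₀ + 1, b₀) * (E (a₀, b₀) (a₀ + 1, b₀))⁻¹, hh, hh', fun _ => by simp,
          fun hc => absurd hc hD⟩
    · exact ⟨h, h (a₀, b₀ - 1) * E (a₀, b₀ - 1) (a₀, b₀), hh, hh', fun hc => absurd hc hR,
        fun _ => rfl⟩

theorem env_exists_cls (Y : Type) [TopologicalSpace Y] [PathConnectedSpace Y] :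
    ∃ (G : Type) (_ : Group G) (c : ∀ x y : Y, Path x y → G),
      (∀ x y z (p : Path x y) (q : Path y z), c x z (p.trans q) = c x y p * c y z q) ∧
      (∀ x y (p q : Path x y), p.Homotopic q → c x y p = c x y q) ∧
      (∀ x (p : Path x x), c x x p = 1 → p.Homotopic (Path.refl x)) := by
  obtain ⟨x₀⟩ : Nonempty Y := inferInstance
  let b : ∀ y, Path.Homotopic.Quotient x₀ y :=
    fun y => Path.Homotopic.Quotient.mk (PathConnectedSpace.somePath x₀ y)
  have can : ∀ y z (r : Path.Homotopic.Quotient y z), (b y).symm.trans ((b y).trans r) = r := by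
    intro y z r
    rw [← Path.Homotopic.Quotient.trans_assoc]; simp
  let c : ∀ x y : Y, Path x y → FundamentalGroup Y x₀ := fun x y p => FundamentalGroup.fromPath
      (((b x).trans (Path.Homotopic.Quotient.mk p)).trans (b y).symm)
  have hc1 : ∀ x y z (p : Path x y) (q : Path y z), c x z (p.trans q) = c y z q * c x y p := by
    intro x y z p q
    have key : (((b x).trans (Path.Homotopic.Quotient.mk (p.trans q))).trans (b z).symm) =
      (((b x).trans (Path.Homotopic.Quotient.mk p)).trans (b y).symm).trans
      (((b y).trans (Path.Homotopic.Quotient.mk q)).trans (b z).symm) := by simp [can]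
    exact key
  refine ⟨(FundamentalGroup Y x₀)ᵐᵒᵖ, inferInstance, fun x y p =>
    MulOpposite.op (c x y p), ?_, ?_, ?_⟩
  · intro x y z p q
    exact congrArg MulOpposite.op (hc1 x y z p q)
  · intro x y p q h
    have : c x y p = c x y q := by
      simp only [c]
      rw [Path.Homotopic.Quotient.eq.2 h]
    exact congrArg MulOpposite.op this
  · intro x p h
    have h : (((b x).trans (Path.Homotopic.Quotient.mk p)).trans (b x).symm) =
      Path.Homotopic.Quotient.refl x₀ := MulOpposite.op_injective h
    apply Path.Homotopic.Quotient.exact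
    have h2 := congrArg (fun r => ((b x).symm.trans (Path.Homotopic.Quotient.trans r (b x)))) h
    simpa [can] using h2

theorem env_convex_homotopic {U C : Set ℂ} (hC : Convex ℝ C) (hCU : C ⊆ U) {x y : U}
    (p q : Path x y) (hp : ∀ t, (p t : ℂ) ∈ C) (hq : ∀ t, (q t : ℂ) ∈ C) : p.Homotopic q := by
  refine ⟨{ toFun := fun st => ⟨(1 - (st.1 : ℝ)) • (p st.2 : ℂ) + (st.1 : ℝ) • (q st.2 : ℂ),
              hCU (hC (hp _) (hq _) (by linarith [st.1.2.2]) st.1.2.1 (by ring))⟩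
            continuous_toFun := ?_
            map_zero_left := ?_
            map_one_left := ?_
            prop' := ?_ }⟩
  · fun_prop
  · intro t; ext; simp
  · intro t; ext; simp
  · intro t s hs
    rcases hs with hs | hs
    · subst hs; ext; simp; ring
    · rw [mem_singleton_iff] at hs; subst hs; ext; simp; ring

theorem env_exists_E {U : Set ℂ} {G : Type} [Group G] (c : ∀ x y : U, Path x y → G)
    (c1 : ∀ x y z (p : Path x y) (q : Path y z), c x z (p.trans q) = c x y p * c y z q)
    (c2 : ∀ x y (p q : Path x y), p.Homotopic q → c x y p = c x y q) :
    ∃ E : ℂ → ℂ → G,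
      (∀ C, Convex ℝ C → C ⊆ U → ∀ (x y : U) (p : Path x y), (∀ t, (p t : ℂ) ∈ C) →
        c x y p = E x y) ∧
      (∀ C, Convex ℝ C → C ⊆ U → ∀ x ∈ C, ∀ y ∈ C, ∀ z ∈ C, E x y * E y z = E x z) := by
  classical
  have hseg : ∀ x y : U, segment ℝ (x : ℂ) y ⊆ U →
      ∃ p : Path x y, ∀ t, (p t : ℂ) ∈ segment ℝ (x : ℂ) y := by
    intro x y h
    have hm : ∀ t : unitInterval,
        (1 - (t : ℝ)) • (x : ℂ) + (t : ℝ) • (y : ℂ) ∈ segment ℝ (x : ℂ) y :=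
      fun t => ⟨1 - t, t, by linarith [t.2.2], t.2.1, by ring, rfl⟩
    exact ⟨{ toFun := fun t => ⟨_, h (hm t)⟩
             continuous_toFun := by fun_prop
             source' := by ext; simp
             target' := by ext; simp }, hm⟩
  choose sg hsg using hseg
  let E : ℂ → ℂ → G := fun x y =>
    if h : x ∈ U ∧ y ∈ U ∧ segment ℝ x y ⊆ U then c ⟨x, h.1⟩ ⟨y, h.2.1⟩ (sg _ _ h.2.2) else 1
  have hE : ∀ C, Convex ℝ C → C ⊆ U → ∀ (x y : U) (p : Path x y), (∀ t, (p t : ℂ) ∈ C) →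
        c x y p = E x y := by
    intro C hC hCU x y p hp
    have hx : (x : ℂ) ∈ C := by simpa using hp 0
    have hy : (y : ℂ) ∈ C := by simpa using hp 1
    have hs := hC.segment_subset hx hy
    have h : (x : ℂ) ∈ U ∧ (y : ℂ) ∈ U ∧ segment ℝ (x : ℂ) y ⊆ U := ⟨x.2, y.2, hs.trans hCU⟩
    simp only [E, dif_pos h]
    exact c2 _ _ _ _ (env_convex_homotopic hC hCU _ _ hp fun t => hs (hsg _ _ h.2.2 t))
  refine ⟨E, hE, ?_⟩
  intro C hC hCU x hx y hy z hz
  have hxy := hC.segment_subset hx hy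
  have hyz := hC.segment_subset hy hz
  let p := sg ⟨x, hCU hx⟩ ⟨y, hCU hy⟩ (hxy.trans hCU)
  let q := sg ⟨y, hCU hy⟩ ⟨z, hCU hz⟩ (hyz.trans hCU)
  have hp : ∀ t, (p t : ℂ) ∈ C := fun t => hxy (hsg ⟨x, hCU hx⟩ ⟨y, hCU hy⟩ (hxy.trans hCU) t)
  have hq : ∀ t, (q t : ℂ) ∈ C := fun t => hyz (hsg ⟨y, hCU hy⟩ ⟨z, hCU hz⟩ (hyz.trans hCU) t)
  have e1 := hE C hC hCU _ _ p hp
  have e2 := hE C hC hCU _ _ q hq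
  have e3 := hE C hC hCU _ _ (p.trans q) (by
    intro t
    rw [Path.trans_apply]
    split_ifs
    · exact hp _
    · exact hq _)
  rw [← e1, ← e2, ← e3, c1]

theorem env_loop {U : Set ℂ} {G : Type} [Group G] (c : ∀ x y : U, Path x y → G)
    (c1 : ∀ x y z (p : Path x y) (q : Path y z), c x z (p.trans q) = c x y p * c y z q)
    (c2 : ∀ x y (p q : Path x y), p.Homotopic q → c x y p = c x y q)
    (E : ℂ → ℂ → G)
    (hE1 : ∀ C, Convex ℝ C → C ⊆ U → ∀ (x y : U) (p : Path x y), (∀ t, (p t : ℂ) ∈ C) →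
        c x y p = E x y)
    (hE2 : ∀ C, Convex ℝ C → C ⊆ U → ∀ x ∈ C, ∀ y ∈ C, ∀ z ∈ C, E x y * E y z = E x z)
    (x : U) (γ : Path x x) (K : ℂ → G)
    (hK : ∀ t, ∃ C, Convex ℝ C ∧ C ⊆ U ∧ C ∈ nhds (γ t : ℂ) ∧
      ∃ P ∈ C, ∃ g : G, ∀ w ∈ C, K w = g * E P w) :
    c x x γ = 1 := by
  let f : unitInterval → G := fun t => K (γ 0) * c _ _ (γ.subpath 0 t) * (K (γ t))⁻¹
  have hf : IsLocallyConstant f := by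
    rw [IsLocallyConstant.iff_eventually_eq]
    intro t₀
    obtain ⟨C, hC, hCU, hCn, P, hP, g, hg⟩ := hK t₀
    have hcont : ContinuousAt (fun t => (γ t : ℂ)) t₀ := by fun_prop
    have hpre := hcont.preimage_mem_nhds hCn
    obtain ⟨ε, hε, hball⟩ := Metric.mem_nhds_iff.1 hpre
    filter_upwards [Metric.ball_mem_nhds t₀ hε] with t ht
    have hsub : ∀ s, ((γ.subpath t₀ t) s : ℂ) ∈ C := by
      intro s
      have hs : (γ.subpath t₀ t) s ∈ range (γ.subpath t₀ t) := mem_range_self s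
      rw [Path.range_subpath] at hs
      obtain ⟨r, hr, hrs⟩ := hs
      rw [← hrs]
      apply hball
      rw [Metric.mem_ball] at ht ⊢
      refine lt_of_le_of_lt ?_ ht
      rw [Subtype.dist_eq, Subtype.dist_eq, Real.dist_eq, Real.dist_eq]
      rw [mem_uIcc] at hr
      rcases hr with ⟨h1, h2⟩ | ⟨h1, h2⟩
      · have h1 : (t₀ : ℝ) ≤ r := h1
        have h2 : (r : ℝ) ≤ t := h2
        rw [abs_of_nonneg (by linarith), abs_of_nonneg (by linarith)]; linarith
      · have h1 : (t : ℝ) ≤ r := h1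
        have h2 : (r : ℝ) ≤ t₀ := h2
        rw [abs_of_nonpos (by linarith), abs_of_nonpos (by linarith)]; linarith
    have e1 := hE1 C hC hCU _ _ _ hsub
    have e2 : c _ _ (γ.subpath 0 t) = c _ _ (γ.subpath 0 t₀) * c _ _ (γ.subpath t₀ t) := by
      rw [← c1]
      exact (c2 _ _ _ _ ⟨Path.Homotopy.subpathTransSubpath γ 0 t₀ t⟩).symm
    have m0 : (γ t₀ : ℂ) ∈ C := mem_of_mem_nhds hCn
    have m1 : (γ t : ℂ) ∈ C := hball ht
    have e3 := hE2 C hC hCU P hP _ m0 _ m1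
    simp only [f]
    rw [e2, e1, hg _ m0, hg _ m1, ← e3]
    group
  have h01 : f 0 = f 1 := hf.apply_eq_of_isPreconnected isPreconnected_univ (mem_univ _) (mem_univ _)
  have c0 : c _ _ (Path.refl (γ 0)) = 1 := by
    have := c1 _ _ _ (Path.refl (γ 0)) (Path.refl (γ 0))
    rw [Path.refl_trans_refl] at this
    simpa using this
  have hx : ∀ y y' (hy : y = x) (hy' : y' = x), c y y' (γ.cast hy hy') = c x x γ := by
    rintro _ _ rfl rfl; rfl
  have hKK : K (γ 1) = K (γ 0) := by rw [γ.source, γ.target]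
  simp only [f, Path.subpath_self, c0, Path.subpath_zero_one, hx, hKK] at h01
  rw [mul_one, mul_inv_cancel] at h01
  exact conj_eq_one_iff.1 h01.symm

theorem env_floor_adj (x y : ℝ) (h : |y - x| < 1) : ⌊y⌋ ≤ ⌊x⌋ + 1 ∧ ⌊x⌋ ≤ ⌊y⌋ + 1 := by
  rw [abs_lt] at h
  constructor
  · rw [← Int.floor_add_one]; exact Int.floor_le_floor (by linarith)
  · rw [← Int.floor_add_one]; exact Int.floor_le_floor (by linarith)

theorem env_good (X : Set (OnePoint ℂ)) (hX : IsPreconnected X) (hinf : ∞ ∈ X) (δ : ℝ) (hδ : 0 < δ)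
    (M : ℤ) (V : Finset (ℤ × ℤ))
    (hV : ∀ a b, (a, b) ∈ V ↔ (-M ≤ a ∧ a ≤ M ∧ -M ≤ b ∧ b ≤ M) ∧
      ∀ z : ℂ, ⌊z.re / δ⌋ = a → ⌊z.im / δ⌋ = b → (z : OnePoint ℂ) ∉ X) (p q : ℤ)
    (hpq : (p, q) ∉ V) : EnvGood V p q := by
  have hbox : ∀ a b, (a, b) ∈ V → -M ≤ a ∧ a ≤ M ∧ -M ≤ b ∧ b ≤ M :=
    fun a b h => ((hV a b).1 h).1
  let g : OnePoint ℂ → Prop := fun x => ∀ z : ℂ, x = ↑z → EnvGood V ⌊z.re / δ⌋ ⌊z.im / δ⌋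
  have hnot : ∀ z : ℂ, (z : OnePoint ℂ) ∈ X → (⌊z.re / δ⌋, ⌊z.im / δ⌋) ∉ V := by
    intro z hz hc
    exact ((hV _ _).1 hc).2 z rfl rfl hz
  have hloc : ∀ x ∈ X, ∀ᶠ y in nhds x, y ∈ X → (g y ↔ g x) := by
    intro x hx
    induction x using OnePoint.rec with
    | infty =>
      have hg : g ∞ := fun z hz => absurd hz (by simp)
      have hn : ((fun z : ℂ => (z : OnePoint ℂ)) '' Metric.closedBall 0 (2 * (M + 1) * δ))ᶜ ∈
          nhds (∞ : OnePoint ℂ) :=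
        (OnePoint.isOpen_compl_image_coe.2 ⟨Metric.isClosed_closedBall,
          isCompact_closedBall _ _⟩).mem_nhds (by simp)
      filter_upwards [hn] with y hy _
      refine iff_of_true ?_ hg
      rintro z rfl
      apply EnvGood.far V M _ _ hbox
      by_contra hc
      push Not at hc
      obtain ⟨h1, h2, h3, h4⟩ := hc
      apply hy
      refine ⟨z, ?_, rfl⟩
      have key : ∀ r : ℝ, -M ≤ ⌊r / δ⌋ → ⌊r / δ⌋ ≤ M → |r| ≤ (M + 1) * δ := by
        intro r h1 h2
        have h1' : (-M : ℝ) ≤ ⌊r / δ⌋ := by exact_mod_cast h1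
        have h2' : (⌊r / δ⌋ : ℝ) ≤ M := by exact_mod_cast h2
        have h5 := Int.floor_le (r / δ)
        have h6 := Int.lt_floor_add_one (r / δ)
        have e : r = r / δ * δ := by field_simp
        rw [e, abs_le]
        constructor
        · rw [← neg_mul]; exact mul_le_mul_of_nonneg_right (by linarith) hδ.le
        · exact mul_le_mul_of_nonneg_right (by linarith) hδ.le
      have k1 := key _ h1 h2
      have k2 := key _ h3 h4
      rw [mem_closedBall_zero_iff]
      have := Complex.norm_le_abs_re_add_abs_im z
      linarith
    | coe z =>
      rw [OnePoint.nhds_coe_eq, Filter.eventually_map]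
      filter_upwards [Metric.ball_mem_nhds z hδ] with w hw hwX
      have gz : ∀ z : ℂ, g z ↔ EnvGood V ⌊z.re / δ⌋ ⌊z.im / δ⌋ := by
        intro z
        constructor
        · intro h; exact h z rfl
        · intro h w hw
          rw [OnePoint.coe_eq_coe] at hw; subst hw; exact h
      rw [gz, gz]
      rw [Metric.mem_ball, Complex.dist_eq] at hw
      have key : ∀ r s : ℝ, |r - s| < δ → |r / δ - s / δ| < 1 := by
        intro r s h
        rw [← sub_div, abs_div, abs_of_pos hδ, div_lt_one hδ]; exact h
      have k1 := env_floor_adj _ _ (key w.re z.re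
        (lt_of_le_of_lt (by simpa using Complex.abs_re_le_norm (w - z)) hw))
      have k2 := env_floor_adj _ _ (key w.im z.im
        (lt_of_le_of_lt (by simpa using Complex.abs_im_le_norm (w - z)) hw))
      exact EnvGood.adj V _ _ _ _ (hnot w hwX) (hnot z hx) k1.2 k1.1 k2.2 k2.1
  have hall : ∀ x ∈ X, g x := by
    have : PreconnectedSpace X := isPreconnected_iff_preconnectedSpace.1 hX
    have hl : IsLocallyConstant (fun x : X => g x) := by
      rw [IsLocallyConstant.iff_eventually_eq]
      intro x
      have := hloc x x.2
      rw [nhds_subtype_eq_comap]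
      filter_upwards [this.comap (Subtype.val : X → OnePoint ℂ)] with y hy
      exact propext (hy y.2)
    intro x hx
    have e := hl.apply_eq_of_isPreconnected isPreconnected_univ (mem_univ ⟨x, hx⟩)
      (mem_univ (⟨∞, hinf⟩ : X))
    have e : g x = g ∞ := e
    rw [e]
    exact fun z hz => absurd hz (by simp)
  by_cases hb : -M ≤ p ∧ p ≤ M ∧ -M ≤ q ∧ q ≤ M
  · have : ¬ ∀ z : ℂ, ⌊z.re / δ⌋ = p → ⌊z.im / δ⌋ = q → (z : OnePoint ℂ) ∉ X :=
      fun hc => hpq ((hV p q).2 ⟨hb, hc⟩)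
    push Not at this
    obtain ⟨z, rfl, rfl, hz⟩ := this
    exact hall z hz z rfl
  · exact EnvGood.far V M _ _ hbox (by omega)

theorem env_simplyConnected (X : Set (OnePoint ℂ)) (hX : IsPreconnected X) (hinf : ∞ ∈ X)
    (U : Set ℂ) (hU : U = {z : ℂ | (z : OnePoint ℂ) ∉ X}) (hUo : IsOpen U) (hUc : IsConnected U) :
    SimplyConnectedSpace U := by
  classical
  have hpc : PathConnectedSpace U :=
    isPathConnected_iff_pathConnectedSpace.1 (hUo.isConnected_iff_isPathConnected.1 hUc)
  rw [simply_connected_iff_loops_nullhomotopic]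
  refine ⟨hpc, fun x γ => ?_⟩
  obtain ⟨G, _, c, c1, c2, c3⟩ := env_exists_cls U
  obtain ⟨E, hE1, hE2⟩ := env_exists_E c c1 c2
  apply c3
  -- the grid
  have hcpt : IsCompact (range fun t => (γ t : ℂ)) := isCompact_range (by fun_prop)
  obtain ⟨r, hr, hrU⟩ := hcpt.exists_thickening_subset_open hUo
    (by rintro _ ⟨t, rfl⟩; exact (γ t).2)
  obtain ⟨R, hR⟩ := hcpt.isBounded.exists_norm_le
  set δ := r / 4 with hδdef
  have hδ : 0 < δ := by positivity
  set M : ℤ := ⌈R / δ⌉ + 2 with hM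
  let V : Finset (ℤ × ℤ) := (Finset.Icc (-M) M ×ˢ Finset.Icc (-M) M).filter
    (fun p => ∀ z : ℂ, ⌊z.re / δ⌋ = p.1 → ⌊z.im / δ⌋ = p.2 → (z : OnePoint ℂ) ∉ X)
  have hV : ∀ a b, (a, b) ∈ V ↔ (-M ≤ a ∧ a ≤ M ∧ -M ≤ b ∧ b ≤ M) ∧
      ∀ z : ℂ, ⌊z.re / δ⌋ = a → ⌊z.im / δ⌋ = b → (z : OnePoint ℂ) ∉ X := by
    intro a b
    simp only [V, Finset.mem_filter, Finset.mem_product, Finset.mem_Icc, and_assoc]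
  let P : ℤ × ℤ → ℂ := fun p => ⟨p.1 * δ, p.2 * δ⟩
  let B : ℤ → ℤ → Set ℂ := fun a b =>
    {z | (a * δ ≤ z.re ∧ z.re < (a + 2) * δ) ∧ (b * δ ≤ z.im ∧ z.im < (b + 2) * δ)}
  have hBconv : ∀ a b, Convex ℝ (B a b) := by
    intro a b
    have e : B a b = (Complex.reLm ⁻¹' (Ico (a * δ) ((a + 2) * δ))) ∩
      (Complex.imLm ⁻¹' (Ico (b * δ) ((b + 2) * δ))) := rfl
    rw [e]
    exact ((convex_Ico _ _).linear_preimage _).inter ((convex_Ico _ _).linear_preimage _)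
  have hfl : ∀ (a : ℤ) (s : ℝ), a * δ ≤ s → s < (a + 2) * δ → ⌊s / δ⌋ = a ∨ ⌊s / δ⌋ = a + 1 := by
    intro a s h1 h2
    have h3 : a ≤ ⌊s / δ⌋ := Int.le_floor.2 (by rwa [le_div_iff₀ hδ])
    have h4 : ⌊s / δ⌋ < a + 2 := Int.floor_lt.2 (by rw [div_lt_iff₀ hδ]; push_cast; exact h2)
    omega
  let Bk : ℤ → ℤ → Prop := fun a b =>
    (a, b) ∈ V ∧ (a + 1, b) ∈ V ∧ (a, b + 1) ∈ V ∧ (a + 1, b + 1) ∈ V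
  have hBU : ∀ a b, Bk a b → B a b ⊆ U := by
    rintro a b ⟨h1, h2, h3, h4⟩ z ⟨⟨z1, z2⟩, z3, z4⟩
    rw [hU]
    rcases hfl a _ z1 z2 with e1 | e1 <;> rcases hfl b _ z3 z4 with e2 | e2
    · exact ((hV _ _).1 h1).2 z e1 e2
    · exact ((hV _ _).1 h3).2 z e1 e2
    · exact ((hV _ _).1 h2).2 z e1 e2
    · exact ((hV _ _).1 h4).2 z e1 e2
  have hP : ∀ a b a' b', (a' = a ∨ a' = a + 1) → (b' = b ∨ b' = b + 1) → P (a', b') ∈ B a b := by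
    intro a b a' b' ha hb
    have key : ∀ a a' : ℤ, (a' = a ∨ a' = a + 1) →
        (a : ℝ) * δ ≤ a' * δ ∧ (a' : ℝ) * δ < (a + 2) * δ := by
      rintro a a' (rfl | rfl)
      · constructor <;> nlinarith
      · push_cast; constructor <;> nlinarith
    exact ⟨key a a' ha, key b b' hb⟩
  obtain ⟨h, hh, hh'⟩ := env_gauge (fun p q => E (P p) (P q)) V.card V rfl
    (env_good X hX hinf δ hδ M V hV) (by
      intro a b h1 h2 h3 h4
      have hb := hBU a b ⟨h1, h2, h3, h4⟩
      rw [hE2 _ (hBconv a b) hb _ (hP a b _ _ (by simp) (by simp)) _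
          (hP a b _ _ (by simp) (by simp)) _ (hP a b _ _ (by simp) (by simp)),
        hE2 _ (hBconv a b) hb _ (hP a b _ _ (by simp) (by simp)) _
          (hP a b _ _ (by simp) (by simp)) _ (hP a b _ _ (by simp) (by simp))])
  let K : ℂ → G := fun w =>
    h (⌊w.re / δ⌋, ⌊w.im / δ⌋) * E (P (⌊w.re / δ⌋, ⌊w.im / δ⌋)) w
  have hKB : ∀ a b, Bk a b → ∀ w ∈ B a b, K w = h (a, b) * E (P (a, b)) w := by
    intro a b hbk w hw
    have hcoc := hE2 _ (hBconv a b) (hBU a b hbk)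
    have p00 := hP a b a b (by simp) (by simp)
    have p10 := hP a b (a + 1) b (by simp) (by simp)
    have p01 := hP a b a (b + 1) (by simp) (by simp)
    have p11 := hP a b (a + 1) (b + 1) (by simp) (by simp)
    obtain ⟨h1, h2, h3, h4⟩ := hbk
    simp only [K]
    rcases hfl a _ hw.1.1 hw.1.2 with e1 | e1 <;> rcases hfl b _ hw.2.1 hw.2.2 with e2 | e2 <;>
      rw [e1, e2]
    · rw [hh' _ _ h1 h3, mul_assoc, hcoc _ p00 _ p01 _ hw]
    · rw [hh _ _ h1 h2, mul_assoc, hcoc _ p00 _ p10 _ hw]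
    · rw [hh _ _ h3 h4, hh' _ _ h1 h3, mul_assoc, mul_assoc, hcoc _ p01 _ p11 _ hw,
        hcoc _ p00 _ p01 _ hw]
  refine env_loop c c1 c2 E hE1 hE2 x γ K fun t => ?_
  set z : ℂ := (γ t : ℂ) with hz
  set a := ⌊z.re / δ⌋ - 1 with ha
  set b := ⌊z.im / δ⌋ - 1 with hb
  have hzR : ‖z‖ ≤ R := hR _ ⟨t, rfl⟩
  have hreM : ∀ s : ℝ, |s| ≤ R → -M ≤ ⌊s / δ⌋ - 1 ∧ ⌊s / δ⌋ ≤ M := by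
    intro s hs
    rw [abs_le] at hs
    have k1 : s / δ ≤ ⌈R / δ⌉ := (div_le_div_of_nonneg_right hs.2 hδ.le).trans (Int.le_ceil _)
    have k2 : -(⌈R / δ⌉ : ℝ) ≤ s / δ := by
      have := (div_le_div_of_nonneg_right hs.1 hδ.le)
      rw [neg_div] at this
      linarith [Int.le_ceil (R / δ)]
    have k3 : ⌊s / δ⌋ ≤ ⌈R / δ⌉ := by
      exact_mod_cast (Int.floor_le _).trans k1
    have k4 : -⌈R / δ⌉ ≤ ⌊s / δ⌋ := Int.le_floor.2 (by push_cast; exact k2)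
    omega
  have m1 := hreM z.re ((Complex.abs_re_le_norm z).trans hzR)
  have m2 := hreM z.im ((Complex.abs_im_le_norm z).trans hzR)
  have hcell : ∀ a' b', (a' = a ∨ a' = a + 1) → (b' = b ∨ b' = b + 1) → (a', b') ∈ V := by
    intro a' b' ha' hb'
    refine (hV _ _).2 ⟨by omega, ?_⟩
    intro w hw1 hw2
    have hwU : w ∈ U := by
      apply hrU
      rw [Metric.mem_thickening_iff]
      refine ⟨z, ⟨t, rfl⟩, ?_⟩
      have key : ∀ r s : ℝ, (⌊r / δ⌋ = ⌊s / δ⌋ - 1 ∨ ⌊r / δ⌋ = ⌊s / δ⌋ - 1 + 1) →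
          |r - s| < 2 * δ := by
        intro r s hrs
        have f1 := Int.floor_le (r / δ)
        have f2 := Int.lt_floor_add_one (r / δ)
        have f3 := Int.floor_le (s / δ)
        have f4 := Int.lt_floor_add_one (s / δ)
        have f5 : (⌊r / δ⌋ : ℝ) ≤ ⌊s / δ⌋ := by exact_mod_cast (by omega)
        have f6 : (⌊s / δ⌋ : ℝ) - 1 ≤ ⌊r / δ⌋ := by exact_mod_cast (by omega)
        have : |r / δ - s / δ| < 2 := by rw [abs_lt]; constructor <;> linarith
        rwa [← sub_div, abs_div, abs_of_pos hδ, div_lt_iff₀ hδ] at this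
      have k1 := key w.re z.re (by rw [hw1]; exact ha')
      have k2 := key w.im z.im (by rw [hw2]; exact hb')
      rw [Complex.dist_eq]
      have := Complex.norm_le_abs_re_add_abs_im (w - z)
      rw [Complex.sub_re, Complex.sub_im] at this
      linarith
    rw [hU] at hwU
    exact hwU
  have hbk : Bk a b := ⟨hcell _ _ (by simp) (by simp), hcell _ _ (by simp) (by simp),
    hcell _ _ (by simp) (by simp), hcell _ _ (by simp) (by simp)⟩
  refine ⟨B a b, hBconv a b, hBU a b hbk, ?_, P (a, b), hP a b a b (by simp) (by simp),
    h (a, b), hKB a b hbk⟩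
  have hopen : IsOpen ((Complex.re ⁻¹' (Ioo (a * δ) ((a + 2) * δ))) ∩
      (Complex.im ⁻¹' (Ioo (b * δ) ((b + 2) * δ)))) :=
    (isOpen_Ioo.preimage Complex.continuous_re).inter (isOpen_Ioo.preimage Complex.continuous_im)
  have key : ∀ s : ℝ, s ∈ Ioo (((⌊s / δ⌋ - 1 : ℤ) : ℝ) * δ) ((((⌊s / δ⌋ - 1 : ℤ) : ℝ) + 2) * δ) := by
    intro s
    have f1 := Int.floor_le (s / δ)
    have f2 := Int.lt_floor_add_one (s / δ)
    constructor
    · rw [← lt_div_iff₀ hδ]; push_cast; linarith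
    · rw [← div_lt_iff₀ hδ]; push_cast; linarith
  refine Filter.mem_of_superset (hopen.mem_nhds ⟨key z.re, key z.im⟩) ?_
  rintro w ⟨w1, w2⟩
  exact ⟨⟨w1.1.le, w1.2⟩, w2.1.le, w2.2⟩

theorem env_no_log (z : ℂ) (L : ℂ → ℂ) (hL : Continuous L) (R : ℝ) (hR : 0 < R)
    (h : ∀ w, ‖w - z‖ = R → Complex.exp (L w) = w - z) : False := by
  let g : ℝ → ℂ := fun t => L (z + R * Complex.exp (t * Complex.I)) - t * Complex.I
  have hg : Continuous g := by fun_prop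
  have he : ∀ t, Complex.exp (g t) = R := by
    intro t
    have h1 : ‖(z + R * Complex.exp (t * Complex.I)) - z‖ = R := by
      rw [add_sub_cancel_left, norm_mul, Complex.norm_exp_ofReal_mul_I]
      simp [abs_of_pos hR]
    simp only [g]
    rw [Complex.exp_sub, h _ h1, add_sub_cancel_left, mul_div_assoc,
      div_self (Complex.exp_ne_zero _), mul_one]
  have hint : ∀ t, ∃ n : ℤ, (g t).im = (g 0).im + n * (2 * Real.pi) := by
    intro t
    obtain ⟨n, hn⟩ := Complex.exp_eq_exp_iff_exists_int.1 ((he t).trans (he 0).symm)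
    refine ⟨n, ?_⟩
    rw [hn]; simp
  have h2 : (g (2 * Real.pi)).im = (g 0).im - 2 * Real.pi := by
    simp [g, Complex.exp_two_pi_mul_I]
  have hc : Continuous fun t => (g t).im := Complex.continuous_im.comp hg
  have hpi := Real.pi_pos
  obtain ⟨t, ht⟩ := mem_range_of_exists_le_of_exists_ge hc
    (c := (g 0).im - Real.pi) ⟨2 * Real.pi, by rw [h2]; linarith⟩ ⟨0, by linarith⟩
  obtain ⟨n, hn⟩ := hint t
  have h3 : (2 * n + 1 : ℝ) * Real.pi = 0 := by
    have : (g t).im = (g 0).im - Real.pi := ht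
    rw [hn] at this; linarith
  have h4 : (2 * n + 1 : ℝ) = 0 := by
    rcases mul_eq_zero.1 h3 with h | h
    · exact h
    · exact absurd h hpi.ne'
  have h5 : (2 * n + 1 : ℤ) = 0 := by exact_mod_cast h4
  omega

theorem env_sep_false (Ω G : Set ℂ) (hΩ : IsOpen Ω) (hG : IsOpen G) (hGs : SimplyConnectedSpace G)
    (hΩG : Ω ⊆ G) (z : ℂ) (hz : z ∉ G) (A B : Set (OnePoint ℂ)) (hA : IsClosed A)
    (hB : IsClosed B) (hAB : Disjoint A B) (hcov : ∀ w : ℂ, w ∉ Ω → (w : OnePoint ℂ) ∈ A ∪ B)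
    (hzA : (z : OnePoint ℂ) ∈ A) (hinf : ∞ ∈ B) : False := by
  obtain ⟨f, hf, hfe⟩ := Complex.exists_continuousOn_eqOn_exp_comp (U := G)
    (g := fun w => w - z) hGs hG (by fun_prop) (by
      rintro ⟨w, hw, hw'⟩
      exact hz (by rwa [sub_eq_zero.1 hw'] at hw))
  obtain ⟨ψ, h0, h1, -⟩ := exists_continuous_zero_one_of_isClosed hA hB hAB
  let p : ℂ → ℝ := fun w => ψ (w : OnePoint ℂ)
  have hp : Continuous p := ψ.continuous.comp OnePoint.continuous_coe
  let c : ℂ → ℝ := fun w => max 0 (min 1 (3 * p w - 1))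
  have hc : Continuous c := by fun_prop
  classical
  let F : ℂ → ℂ := fun w => if w ∈ Ω then Complex.exp (c w * f w) else
    if (w : OnePoint ℂ) ∈ A then 1 else w - z
  have hF1 : ∀ w, p w < 1/3 → F w = 1 := by
    intro w hw
    by_cases hwΩ : w ∈ Ω
    · have : c w = 0 := by
        simp only [c]; rw [max_eq_left]; apply (min_le_right _ _).trans; linarith
      simp [F, hwΩ, this]
    · have : (w : OnePoint ℂ) ∈ A := by
        rcases hcov w hwΩ with h | h
        · exact h
        · have : p w = 1 := h1 h
          linarith
      simp [F, hwΩ, this]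
  have hF2 : ∀ w, 2/3 < p w → F w = w - z := by
    intro w hw
    by_cases hwΩ : w ∈ Ω
    · have : c w = 1 := by
        simp only [c]; rw [min_eq_left (by linarith)]; simp
      have h3 : Complex.exp (f w) = w - z := hfe (hΩG hwΩ)
      simp [F, hwΩ, this, h3]
    · have : (w : OnePoint ℂ) ∉ A := by
        intro h
        have : p w = 0 := h0 h
        linarith
      simp [F, hwΩ, this]
  have hFc : Continuous F := by
    rw [continuous_iff_continuousAt]
    intro w
    by_cases hwΩ : w ∈ Ω
    · have h3 : ContinuousAt (fun w => Complex.exp (c w * f w)) w := by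
        have h4 : ContinuousAt f w := hf.continuousAt (hG.mem_nhds (hΩG hwΩ))
        have h5 : ContinuousAt (fun w => (c w : ℂ)) w :=
          (Complex.continuous_ofReal.comp hc).continuousAt
        exact (h5.mul h4).cexp
      refine h3.congr ?_
      filter_upwards [hΩ.mem_nhds hwΩ] with v hv
      simp [F, hv]
    · rcases hcov w hwΩ with h | h
      · have h3 : p w < 1/3 := by
          have : p w = 0 := h0 h
          rw [this]; norm_num
        refine (continuousAt_const (y := (1:ℂ))).congr ?_
        filter_upwards [(isOpen_lt hp continuous_const).mem_nhds h3] with v hv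
        exact (hF1 v hv).symm
      · have h3 : 2/3 < p w := by
          have : p w = 1 := h1 h
          rw [this]; norm_num
        have h4 : ContinuousAt (fun w => w - z) w := by fun_prop
        refine h4.congr ?_
        filter_upwards [(isOpen_lt continuous_const hp).mem_nhds h3] with v hv
        exact (hF2 v hv).symm
  have hF0 : ∀ w, F w ≠ 0 := by
    intro w
    by_cases hwΩ : w ∈ Ω
    · simp [F, hwΩ, Complex.exp_ne_zero]
    · by_cases hwA : (w : OnePoint ℂ) ∈ A
      · simp [F, hwΩ, hwA]
      · simp only [F, hwΩ, hwA, if_false]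
        intro h
        rw [sub_eq_zero.1 h] at hwA
        exact hwA hzA
  obtain ⟨L, hL, hLe⟩ := Complex.exists_continuousOn_eqOn_exp_comp (U := univ)
    (g := F) (by
      have : ContractibleSpace (univ : Set ℂ) := convex_univ.contractibleSpace ⟨0, mem_univ _⟩
      exact (inferInstance : SimplyConnectedSpace (univ : Set ℂ))) isOpen_univ hFc.continuousOn (by
      rintro ⟨w, -, hw'⟩
      exact hF0 w hw')
  have hev : ∀ᶠ w in Filter.cocompact ℂ, 2/3 < p w := by
    have h3 : Filter.Tendsto p (Filter.coclosedCompact ℂ) (nhds (ψ ∞)) :=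
      (ψ.continuous.tendsto ∞).comp OnePoint.tendsto_coe_infty
    rw [Filter.coclosedCompact_eq_cocompact] at h3
    have : ψ ∞ = 1 := h1 hinf
    rw [this] at h3
    exact h3.eventually (lt_mem_nhds (by norm_num))
  rw [← Metric.cobounded_eq_cocompact] at hev
  obtain ⟨r, -, hr⟩ := (Metric.hasBasis_cobounded_compl_closedBall z).eventually_iff.1 hev
  refine env_no_log z L (continuousOn_univ.1 hL) (max r 0 + 1)
    (by linarith [le_max_right r 0]) ?_
  intro w hw
  have h3 : Complex.exp (L w) = F w := hLe (mem_univ w)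
  rw [h3]
  refine hF2 w (hr ?_)
  simp only [mem_compl_iff, Metric.mem_closedBall, dist_eq_norm, not_le]
  rw [hw]; linarith [le_max_left r 0]

theorem env_separate (K : Set (OnePoint ℂ)) (hK : IsClosed K) (x y : OnePoint ℂ) (hx : x ∈ K)
    (hy : y ∈ K) (hyx : y ∉ connectedComponentIn K x) :
    ∃ A B : Set (OnePoint ℂ), IsClosed A ∧ IsClosed B ∧ Disjoint A B ∧ K ⊆ A ∪ B ∧
      y ∈ A ∧ x ∈ B := by
  have : CompactSpace K := isCompact_iff_compactSpace.1 hK.isCompact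
  rw [connectedComponentIn_eq_image hx, connectedComponent_eq_iInter_isClopen] at hyx
  have h1 : (⟨y, hy⟩ : K) ∉ ⋂ s : { s : Set K // IsClopen s ∧ (⟨x, hx⟩ : K) ∈ s }, (s : Set K) :=
    fun h => hyx ⟨_, h, rfl⟩
  simp only [mem_iInter, not_forall] at h1
  obtain ⟨⟨s, hs, hxs⟩, hys⟩ := h1
  refine ⟨Subtype.val '' sᶜ, Subtype.val '' s,
    hK.isClosedEmbedding_subtypeVal.isClosedMap _ hs.compl.isClosed,
    hK.isClosedEmbedding_subtypeVal.isClosedMap _ hs.isClosed, ?_, ?_, ⟨_, hys, rfl⟩,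
    ⟨_, hxs, rfl⟩⟩
  · exact (disjoint_image_iff Subtype.val_injective).2 disjoint_compl_left
  · intro w hw
    by_cases h : (⟨w, hw⟩ : K) ∈ s
    · exact Or.inr ⟨_, h, rfl⟩
    · exact Or.inl ⟨_, h, rfl⟩

theorem env_connected (Ω : Set ℂ) (hΩconn : IsConnected Ω)
    (X K : Set (OnePoint ℂ)) (hK : IsClosed K)
    (hKd : K = ((fun z : ℂ => (z : OnePoint ℂ)) '' Ω)ᶜ) (hX : X = connectedComponentIn K ∞)
    (hinf : ∞ ∈ K)
    (U : Set ℂ) (hU : U = {z : ℂ | (z : OnePoint ℂ) ∉ X}) (hUo : IsOpen U) (hΩU : Ω ⊆ U) :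
    IsConnected U := by
  have hX1 : IsPreconnected X := hX ▸ isPreconnected_connectedComponentIn
  have hX2 : ∞ ∈ X := hX ▸ mem_connectedComponentIn hinf
  have hX3 : X ⊆ K := hX ▸ connectedComponentIn_subset _ _
  obtain ⟨o, ho⟩ := hΩconn.nonempty
  have key : ∀ z ∈ U, (connectedComponentIn U z ∩ Ω).Nonempty := by
    intro z hz
    by_contra hne
    rw [not_nonempty_iff_eq_empty] at hne
    set Z := connectedComponentIn U z with hZ
    have hzZ : z ∈ Z := mem_connectedComponentIn hz
    have hZo : IsOpen Z := hUo.connectedComponentIn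
    set W : Set (OnePoint ℂ) := (fun z : ℂ => (z : OnePoint ℂ)) '' Z with hW
    have hWo : IsOpen W := OnePoint.isOpenEmbedding_coe.isOpenMap _ hZo
    have hWK : W ⊆ K := by
      rintro _ ⟨w, hw, rfl⟩
      rw [hKd]
      rintro ⟨v, hv, hvw⟩
      have : v = w := OnePoint.coe_injective hvw
      subst this
      exact (hne ▸ (⟨hw, hv⟩ : v ∈ Z ∩ Ω) : v ∈ (∅ : Set ℂ))
    have hWc : IsPreconnected W :=
      isPreconnected_connectedComponentIn.image _ OnePoint.continuous_coe.continuousOn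
    have hex : ∃ y ∈ closure W, y ∉ W := by
      by_contra hcon
      push Not at hcon
      have hcl : IsClosed W := isClosed_of_closure_subset hcon
      rcases isClopen_iff.1 ⟨hcl, hWo⟩ with h | h
      · exact (h ▸ (⟨z, hzZ, rfl⟩ : (z : OnePoint ℂ) ∈ W) : (z : OnePoint ℂ) ∈ (∅ : Set _))
      · have : ∞ ∈ W := h ▸ mem_univ _
        obtain ⟨w, -, hw⟩ := this
        exact OnePoint.coe_ne_infty w hw
    obtain ⟨y, hyc, hyW⟩ := hex
    have hyX : y ∈ X := by
      by_contra hyX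
      have hyi : y ≠ ∞ := fun h => hyX (h ▸ hX2)
      obtain ⟨v, rfl⟩ := OnePoint.ne_infty_iff_exists.1 hyi
      have hvU : v ∈ U := by rw [hU]; exact hyX
      have ho' : IsOpen ((fun z : ℂ => (z : OnePoint ℂ)) '' connectedComponentIn U v) :=
        OnePoint.isOpenEmbedding_coe.isOpenMap _ hUo.connectedComponentIn
      obtain ⟨_, ⟨a, ha, rfl⟩, ⟨b, hb, hba⟩⟩ := mem_closure_iff.1 hyc _ ho'
        ⟨v, mem_connectedComponentIn hvU, rfl⟩
      have : b = a := OnePoint.coe_injective hba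
      subst this
      have e1 := connectedComponentIn_eq ha
      have e2 := connectedComponentIn_eq hb
      exact hyW ⟨v, by rw [hZ, e2, ← e1]; exact mem_connectedComponentIn hvU, rfl⟩
    have hun : IsPreconnected (closure W ∪ X) := hWc.closure.union y hyc hyX hX1
    have hsub : closure W ∪ X ⊆ K := union_subset (hK.closure_subset_iff.2 hWK) hX3
    have h3 := hun.subset_connectedComponentIn (Or.inr hX2) hsub
    rw [← hX] at h3
    have h4 : (z : OnePoint ℂ) ∈ X := h3 (Or.inl (subset_closure ⟨z, hzZ, rfl⟩))
    rw [hU] at hz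
    exact hz h4
  refine ⟨⟨o, hΩU ho⟩, ?_⟩
  have : U = connectedComponentIn U o := by
    refine Subset.antisymm ?_ (connectedComponentIn_subset _ _)
    intro z hz
    obtain ⟨w, hw, hwΩ⟩ := key z hz
    have h1 := hΩconn.isPreconnected.subset_connectedComponentIn ho hΩU hwΩ
    rw [connectedComponentIn_eq h1, ← connectedComponentIn_eq hw]
    exact mem_connectedComponentIn hz
  rw [this]
  exact isPreconnected_connectedComponentIn

/-- Let `Ω ⊆ ℂ` be a domain, `X` the connected component of `∞` in `(ℂ ∪ {∞}) ∖ Ω`, and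
`Ω̂ = (ℂ ∪ {∞}) ∖ X ⊆ ℂ`. Then `Ω̂` is a simply connected domain containing `Ω`, it is
contained in every simply connected domain `G` with `Ω ⊆ G ⊆ ℂ`, and consequently `Ω̂` is the
intersection of all such `G`. -/
theorem statement4 (Ω : Set ℂ) (hΩopen : IsOpen Ω) (hΩconn : IsConnected Ω)
    (X : Set (OnePoint ℂ))
    (hX : X = connectedComponentIn (((fun z : ℂ => (z : OnePoint ℂ)) '' Ω)ᶜ) ∞)
    (Ωhat : Set ℂ) (hΩhat : Ωhat = {z : ℂ | (z : OnePoint ℂ) ∉ X}) :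
    IsOpen Ωhat ∧ IsConnected Ωhat ∧ SimplyConnectedSpace Ωhat ∧ Ω ⊆ Ωhat ∧
      (∀ G : Set ℂ, IsOpen G → IsConnected G → SimplyConnectedSpace G → Ω ⊆ G → Ωhat ⊆ G) ∧
      Ωhat = ⋂₀ {G : Set ℂ | IsOpen G ∧ IsConnected G ∧ SimplyConnectedSpace G ∧ Ω ⊆ G} := by
  obtain ⟨K, hKd⟩ : ∃ K, K = ((fun z : ℂ => (z : OnePoint ℂ)) '' Ω)ᶜ := ⟨_, rfl⟩
  rw [← hKd] at hX
  have hK : IsClosed K := by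
    rw [hKd]; exact (OnePoint.isOpenEmbedding_coe.isOpenMap _ hΩopen).isClosed_compl
  have hinf : ∞ ∈ K := by
    rw [hKd]; rintro ⟨w, -, hw⟩; exact OnePoint.coe_ne_infty w hw
  have hX1 : IsPreconnected X := hX ▸ isPreconnected_connectedComponentIn
  have hX2 : ∞ ∈ X := hX ▸ mem_connectedComponentIn hinf
  have hX3 : X ⊆ K := hX ▸ connectedComponentIn_subset _ _
  have hXc : IsClosed X := by
    apply isClosed_of_closure_subset
    have := hX1.closure.subset_connectedComponentIn (subset_closure hX2)
      (hK.closure_subset_iff.2 hX3)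
    rwa [← hX] at this
  have hUo : IsOpen Ωhat := by
    rw [hΩhat]; exact hXc.isOpen_compl.preimage OnePoint.continuous_coe
  have hΩU : Ω ⊆ Ωhat := by
    intro w hw
    rw [hΩhat]
    intro h
    have := hX3 h
    rw [hKd] at this
    exact this ⟨w, hw, rfl⟩
  have hUc := env_connected Ω hΩconn X K hK hKd hX hinf Ωhat hΩhat hUo hΩU
  have hs := env_simplyConnected X hX1 hX2 Ωhat hΩhat hUo hUc
  have hmin : ∀ G : Set ℂ, IsOpen G → IsConnected G → SimplyConnectedSpace G → Ω ⊆ G →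
      Ωhat ⊆ G := by
    intro G hG _ hGs hΩG z hz
    by_contra hzG
    have hmem : ∀ w : ℂ, w ∉ Ω → (w : OnePoint ℂ) ∈ K := by
      intro w hw
      rw [hKd]
      rintro ⟨v, hv, hvw⟩
      have : v = w := OnePoint.coe_injective hvw
      exact hw (this ▸ hv)
    rw [hΩhat] at hz
    have hz' : (z : OnePoint ℂ) ∉ connectedComponentIn K ∞ := hX ▸ hz
    obtain ⟨A, B, hA, hB, hAB, hc, hzA, hiB⟩ := env_separate K hK ∞ z hinf
      (hmem z (fun h => hzG (hΩG h))) hz'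
    exact env_sep_false Ω G hΩopen hG hGs hΩG z hzG A B hA hB hAB (fun w hw => hc (hmem w hw))
      hzA hiB
  refine ⟨hUo, hUc, hs, hΩU, hmin, Subset.antisymm ?_ ?_⟩
  · exact subset_sInter fun G hG => hmin G hG.1 hG.2.1 hG.2.2.1 hG.2.2.2
  · exact sInter_subset_of_mem ⟨hUo, hUc, hs, hΩU⟩
end

section
/- Let Ω ⊆ ℂ be a domain such that (ℂ∪{∞})∖Ω has exactly two connected components: V₀ containing ∞, and E, where E is the closure of the Jordan domain U bounded by a rectifiable Jordan curve δ (so that the boundary of E equals the image δ* of δ). Let f be holomorphic on Ω and admit a continuous extension to Ω ∪ δ*. Then the following are equivalent: (i) for every n = 1, 2, … there exists a holomorphic function φ_n on Ω with φ_n^{(n)} = f on Ω; (ii) ∫_δ P(z) f(z) dz = 0 for every analytic polynomial P; (iii) f extends holomorphically to the open set Ω ∪ E, i.e., there is a holomorphic function g on Ω ∪ E with g = f on Ω. -/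
open Set Filter Topology Polynomial MeasureTheory

/-- `I` is the Riemann–Stieltjes integral `∫_a^b g (δ t) dδ(t)`: for every `ε > 0` there is a
mesh size `d > 0` such that every Riemann–Stieltjes sum over a tagged partition of `[a, b]` of
mesh `< d` is `ε`-close to `I`. -/
def IsRSIntegral (g : ℂ → ℂ) (δ : ℝ → ℂ) (a b : ℝ) (I : ℂ) : Prop :=
  ∀ ε > (0 : ℝ), ∃ d > (0 : ℝ), ∀ (n : ℕ) (t : Fin (n + 1) → ℝ) (ξ : Fin n → ℝ),
    Monotone t → t 0 = a → t (Fin.last n) = b →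
    (∀ i : Fin n, ξ i ∈ Set.Icc (t i.castSucc) (t i.succ)) →
    (∀ i : Fin n, t i.succ - t i.castSucc < d) →
    ‖(∑ i : Fin n, g (δ (ξ i)) * (δ (t i.succ) - δ (t i.castSucc))) - I‖ < ε

/-- `δ : [a, b] → ℂ` is a rectifiable Jordan curve: continuous, of bounded variation,
closed (`δ a = δ b`) and injective on `[a, b)`. -/
def IsRectifiableJordanCurve (δ : ℝ → ℂ) (a b : ℝ) : Prop :=
  a < b ∧ ContinuousOn δ (Set.Icc a b) ∧ BoundedVariationOn δ (Set.Icc a b) ∧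
    δ a = δ b ∧ Set.InjOn δ (Set.Ico a b)

section HelperLemmas
open scoped ContDiff

lemma variation_continuousOn {δ : ℝ → ℂ} {a b : ℝ} (hab : a ≤ b)
    (hc : ContinuousOn δ (Icc a b)) (hbv : BoundedVariationOn δ (Icc a b)) :
    ContinuousOn (variationOnFromTo δ (Icc a b) a) (Icc a b) := by
  intro x hx
  have ha : a ∈ Icc a b := ⟨le_rfl, hab⟩
  have h1 := hbv.tendsto_eVariationOn_Icc_zero_left (x := x) ((hc x hx).mono inter_subset_left)
  have h2 := hbv.tendsto_eVariationOn_Icc_zero_right x ((hc x hx).mono inter_subset_left)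
  have h1' := (ENNReal.tendsto_toReal ENNReal.zero_ne_top).comp h1
  have h2' := (ENNReal.tendsto_toReal ENNReal.zero_ne_top).comp h2
  have h3 := h1'.add h2'
  simp only [ENNReal.toReal_zero, add_zero] at h3
  unfold ContinuousWithinAt
  rw [tendsto_iff_dist_tendsto_zero]
  refine squeeze_zero' (Eventually.of_forall fun _ => dist_nonneg) ?_ h3
  filter_upwards [self_mem_nhdsWithin] with y hy
  have e := variationOnFromTo.add hbv.locallyBoundedVariationOn ha hx hy
  rw [Real.dist_eq, ← e, add_sub_cancel_left]
  simp only [Function.comp]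
  rcases le_total x y with h | h
  · rw [variationOnFromTo.eq_of_le _ _ h, abs_of_nonneg ENNReal.toReal_nonneg]
    have := @ENNReal.toReal_nonneg (eVariationOn δ (Icc a b ∩ Icc y x))
    linarith
  · rw [variationOnFromTo.eq_of_ge _ _ h, abs_neg, abs_of_nonneg ENNReal.toReal_nonneg]
    have := @ENNReal.toReal_nonneg (eVariationOn δ (Icc a b ∩ Icc x y))
    linarith

lemma exists_reparam {δ : ℝ → ℂ} {a b : ℝ} (h : IsRectifiableJordanCurve δ a b) :
    ∃ (L : ℝ) (γ : ℝ → ℂ) (s : ℝ → ℝ), 0 < L ∧ LipschitzWith 1 γ ∧ ContinuousOn s (Icc a b) ∧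
      MonotoneOn s (Icc a b) ∧ s a = 0 ∧ s b = L ∧ (∀ t ∈ Icc a b, γ (s t) = δ t) ∧
      γ '' Icc 0 L = δ '' Icc a b ∧ InjOn γ (Ico 0 L) ∧ γ 0 = γ L := by
  obtain ⟨hab, hc, hbv, hcl, hinj⟩ := h
  have ha : a ∈ Icc a b := ⟨le_rfl, hab.le⟩
  have hb : b ∈ Icc a b := ⟨hab.le, le_rfl⟩
  have hl := hbv.locallyBoundedVariationOn
  set s := variationOnFromTo δ (Icc a b) a with hs
  set γ₀ := naturalParameterization δ (Icc a b) a with hγ₀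
  have hsc : ContinuousOn s (Icc a b) := variation_continuousOn hab.le hc hbv
  have hsm : MonotoneOn s (Icc a b) := variationOnFromTo.monotoneOn hl ha
  have hsa : s a = 0 := variationOnFromTo.self _ _ _
  have hγs : ∀ t ∈ Icc a b, γ₀ (s t) = δ t := fun t ht =>
    edist_eq_zero.1 (edist_naturalParameterization_eq_zero hl ha ht)
  have hL0 : 0 ≤ s b := hsa ▸ hsm ha hb hab.le
  have himg : s '' Icc a b = Icc 0 (s b) := by
    apply Subset.antisymm
    · rintro _ ⟨t, ht, rfl⟩
      exact ⟨hsa ▸ hsm ha ht ht.1, hsm ht hb ht.2⟩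
    · have := intermediate_value_Icc hab.le hsc
      rwa [hsa] at this
  have hsp := has_unit_speed_naturalParameterization δ hl ha
  rw [← hs, ← hγ₀, himg] at hsp
  have hlip : LipschitzOnWith 1 γ₀ (Icc 0 (s b)) := by
    have key : ∀ x ∈ Icc 0 (s b), ∀ y ∈ Icc 0 (s b), x ≤ y → edist (γ₀ x) (γ₀ y) ≤ edist x y := by
      intro x hx y hy hxy
      have e := hsp hx hy
      refine (eVariationOn.edist_le γ₀ (s := Icc 0 (s b) ∩ Icc x y) ⟨hx, le_rfl, hxy⟩ ⟨hy, hxy, le_rfl⟩).trans ?_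
      rw [e, edist_dist, Real.dist_eq, abs_sub_comm, abs_of_nonneg (by linarith)]
      simp
    intro x hx y hy
    rw [ENNReal.coe_one, one_mul]
    rcases le_total x y with hxy | hxy
    · exact key x hx y hy hxy
    · rw [edist_comm, edist_comm x]; exact key y hy x hx hxy
  have hLpos : 0 < s b := by
    rcases hL0.lt_or_eq with h | h
    · exact h
    exfalso
    have hm : (a + b) / 2 ∈ Icc a b := ⟨by linarith, by linarith⟩
    have h1 : s ((a + b) / 2) = 0 := by
      have := himg ▸ mem_image_of_mem s hm
      rw [← h] at this
      exact le_antisymm this.2 this.1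
    have : δ a = δ ((a + b) / 2) := by rw [← hγs _ ha, ← hγs _ hm, hsa, h1]
    have := hinj ⟨le_rfl, hab⟩ ⟨by linarith, by linarith⟩ this
    linarith
  refine ⟨s b, fun x => γ₀ (projIcc 0 (s b) hL0 x), s, hLpos, ?_, hsc, hsm, hsa, rfl, ?_, ?_, ?_, ?_⟩
  · have h1 := hlip.to_restrict.comp (LipschitzWith.projIcc hL0)
    rw [mul_one] at h1
    exact h1
  · intro t ht
    have : s t ∈ Icc 0 (s b) := himg ▸ mem_image_of_mem s ht
    simp only [projIcc_of_mem hL0 this]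
    exact hγs t ht
  · have : (fun x => γ₀ (projIcc 0 (s b) hL0 x)) '' Icc 0 (s b) = γ₀ '' Icc 0 (s b) := by
      apply image_congr
      intro x hx
      simp only [projIcc_of_mem hL0 hx]
    rw [this, ← himg, image_image]
    exact image_congr hγs
  · intro x hx y hy hxy
    have hx' : x ∈ Icc 0 (s b) := ⟨hx.1, hx.2.le⟩
    have hy' : y ∈ Icc 0 (s b) := ⟨hy.1, hy.2.le⟩
    simp only [projIcc_of_mem hL0 hx', projIcc_of_mem hL0 hy'] at hxy
    obtain ⟨t, ht, rfl⟩ := himg.symm ▸ hx'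
    obtain ⟨u, hu, rfl⟩ := himg.symm ▸ hy'
    rw [hγs t ht, hγs u hu] at hxy
    have ht' : t < b := lt_of_le_of_ne ht.2 (by rintro rfl; exact lt_irrefl _ hx.2)
    have hu' : u < b := lt_of_le_of_ne hu.2 (by rintro rfl; exact lt_irrefl _ hy.2)
    rw [hinj ⟨ht.1, ht'⟩ ⟨hu.1, hu'⟩ hxy]
  · simp only [projIcc_left, projIcc_right]
    rw [← hsa, hγs a ha, hγs b hb, hcl]

/-- FTC for Lipschitz functions. -/
lemma lip_ftc {G G' : ℝ → ℂ} {L : ℝ} {K : NNReal} {C : ℝ} (hL : 0 ≤ L)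
    (hG : LipschitzOnWith K G (Icc 0 L)) (hG' : IntervalIntegrable G' volume 0 L)
    (hb : ∀ x ∈ Icc 0 L, ‖G' x‖ ≤ C)
    (hd : ∀ᵐ x, x ∈ Icc 0 L → HasDerivAt G (G' x) x) :
    ∀ u ∈ Icc 0 L, ∀ v ∈ Icc 0 L, ∫ x in u..v, G' x = G v - G u := by
  have hu : uIcc 0 L = Icc 0 L := uIcc_of_le hL
  have hC : 0 ≤ C := (norm_nonneg _).trans (hb 0 ⟨le_rfl, hL⟩)
  have hint : ∀ u ∈ Icc 0 L, ∀ v ∈ Icc 0 L, IntervalIntegrable G' volume u v := fun u hu' v hv' =>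
    hG'.mono_set (by rw [hu]; exact (convex_Icc 0 L).ordConnected.uIcc_subset hu' hv')
  have hI : LipschitzOnWith C.toNNReal (fun x => ∫ t in (0:ℝ)..x, G' t) (Icc 0 L) := by
    apply LipschitzOnWith.of_dist_le_mul
    intro x hx y hy
    have h0 : (0:ℝ) ∈ Icc 0 L := ⟨le_rfl, hL⟩
    rw [dist_eq_norm, intervalIntegral.integral_interval_sub_left (hint 0 h0 x hx) (hint 0 h0 y hy),
      Real.coe_toNNReal _ hC, Real.dist_eq]
    apply intervalIntegral.norm_integral_le_of_norm_le_const
    intro t ht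
    apply hb
    exact (convex_Icc 0 L).ordConnected.uIcc_subset hy hx (uIoc_subset_uIcc ht)
  have hac : AbsolutelyContinuousOnInterval (fun x => G x - ∫ t in (0:ℝ)..x, G' t) 0 L := by
    apply AbsolutelyContinuousOnInterval.sub
    · exact LipschitzOnWith.absolutelyContinuousOnInterval (hu.symm ▸ hG)
    · exact LipschitzOnWith.absolutelyContinuousOnInterval (hu.symm ▸ hI)
  obtain ⟨c, hc⟩ := hac.const_of_ae_hasDerivAt_zero (by
    filter_upwards [hd, hG'.ae_hasDerivAt_integral] with x h1 h2 hx
    have := (h1 (hu ▸ hx)).sub (h2 hx 0 (by simp))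
    rw [sub_self] at this
    exact this)
  rw [hu] at hc
  intro u hu' v hv'
  have h0 : (0:ℝ) ∈ Icc 0 L := ⟨le_rfl, hL⟩
  rw [← intervalIntegral.integral_interval_sub_left (hint 0 h0 v hv') (hint 0 h0 u hu')]
  have h1 := hc u hu'
  have h2 := hc v hv'
  linear_combination h1 - h2

/-- the contour integral along a Lipschitz parametrization -/
noncomputable def cInt (γ : ℝ → ℂ) (L : ℝ) (h : ℂ → ℂ) : ℂ := ∫ x in (0:ℝ)..L, h (γ x) * deriv γ x

lemma cInt_bound {γ : ℝ → ℂ} (hγ : LipschitzWith 1 γ) (x : ℝ) : ‖deriv γ x‖ ≤ 1 := by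
  simpa using norm_deriv_le_of_lipschitz hγ (x₀ := x)

lemma deriv_intInt {γ : ℝ → ℂ} (hγ : LipschitzWith 1 γ) (u v : ℝ) :
    IntervalIntegrable (deriv γ) volume u v := by
  refine IntervalIntegrable.mono_fun (g := deriv γ) (f := fun _ => (1:ℝ)) intervalIntegrable_const
    (measurable_deriv γ).aestronglyMeasurable (ae_of_all _ fun x => ?_)
  simpa using cInt_bound hγ x

lemma cInt_intInt {γ : ℝ → ℂ} {L : ℝ} (hL : 0 < L) (hγ : LipschitzWith 1 γ) {h : ℂ → ℂ}
    (hh : ContinuousOn h (γ '' Icc 0 L)) :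
    IntervalIntegrable (fun x => h (γ x) * deriv γ x) volume 0 L := by
  apply IntervalIntegrable.continuousOn_mul (deriv_intInt hγ 0 L)
  rw [uIcc_of_le hL.le]
  exact hh.comp hγ.continuous.continuousOn (mapsTo_image _ _)

lemma cInt_norm_le {γ : ℝ → ℂ} {L : ℝ} (hL : 0 < L) (hγ : LipschitzWith 1 γ) {h : ℂ → ℂ} {C : ℝ}
    (hh : ∀ z ∈ γ '' Icc 0 L, ‖h z‖ ≤ C) : ‖cInt γ L h‖ ≤ C * L := by
  have := intervalIntegral.norm_integral_le_of_norm_le_const (a := 0) (b := L) (C := C)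
    (f := fun x => h (γ x) * deriv γ x) (by
      intro x hx
      rw [uIoc_of_le hL.le] at hx
      have h1 := hh _ (mem_image_of_mem γ ⟨hx.1.le, hx.2⟩)
      rw [norm_mul]
      calc _ ≤ C * 1 := mul_le_mul h1 (cInt_bound hγ x) (norm_nonneg _) ((norm_nonneg _).trans h1)
        _ = C := mul_one C)
  simpa [abs_of_pos hL, cInt] using this

lemma cInt_congr {γ : ℝ → ℂ} {L : ℝ} (hL : 0 < L) {h k : ℂ → ℂ}
    (hh : EqOn h k (γ '' Icc 0 L)) : cInt γ L h = cInt γ L k := by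
  apply intervalIntegral.integral_congr
  intro x hx
  rw [uIcc_of_le hL.le] at hx
  simp only [hh (mem_image_of_mem γ hx)]

lemma cInt_sub {γ : ℝ → ℂ} {L : ℝ} (hL : 0 < L) (hγ : LipschitzWith 1 γ) {h k : ℂ → ℂ}
    (hh : ContinuousOn h (γ '' Icc 0 L)) (hk : ContinuousOn k (γ '' Icc 0 L)) :
    cInt γ L (fun z => h z - k z) = cInt γ L h - cInt γ L k := by
  unfold cInt
  rw [← intervalIntegral.integral_sub (cInt_intInt hL hγ hh) (cInt_intInt hL hγ hk)]
  simp only [sub_mul]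

lemma gamma_ftc {γ : ℝ → ℂ} {L : ℝ} (hL : 0 < L) (hγ : LipschitzWith 1 γ) :
    ∀ u ∈ Icc 0 L, ∀ v ∈ Icc 0 L, ∫ x in u..v, deriv γ x = γ v - γ u := by
  refine lip_ftc (C := 1) hL.le (hγ.lipschitzOnWith) (deriv_intInt hγ _ _) (fun x _ => cInt_bound hγ x) ?_
  filter_upwards [hγ.ae_differentiableAt (μ := volume)] with x hx _ using hx.hasDerivAt

lemma cInt_deriv {γ : ℝ → ℂ} {L : ℝ} (hL : 0 < L) (hγ : LipschitzWith 1 γ) (hcl : γ 0 = γ L)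
    {F F' : ℂ → ℂ} {W : Set ℂ} (hW : IsOpen W) (hsub : γ '' Icc 0 L ⊆ W)
    (hF : ∀ z ∈ W, HasDerivAt F (F' z) z) :
    cInt γ L F' = 0 := by
  have hdW : DifferentiableOn ℂ F W := fun z hz => (hF z hz).differentiableAt.differentiableWithinAt
  have hF'c : ContinuousOn F' (γ '' Icc 0 L) := by
    have h1 : ContinuousOn (deriv F) W := (hdW.deriv hW).continuousOn
    exact (h1.congr (fun z hz => (hF z hz).deriv.symm)).mono hsub
  have hK : IsCompact (γ '' Icc 0 L) := isCompact_Icc.image hγ.continuous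
  obtain ⟨C, hC⟩ := hK.exists_bound_of_continuousOn hF'c
  have hlip : ∃ K, LipschitzOnWith K (F ∘ γ) (Icc 0 L) := by
    apply LocallyLipschitzOn.exists_lipschitzOnWith_of_compact isCompact_Icc
    intro x hx
    have hz : γ x ∈ W := hsub (mem_image_of_mem γ hx)
    have hcd : ContDiffAt ℂ 1 F (γ x) := by
      have := hdW.contDiffOn (n := 1) hW
      exact this.contDiffAt (hW.mem_nhds hz)
    obtain ⟨K, s, hs, hl⟩ := hcd.exists_lipschitzOnWith
    refine ⟨K * 1, γ ⁻¹' s, mem_nhdsWithin_of_mem_nhds (hγ.continuous.continuousAt hs), ?_⟩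
    exact hl.comp hγ.lipschitzOnWith (mapsTo_preimage _ _)
  obtain ⟨K, hK⟩ := hlip
  have := lip_ftc (C := C) hL.le hK (cInt_intInt hL hγ hF'c) (by
      intro x hx
      have h1 := hC _ (mem_image_of_mem γ hx)
      rw [norm_mul]
      calc _ ≤ C * 1 := mul_le_mul h1 (cInt_bound hγ x) (norm_nonneg _) ((norm_nonneg _).trans h1)
        _ = C := mul_one C) (by
      filter_upwards [hγ.ae_differentiableAt (μ := volume)] with x hx hx'
      have := (hF (γ x) (hsub (mem_image_of_mem γ hx'))).comp_of_eq x hx.hasDerivAt rfl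
      exact this) 0 ⟨le_rfl, hL.le⟩ L ⟨hL.le, le_rfl⟩
  unfold cInt
  rw [this]
  simp [hcl]

lemma rs_cInt {δ : ℝ → ℂ} {a b : ℝ} {L : ℝ} {γ : ℝ → ℂ} {s : ℝ → ℝ} (hL : 0 < L)
    (hγ : LipschitzWith 1 γ) (hsc : ContinuousOn s (Icc a b)) (hsm : MonotoneOn s (Icc a b))
    (hsa : s a = 0) (hsb : s b = L) (hγs : ∀ t ∈ Icc a b, γ (s t) = δ t) {g : ℂ → ℂ}
    (hg : ContinuousOn g (γ '' Icc 0 L)) : IsRSIntegral g δ a b (cInt γ L g) := by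
  intro ε hε
  have hgc : ContinuousOn (g ∘ γ) (Icc 0 L) :=
    hg.comp hγ.continuous.continuousOn (mapsTo_image _ _)
  have huc := isCompact_Icc.uniformContinuousOn_of_continuous hgc
  rw [Metric.uniformContinuousOn_iff] at huc
  set e := ε / (2 * L) with he
  have hepos : 0 < e := by positivity
  obtain ⟨η, hη, h1⟩ := huc e hepos
  have hsu := isCompact_Icc.uniformContinuousOn_of_continuous hsc
  rw [Metric.uniformContinuousOn_iff] at hsu
  obtain ⟨d, hd, h2⟩ := hsu η hη
  refine ⟨d, hd, fun n t ξ ht h0 hn hξ hmesh => ?_⟩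
  have htI : ∀ i, t i ∈ Icc a b := fun i => ⟨h0 ▸ ht (Fin.zero_le i), hn ▸ ht (Fin.le_last i)⟩
  have hsI : ∀ u ∈ Icc a b, s u ∈ Icc 0 L := fun u hu =>
    ⟨hsa ▸ hsm ⟨le_rfl, hu.1.trans hu.2⟩ hu hu.1, hsb ▸ hsm hu ⟨hu.1.trans hu.2, le_rfl⟩ hu.2⟩
  let T : ℕ → ℝ := fun i => s (t ⟨min i n, by omega⟩)
  have hT1 : ∀ i : Fin n, s (t i.castSucc) = T i := fun i => by
    simp only [T]; congr 2; ext; simp; try omega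
  have hT2 : ∀ i : Fin n, s (t i.succ) = T (i + 1) := fun i => by
    simp only [T]; congr 2; ext; simp
  have hTI : ∀ i, T i ∈ Icc 0 L := fun i => hsI _ (htI _)
  have hT0 : T 0 = 0 := by
    have : t ⟨min 0 n, by omega⟩ = t 0 := by congr 1; try (ext; simp)
    simp only [T]; rw [this, h0, hsa]
  have hTn : T n = L := by
    have : t ⟨min n n, by omega⟩ = t (Fin.last n) := by congr 1; ext; simp
    simp only [T]; rw [this, hn, hsb]
  have hii : ∀ u ∈ Icc 0 L, ∀ v ∈ Icc 0 L, IntervalIntegrable (fun x => g (γ x) * deriv γ x) volume u v := by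
    intro u hu v hv
    refine (cInt_intInt hL hγ hg).mono_set ?_
    rw [uIcc_of_le hL.le]
    exact (convex_Icc 0 L).ordConnected.uIcc_subset hu hv
  have hsum : cInt γ L g = ∑ i : Fin n, ∫ x in (s (t i.castSucc))..(s (t i.succ)), g (γ x) * deriv γ x := by
    have := intervalIntegral.sum_integral_adjacent_intervals (a := T) (n := n)
      (f := fun x => g (γ x) * deriv γ x) (μ := volume) (fun k _ => hii _ (hTI _) _ (hTI _))
    rw [hT0, hTn] at this
    unfold cInt
    rw [← this, ← Fin.sum_univ_eq_sum_range (fun i => ∫ x in (T i)..(T (i+1)), g (γ x) * deriv γ x)]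
    exact Finset.sum_congr rfl fun i _ => by rw [hT1, hT2]
  rw [hsum, ← Finset.sum_sub_distrib]
  have hterm : ∀ i : Fin n, ‖g (δ (ξ i)) * (δ (t i.succ) - δ (t i.castSucc)) -
      ∫ x in (s (t i.castSucc))..(s (t i.succ)), g (γ x) * deriv γ x‖ ≤ e * (T (i+1) - T i) := by
    intro i
    have hle : t i.castSucc ≤ t i.succ := ht (by simp [Fin.le_def])
    have hsle : s (t i.castSucc) ≤ s (t i.succ) := hsm (htI _) (htI _) hle
    have hξI : ξ i ∈ Icc a b := ⟨(htI _).1.trans (hξ i).1, (hξ i).2.trans (htI _).2⟩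
    have hd1 : s (t i.succ) - s (t i.castSucc) < η := by
      have := h2 _ (htI i.succ) _ (htI i.castSucc) (by
        rw [Real.dist_eq, abs_of_nonneg (by linarith)]; exact hmesh i)
      rwa [Real.dist_eq, abs_of_nonneg (by linarith)] at this
    rw [← hγs _ (htI i.succ), ← hγs _ (htI i.castSucc),
      ← gamma_ftc hL hγ _ (hsI _ (htI _)) _ (hsI _ (htI _)), ← intervalIntegral.integral_const_mul,
      ← intervalIntegral.integral_sub ((deriv_intInt hγ _ _).const_mul _)
        (hii _ (hsI _ (htI _)) _ (hsI _ (htI _)))]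
    have := intervalIntegral.norm_integral_le_of_norm_le_const (a := s (t i.castSucc))
      (b := s (t i.succ)) (C := e)
      (f := fun x => g (δ (ξ i)) * deriv γ x - g (γ x) * deriv γ x) (by
        intro x hx
        rw [uIoc_of_le hsle] at hx
        rw [← sub_mul, norm_mul, ← hγs _ hξI]
        have hs1 : s (t i.castSucc) ≤ s (ξ i) := hsm (htI _) hξI (hξ i).1
        have hs2 : s (ξ i) ≤ s (t i.succ) := hsm hξI (htI _) (hξ i).2
        have h3 := h1 (s (ξ i)) (hsI _ hξI) x
          ⟨(hsI _ (htI _)).1.trans hx.1.le, hx.2.trans (hsI _ (htI _)).2⟩ (by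
            rw [Real.dist_eq, abs_lt]; constructor <;> linarith [hx.1, hx.2])
        rw [dist_eq_norm] at h3
        calc _ ≤ e * 1 := mul_le_mul h3.le (cInt_bound hγ x) (norm_nonneg _) hepos.le
          _ = e := mul_one e)
    rw [abs_of_nonneg (by linarith)] at this
    rw [← hT1, ← hT2]
    exact this
  calc _ ≤ ∑ i : Fin n, ‖g (δ (ξ i)) * (δ (t i.succ) - δ (t i.castSucc)) -
      ∫ x in (s (t i.castSucc))..(s (t i.succ)), g (γ x) * deriv γ x‖ := norm_sum_le _ _
    _ ≤ ∑ i : Fin n, e * (T (i+1) - T i) := Finset.sum_le_sum fun i _ => hterm i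
    _ = e * L := by
      rw [Fin.sum_univ_eq_sum_range (fun i => e * (T (i+1) - T i)), ← Finset.mul_sum,
        Finset.sum_range_sub, hT0, hTn, sub_zero]
    _ < ε := by rw [he]; field_simp; linarith

lemma rs_unique {δ : ℝ → ℂ} {a b : ℝ} (hab : a < b) {g : ℂ → ℂ} {I J : ℂ}
    (hI : IsRSIntegral g δ a b I) (hJ : IsRSIntegral g δ a b J) : I = J := by
  by_contra hne
  have hpos : 0 < ‖I - J‖ / 2 := by have := norm_pos_iff.2 (sub_ne_zero.2 hne); linarith
  obtain ⟨d, hd, h1⟩ := hI _ hpos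
  obtain ⟨d', hd', h2⟩ := hJ _ hpos
  obtain ⟨n, hn⟩ := exists_nat_gt ((b - a) / min d d')
  have hm : 0 < min d d' := lt_min hd hd'
  have hba : 0 < b - a := by linarith
  have hn0 : (0:ℝ) < n := lt_trans (by positivity) hn
  let t : Fin (n + 1) → ℝ := fun i => a + (b - a) * ((i : ℕ) / n : ℝ)
  have hstep : ∀ i : Fin n, t i.succ - t i.castSucc = (b - a) / n := fun i => by
    simp only [t, Fin.val_succ, Fin.val_castSucc]; push_cast; field_simp; ring
  have hlt : (b - a) / n < min d d' := by
    rw [div_lt_iff₀ hm] at hn; rw [div_lt_iff₀ hn0]; linarith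
  have ht : Monotone t := by
    intro i j hij
    have : ((i : ℕ) : ℝ) ≤ (j : ℕ) := by exact_mod_cast hij
    simp only [t]; gcongr
  have h0 : t 0 = a := by simp [t]
  have hl : t (Fin.last n) = b := by simp only [t, Fin.val_last]; field_simp; ring
  have hξ : ∀ i : Fin n, t i.castSucc ∈ Icc (t i.castSucc) (t i.succ) := fun i =>
    ⟨le_rfl, ht (by simp [Fin.le_def])⟩
  have e1 := h1 n t (fun i => t i.castSucc) ht h0 hl hξ (fun i => by
    rw [hstep]; exact hlt.trans_le (min_le_left _ _))
  have e2 := h2 n t (fun i => t i.castSucc) ht h0 hl hξ (fun i => by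
    rw [hstep]; exact hlt.trans_le (min_le_right _ _))
  set S := ∑ i : Fin n, g (δ (t i.castSucc)) * (δ (t i.succ) - δ (t i.castSucc))
  have : ‖I - J‖ ≤ ‖S - I‖ + ‖S - J‖ := by
    have := norm_sub_le (S - J) (S - I)
    rw [show S - J - (S - I) = I - J by ring] at this
    linarith
  linarith

/-- twice the Wirtinger derivative with respect to the conjugate variable -/
noncomputable def dbar (φ : ℂ → ℂ) (z : ℂ) : ℂ := fderiv ℝ φ z 1 + Complex.I * fderiv ℝ φ z Complex.I

lemma dbar_continuous {φ : ℂ → ℂ} (h : ContDiff ℝ 1 φ) : Continuous (dbar φ) := by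
  have := h.continuous_fderiv one_ne_zero
  unfold dbar
  fun_prop

lemma dbar_tsupport (φ : ℂ → ℂ) : tsupport (dbar φ) ⊆ tsupport φ := by
  refine (closure_mono ?_).trans (tsupport_fderiv_subset ℝ (f := φ))
  intro z hz
  contrapose! hz
  rw [Function.notMem_support] at hz ⊢
  simp [dbar, hz]

lemma dbar_hcs {φ : ℂ → ℂ} (h : HasCompactSupport φ) : HasCompactSupport (dbar φ) :=
  h.of_isClosed_subset (isClosed_tsupport _) (dbar_tsupport φ)

lemma polar_alg (D : ℂ →L[ℝ] ℂ) (c s : ℝ) :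
    D (c + s * Complex.I) + Complex.I * D (Complex.I * (c + s * Complex.I)) =
      (D 1 + Complex.I * D Complex.I) * (c - s * Complex.I) := by
  have h1 : D (c + s * Complex.I) = c * D 1 + s * D Complex.I := by
    rw [show (c + s * Complex.I : ℂ) = c • (1:ℂ) + s • Complex.I by simp, map_add, map_smul, map_smul]
    simp
  have h2 : D (Complex.I * (c + s * Complex.I)) = -s * D 1 + c * D Complex.I := by
    rw [show (Complex.I * (c + s * Complex.I) : ℂ) = (-s) • (1:ℂ) + c • Complex.I by
      simp; ring_nf; simp; ring, map_add, map_smul, map_smul]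
    simp
  rw [h1, h2]
  linear_combination (s * D Complex.I) * Complex.I_sq

lemma cauchy_pompeiu {φ : ℂ → ℂ} (h : ContDiff ℝ 1 φ) (hs : HasCompactSupport φ) (w : ℂ) :
    ∫ z, dbar φ z / (z - w) = -(2 * Real.pi) * φ w := by
  have hDc := h.continuous_fderiv one_ne_zero
  have hd := h.differentiable one_ne_zero
  -- radius
  obtain ⟨R, hR0, hR⟩ : ∃ R > 0, ∀ z, R ≤ ‖z‖ → φ (w + z) = 0 ∧ fderiv ℝ φ (w + z) = 0 := by
    obtain ⟨R, hR⟩ := hs.isCompact.isBounded.subset_closedBall w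
    refine ⟨max R 0 + 1, by positivity, fun z hz => ?_⟩
    have : w + z ∉ tsupport φ := fun hm => by
      have := hR hm
      rw [Metric.mem_closedBall, dist_eq_norm, add_sub_cancel_left] at this
      have := le_max_left R 0
      linarith
    refine ⟨image_eq_zero_of_notMem_tsupport this, ?_⟩
    have h2 : w + z ∉ tsupport (fderiv ℝ φ) := fun hm => this (tsupport_fderiv_subset ℝ hm)
    exact image_eq_zero_of_notMem_tsupport h2
  rw [← integral_add_right_eq_self _ w, ← Complex.integral_comp_polarCoord_symm, polarCoord_target]
  let e : ℝ → ℂ := fun θ => (Real.cos θ : ℂ) + (Real.sin θ : ℂ) * Complex.I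
  have hec : Continuous e := by
    simp only [e]; fun_prop
  have hen : ∀ θ, ‖e θ‖ = 1 := fun θ => by
    have : e θ = Complex.exp (θ * Complex.I) := by
      simp only [e]; rw [Complex.exp_mul_I]; simp
    rw [this, Complex.norm_exp_ofReal_mul_I]
  have hed : ∀ θ, HasDerivAt e (Complex.I * e θ) θ := fun θ => by
    have h1 : HasDerivAt (fun θ : ℝ => (Real.cos θ : ℂ)) (-(Real.sin θ : ℂ)) θ := by
      have := (Real.hasDerivAt_cos θ).ofReal_comp
      simpa using this
    have h2 : HasDerivAt (fun θ : ℝ => (Real.sin θ : ℂ)) ((Real.cos θ : ℂ)) θ := by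
      have := (Real.hasDerivAt_sin θ).ofReal_comp
      simpa using this
    have h3 := h1.add (h2.mul_const Complex.I)
    convert! h3 using 1
    simp only [e]
    linear_combination (Real.sin θ : ℂ) * Complex.I_sq
  let A : ℝ × ℝ → ℂ := fun p => fderiv ℝ φ (w + p.1 * e p.2) (e p.2)
  let B : ℝ × ℝ → ℂ := fun p => fderiv ℝ φ (w + p.1 * e p.2) (Complex.I * e p.2)
  have hAc : Continuous A := by simp only [A]; fun_prop
  have hBc : Continuous B := by simp only [B]; fun_prop
  have hnorm : ∀ (r : ℝ) θ, 0 ≤ r → ‖(r : ℂ) * e θ‖ = r := fun r θ hr => by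
    rw [norm_mul, hen, mul_one]; simp [abs_of_nonneg hr]
  have step1 : ∫ p in Ioi (0:ℝ) ×ˢ Ioo (-Real.pi) Real.pi,
      p.1 • (dbar φ (Complex.polarCoord.symm p + w) / (Complex.polarCoord.symm p + w - w)) =
      ∫ p in Ioi (0:ℝ) ×ˢ Ioo (-Real.pi) Real.pi, (A p + Complex.I * B p) := by
    apply setIntegral_congr_fun (measurableSet_Ioi.prod measurableSet_Ioo)
    rintro ⟨r, θ⟩ ⟨hr, -⟩
    have hr : (0:ℝ) < r := hr
    have hpe : Complex.polarCoord.symm (r, θ) = r * e θ := by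
      rw [Complex.polarCoord_symm_apply]
    have hne : e θ ≠ 0 := fun h0 => by have := hen θ; rw [h0] at this; simp at this
    have hrc : (r : ℂ) ≠ 0 := by exact_mod_cast hr.ne'
    have hinv : (e θ)⁻¹ = Real.cos θ - Real.sin θ * Complex.I := by
      apply inv_eq_of_mul_eq_one_right
      have : (Real.cos θ : ℂ)^2 + (Real.sin θ : ℂ)^2 = 1 := by exact_mod_cast Real.cos_sq_add_sin_sq θ
      simp only [e]
      linear_combination this - (Real.sin θ : ℂ)^2 * Complex.I_sq
    simp only [A, B, hpe, add_sub_cancel_right, Complex.real_smul]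
    have := polar_alg (fderiv ℝ φ (w + r * e θ)) (Real.cos θ) (Real.sin θ)
    change _ = fderiv ℝ φ (w + r * e θ) (Real.cos θ + Real.sin θ * Complex.I) +
      Complex.I * fderiv ℝ φ (w + r * e θ) (Complex.I * (Real.cos θ + Real.sin θ * Complex.I))
    rw [this, ← hinv, dbar, add_comm (_ * _) w]
    field_simp
  have hA0 : ∀ p : ℝ × ℝ, R ≤ p.1 → A p = 0 := fun p hp => by
    simp only [A]; rw [(hR _ _).2]; · rfl
    rwa [hnorm _ _ (hR0.le.trans hp)]
  have hB0 : ∀ p : ℝ × ℝ, R ≤ p.1 → B p = 0 := fun p hp => by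
    simp only [B]; rw [(hR _ _).2]; · rfl
    rwa [hnorm _ _ (hR0.le.trans hp)]
  have step2 : ∫ p in Ioi (0:ℝ) ×ˢ Ioo (-Real.pi) Real.pi, (A p + Complex.I * B p) =
      ∫ p in Ioc (0:ℝ) R ×ˢ Ioo (-Real.pi) Real.pi, (A p + Complex.I * B p) := by
    apply setIntegral_eq_of_subset_of_forall_sdiff_eq_zero (measurableSet_Ioi.prod measurableSet_Ioo)
    · exact prod_mono Ioc_subset_Ioi_self le_rfl
    · rintro ⟨r, θ⟩ ⟨⟨h1, h2⟩, h3⟩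
      have : R ≤ r := by
        by_contra hlt
        exact h3 ⟨⟨h1, (not_le.1 hlt).le⟩, h2⟩
      rw [hA0 _ this, hB0 _ this]; simp
  have hint : ∀ F : ℝ × ℝ → ℂ, Continuous F →
      Integrable F ((volume.restrict (Ioc 0 R)).prod (volume.restrict (Ioo (-Real.pi) Real.pi))) := by
    intro F hF
    rw [Measure.prod_restrict]
    refine IntegrableOn.mono_set (t := Icc ((0:ℝ), -Real.pi) (R, Real.pi)) hF.integrableOn_Icc ?_
    rintro ⟨r, θ⟩ ⟨h1, h2⟩
    exact ⟨⟨h1.1.le, h2.1.le⟩, ⟨h1.2, h2.2.le⟩⟩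
  rw [step1, step2, Measure.volume_eq_prod, ← Measure.prod_restrict,
    integral_add (hint _ hAc) ((hint _ hBc).const_mul _), integral_const_mul,
    integral_prod_symm _ (hint _ hAc), integral_prod _ (hint _ hBc)]
  have hAin : ∀ θ, ∫ r in Ioc 0 R, A (r, θ) = -φ w := by
    intro θ
    rw [← intervalIntegral.integral_of_le hR0.le,
      intervalIntegral.integral_eq_sub_of_hasDerivAt (f := fun r : ℝ => φ (w + r * e θ))]
    · have : φ (w + R * e θ) = 0 := (hR _ (by rw [hnorm _ _ hR0.le])).1
      simp [this]
    · intro r _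
      have h1 : HasDerivAt (fun r : ℝ => w + r * e θ) (e θ) r := by
        have := ((hasDerivAt_id r).ofReal_comp.mul_const (e θ)).const_add w
        simpa using this
      exact (hd _).hasFDerivAt.comp_hasDerivAt r h1
    · apply Continuous.intervalIntegrable; fun_prop
  have hBin : ∀ r ∈ Ioc 0 R, ∫ θ in Ioo (-Real.pi) Real.pi, B (r, θ) = 0 := by
    intro r hr
    have hpi : -Real.pi ≤ Real.pi := by linarith [Real.pi_pos]
    rw [← integral_Ioc_eq_integral_Ioo, ← intervalIntegral.integral_of_le hpi]
    have hrc : (r : ℂ) ≠ 0 := by exact_mod_cast hr.1.ne'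
    have : ∫ θ in (-Real.pi)..Real.pi, (r : ℂ) * B (r, θ) = 0 := by
      rw [intervalIntegral.integral_eq_sub_of_hasDerivAt (f := fun θ : ℝ => φ (w + r * e θ))]
      · simp [e]
      · intro θ _
        have h1 : HasDerivAt (fun θ : ℝ => w + r * e θ) (r * (Complex.I * e θ)) θ :=
          ((hed θ).const_mul (r:ℂ)).const_add w
        have := (hd _).hasFDerivAt.comp_hasDerivAt θ h1
        have e1 : fderiv ℝ φ (w + r * e θ) (r * (Complex.I * e θ)) = r * B (r, θ) := by
          have := (fderiv ℝ φ (w + r * e θ)).map_smul r (Complex.I * e θ)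
          simpa only [Complex.real_smul] using this
        rw [← e1]
        exact this
      · apply Continuous.intervalIntegrable; fun_prop
    rw [intervalIntegral.integral_const_mul] at this
    exact (mul_eq_zero.1 this).resolve_left hrc
  rw [setIntegral_congr_fun measurableSet_Ioc hBin]
  simp only [hAin]
  have : volume.real (Ioo (-Real.pi) Real.pi) = 2 * Real.pi := by
    rw [Measure.real, Real.volume_Ioo, ENNReal.toReal_ofReal] <;> linarith [Real.pi_pos]
  simp [this]

noncomputable def kker (z : ℂ) : ℝ := (Iio (1:ℝ)).indicator (fun t => t⁻¹) ‖z‖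

lemma kker_integrable : Integrable kker := by
  unfold kker
  rw [integrable_fun_norm_addHaar volume (f := (Iio (1:ℝ)).indicator (fun t => t⁻¹)), Complex.finrank_real_complex]
  have h : IntegrableOn (fun _ : ℝ => (1:ℝ)) (Ioo 0 1) := by
    exact integrableOn_const (by simp) (by simp)
  rw [← integrable_indicator_iff measurableSet_Ioo] at h
  refine (h.integrableOn (s := Ioi 0)).congr_fun ?_ measurableSet_Ioi
  intro y hy
  have hy : 0 < y := hy
  by_cases h1 : y < 1
  · simp [indicator, hy, h1, hy.ne']
  · simp [indicator, h1]

lemma kker_nonneg (z : ℂ) : 0 ≤ kker z := by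
  unfold kker
  rw [indicator]
  split_ifs <;> positivity

lemma inv_le_kker (z : ℂ) : ‖z‖⁻¹ ≤ kker z + 1 := by
  unfold kker
  by_cases h : ‖z‖ < 1
  · rw [indicator_of_mem (by exact h)]; linarith
  · rw [indicator_of_notMem (by exact h), zero_add]
    exact inv_le_one_of_one_le₀ (not_lt.1 h)

lemma dom_bound {φ : ℂ → ℂ} {B : ℝ} (hB : ∀ z, ‖φ z‖ ≤ B) (w z : ℂ) :
    ‖φ z / (z - w)‖ ≤ B * kker (z - w) + ‖φ z‖ := by
  rw [div_eq_mul_inv, norm_mul, norm_inv]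
  have h1 := inv_le_kker (z - w)
  have h2 := kker_nonneg (z - w)
  have h3 := hB z
  have h4 := norm_nonneg (φ z)
  nlinarith [mul_le_mul_of_nonneg_left h1 h4, mul_le_mul_of_nonneg_right h3 h2]

lemma kernel_integrable {φ : ℂ → ℂ} {B : ℝ} (hB : ∀ z, ‖φ z‖ ≤ B) (hi : Integrable φ) (w : ℂ) :
    Integrable (fun z => φ z / (z - w)) := by
  refine Integrable.mono' (g := fun z => B * kker (z - w) + ‖φ z‖) ?_ ?_ ?_
  · exact ((kker_integrable.comp_sub_right w).const_mul B).add hi.norm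
  · have : Measurable fun z : ℂ => (z - w)⁻¹ := by fun_prop
    exact hi.1.mul this.aestronglyMeasurable
  · exact Eventually.of_forall fun z => dom_bound hB w z

lemma kernel_norm_int {φ : ℂ → ℂ} {B : ℝ} (hB : ∀ z, ‖φ z‖ ≤ B) (hi : Integrable φ) (w : ℂ) :
    ∫ z, ‖φ z / (z - w)‖ ≤ B * (∫ z, kker z) + ∫ z, ‖φ z‖ := by
  have h1 : Integrable fun z => B * kker (z - w) := (kker_integrable.comp_sub_right w).const_mul B
  calc ∫ z, ‖φ z / (z - w)‖ ≤ ∫ z, (B * kker (z - w) + ‖φ z‖) :=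
        integral_mono (kernel_integrable hB hi w).norm (h1.add hi.norm) (fun z => dom_bound hB w z)
    _ = _ := by
        rw [integral_add h1 hi.norm, integral_const_mul, integral_sub_right_eq_self kker w]

lemma fubini_kernel {γ : ℝ → ℂ} (hγ : LipschitzWith 1 γ) {L : ℝ} (hL : 0 < L) {φ : ℂ → ℂ}
    {B : ℝ} (hB : ∀ z, ‖φ z‖ ≤ B) (hi : Integrable φ) (hm : Measurable φ) :
    cInt γ L (fun ζ => ∫ z, φ z / (z - ζ)) =
      - ∫ z, φ z * cInt γ L (fun ζ => 1 / (ζ - z)) := by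
  unfold cInt
  have hγc : Continuous γ := hγ.continuous
  have hγm : Measurable γ := hγc.measurable
  have hdm : Measurable (deriv γ) := measurable_deriv γ
  have hFm : Measurable (fun q : ℝ × ℂ => φ q.2 / (q.2 - γ q.1) * deriv γ q.1) := by fun_prop
  have hint : Integrable (fun q : ℝ × ℂ => φ q.2 / (q.2 - γ q.1) * deriv γ q.1)
      ((volume.restrict (Ioc 0 L)).prod volume) := by
    rw [integrable_prod_iff hFm.aestronglyMeasurable]
    constructor
    · exact Eventually.of_forall fun x => (kernel_integrable hB hi (γ x)).mul_const (deriv γ x)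
    · refine Measure.integrableOn_of_bounded (M := B * (∫ z, kker z) + ∫ z, ‖φ z‖) (by simp) ?_ ?_
      · exact (hFm.norm.stronglyMeasurable.integral_prod_right').aestronglyMeasurable
      · refine Eventually.of_forall fun x => ?_
        rw [Real.norm_of_nonneg (by positivity)]
        simp only [norm_mul]
        rw [integral_mul_const]
        have := kernel_norm_int hB hi (γ x)
        have h1 := cInt_bound hγ x
        have h2 : 0 ≤ ∫ z, ‖φ z / (z - γ x)‖ := by positivity
        nlinarith [mul_le_mul_of_nonneg_left h1 h2]
  rw [intervalIntegral.integral_of_le hL.le]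
  have := integral_integral_swap (f := fun (x : ℝ) (z : ℂ) => φ z / (z - γ x) * deriv γ x) hint
  simp only [integral_mul_const] at this
  rw [this, ← integral_neg]
  congr 1
  ext z
  rw [intervalIntegral.integral_of_le hL.le, ← integral_const_mul, ← integral_neg]
  congr 1
  ext x
  simp only []
  rw [← neg_sub z (γ x), one_div, inv_neg]
  ring

lemma cInt_pompeiu {γ : ℝ → ℂ} (hγ : LipschitzWith 1 γ) {L : ℝ} (hL : 0 < L) {p : ℂ → ℂ}
    (h : ContDiff ℝ 1 p) (hs : HasCompactSupport p) :
    2 * Real.pi * cInt γ L p = ∫ z, dbar p z * cInt γ L (fun ζ => 1 / (ζ - z)) := by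
  have hc := dbar_continuous h
  have hcs := dbar_hcs hs
  obtain ⟨B, hB⟩ := hcs.exists_bound_of_continuous hc
  have := fubini_kernel hγ hL hB (hc.integrable_of_hasCompactSupport hcs) hc.measurable
  simp only [cauchy_pompeiu h hs] at this
  have e : cInt γ L (fun ζ => -(2 * Real.pi) * p ζ) = -(2 * Real.pi) * cInt γ L p := by
    unfold cInt
    rw [← intervalIntegral.integral_const_mul]
    simp only [mul_assoc]
  rw [e] at this
  linear_combination -this

lemma integral_fderiv_zero {φ : ℂ → ℂ} (h : ContDiff ℝ 1 φ) (hs : HasCompactSupport φ) (v : ℂ) :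
    ∫ z, fderiv ℝ φ z v = 0 := by
  have hDc := h.continuous_fderiv one_ne_zero
  have hd := h.differentiable one_ne_zero
  have hi : Integrable (fun z => fderiv ℝ φ z v) :=
    (hDc.clm_apply continuous_const).integrable_of_hasCompactSupport (hs.fderiv_apply ℝ v)
  have := integral_mul_fderiv_eq_neg_fderiv_mul_of_integrable (μ := volume) (𝕜 := ℂ)
    (f := fun _ : ℂ => (1:ℂ)) (g := φ) (v := v) (by simp) (by simpa using hi)
    (by simpa using h.continuous.integrable_of_hasCompactSupport hs)
    (fun _ _ => differentiableAt_const _) (fun _ _ => hd _)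
  simpa using this

lemma integral_dbar_zero {φ : ℂ → ℂ} (h : ContDiff ℝ 1 φ) (hs : HasCompactSupport φ) :
    ∫ z, dbar φ z = 0 := by
  have hDc := h.continuous_fderiv one_ne_zero
  have hi : ∀ v, Integrable (fun z => fderiv ℝ φ z v) := fun v =>
    (hDc.clm_apply continuous_const).integrable_of_hasCompactSupport (hs.fderiv_apply ℝ v)
  unfold dbar
  rw [integral_add (hi _) ((hi _).const_mul _), integral_const_mul, integral_fderiv_zero h hs,
    integral_fderiv_zero h hs]
  simp

lemma dbar_mul {p q : ℂ → ℂ} {z : ℂ} (hp : DifferentiableAt ℝ p z) (hq : DifferentiableAt ℝ q z) :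
    dbar (fun z => p z * q z) z = dbar p z * q z + p z * dbar q z := by
  unfold dbar
  rw [fderiv_fun_mul hp hq]
  simp
  ring

lemma dbar_holo {p : ℂ → ℂ} {z : ℂ} (hp : DifferentiableAt ℂ p z) : dbar p z = 0 := by
  unfold dbar
  have := hp.fderiv_restrictScalars ℝ
  rw [this]
  simp only [ContinuousLinearMap.coe_restrictScalars']
  have h1 : fderiv ℂ p z Complex.I = Complex.I * fderiv ℂ p z 1 := by
    have := (fderiv ℂ p z).map_smul Complex.I 1
    simpa using this
  rw [h1]
  linear_combination (fderiv ℂ p z 1) * Complex.I_sq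

lemma dbar_congr {p q : ℂ → ℂ} {z : ℂ} (h : p =ᶠ[𝓝 z] q) : dbar p z = dbar q z := by
  unfold dbar
  rw [h.fderiv_eq]

lemma pole_mem {K : Set ℂ} (hK : CompactSpace K) {z : ℂ} (hz : z ∉ K)
    (hc : ¬ Bornology.IsBounded (connectedComponentIn Kᶜ z)) (g : C(K, ℂ))
    (hg : ∀ ζ : K, g ζ = 1 / ((ζ : ℂ) - z)) : g ∈ (polynomialFunctions K).topologicalClosure := by
  set S := (polynomialFunctions K).topologicalClosure with hS
  haveI : IsClosed (S : Set C(K, ℂ)) := Subalgebra.isClosed_topologicalClosure _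
  let ι : C(K, ℂ) := Polynomial.toContinuousMapOnAlgHom K X
  have hι : ι ∈ S := (polynomialFunctions K).le_topologicalClosure ⟨X, by simp, rfl⟩
  have hιa : ∀ ζ : K, ι ζ = ζ := fun ζ => by simp [ι]
  have hsp : spectrum ℂ ι = K := by
    rw [ContinuousMap.spectrum_eq_range]
    ext w
    constructor
    · rintro ⟨ζ, rfl⟩; rw [hιa]; exact ζ.2
    · intro hw; exact ⟨⟨w, hw⟩, hιa _⟩
  have h1 : z ∉ spectrum ℂ (⟨ι, hι⟩ : S) := fun h => by
    have := Subalgebra.spectrum_isBounded_connectedComponentIn S (⟨ι, hι⟩ : S) h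
    simp only [hsp] at this
    exact hc this
  rw [spectrum.notMem_iff] at h1
  obtain ⟨u, hu⟩ := h1
  have h2 : ((u : S) : C(K, ℂ)) * (((u⁻¹ : Sˣ) : S) : C(K, ℂ)) = 1 := by
    have := u.mul_inv
    exact_mod_cast congrArg (Subtype.val) this
  have h3 : g = - (((u⁻¹ : Sˣ) : S) : C(K, ℂ)) := by
    ext ζ
    have h4 := congrArg (fun q : C(K, ℂ) => q ζ) h2
    have h5 : ((u : S) : C(K, ℂ)) ζ = z - ζ := by
      rw [hu]
      simp [hιa, Algebra.algebraMap_eq_smul_one]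
    simp only [ContinuousMap.mul_apply, h5, ContinuousMap.one_apply] at h4
    have hne : (ζ : ℂ) - z ≠ 0 := sub_ne_zero.2 fun h => hz (h ▸ ζ.2)
    rw [hg, ContinuousMap.neg_apply, div_eq_iff hne]
    linear_combination -h4
  rw [h3]
  exact S.neg_mem (Subtype.mem _)

lemma mem_closure_poly {K : Set ℂ} (hK : CompactSpace K) {g : C(K, ℂ)} 
    (hg : g ∈ (polynomialFunctions K).topologicalClosure) {ε : ℝ} (hε : 0 < ε) :
    ∃ P : ℂ[X], ∀ ζ : K, ‖g ζ - P.eval (ζ : ℂ)‖ < ε := by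
  rw [← SetLike.mem_coe, Subalgebra.topologicalClosure_coe, Metric.mem_closure_iff] at hg
  obtain ⟨q, ⟨P, -, rfl⟩, hq⟩ := hg ε hε
  refine ⟨P, fun ζ => ?_⟩
  rw [dist_eq_norm] at hq
  have := (g - (Polynomial.toContinuousMapOnAlgHom K : ℂ[X] →+* C(K, ℂ)) P).norm_coe_le_norm ζ
  simp at this
  exact this.trans_lt hq

lemma pole_push {K : Set ℂ} (hK : IsCompact K) {z : ℂ} (hz : z ∉ K)
    (hc : ¬ Bornology.IsBounded (connectedComponentIn Kᶜ z)) {ε : ℝ} (hε : 0 < ε) :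
    ∃ P : ℂ[X], ∀ ζ ∈ K, ‖1 / (ζ - z) - P.eval ζ‖ < ε := by
  have hK' : CompactSpace K := isCompact_iff_compactSpace.1 hK
  have hcont : Continuous fun ζ : K => 1 / ((ζ : ℂ) - z) := by
    apply Continuous.div continuous_const (by fun_prop)
    intro ζ; exact sub_ne_zero.2 fun h => hz (h ▸ ζ.2)
  obtain ⟨P, hP⟩ := mem_closure_poly hK' (pole_mem hK' hz hc ⟨_, hcont⟩ (fun _ => rfl)) hε
  exact ⟨P, fun ζ hζ => hP ⟨ζ, hζ⟩⟩

lemma no_bdd {T : Set (OnePoint ℂ)} (hT : IsPreconnected T) (hinf : OnePoint.infty ∈ T) {W : Set ℂ}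
    (hW : IsOpen W) (hb : Bornology.IsBounded W) (hfr : ∀ z ∈ closure W, z ∉ W → (z : OnePoint ℂ) ∉ T) :
    ∀ w ∈ W, (w : OnePoint ℂ) ∉ T := by
  intro w hw hwT
  have hcl : IsCompact (closure W) := hb.isCompact_closure
  have o1 : IsOpen ((fun z : ℂ => (z : OnePoint ℂ)) '' W) := OnePoint.isOpen_image_coe.2 hW
  have o2 : IsOpen (((fun z : ℂ => (z : OnePoint ℂ)) '' (closure W))ᶜ) :=
    (OnePoint.isClosed_image_coe.2 ⟨hcl.isClosed, hcl⟩).isOpen_compl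
  have hcov : T ⊆ ((fun z : ℂ => (z : OnePoint ℂ)) '' W) ∪ (((fun z : ℂ => (z : OnePoint ℂ)) '' (closure W))ᶜ) := by
    intro t ht
    by_cases h : t ∈ (fun z : ℂ => (z : OnePoint ℂ)) '' (closure W)
    · left
      obtain ⟨z, hz, rfl⟩ := h
      refine ⟨z, ?_, rfl⟩
      by_contra hzW
      exact hfr z hz hzW ht
    · right; exact h
  obtain ⟨t, -, ⟨z, hz, rfl⟩, h2⟩ := hT _ _ o1 o2 hcov ⟨_, hwT, w, hw, rfl⟩
    ⟨_, hinf, by simp⟩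
  exact h2 ⟨z, subset_closure hz, rfl⟩

structure Setup (Ω E U : Set ℂ) (V : Set (OnePoint ℂ)) (γ : ℝ → ℂ) (L : ℝ) : Prop where
  Ωo : IsOpen Ω
  Ωc : IsConnected Ω
  L0 : 0 < L
  lip : LipschitzWith 1 γ
  cl : γ 0 = γ L
  inj : InjOn γ (Ico 0 L)
  Uo : IsOpen U
  Uc : IsPreconnected U
  Une : U.Nonempty
  Ec : IsCompact E
  EU : E = U ∪ γ '' Icc 0 L
  Ud : Disjoint U (γ '' Icc 0 L)
  dis : Disjoint Ω E
  Go : IsOpen (Ω ∪ E)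
  Gc : IsPreconnected (Ω ∪ E)
  Vc : IsPreconnected V
  Vinf : OnePoint.infty ∈ V
  VG : ∀ z : ℂ, (z : OnePoint ℂ) ∈ V ↔ z ∉ Ω ∪ E
  Eb : ∀ z ∉ E, ¬ Bornology.IsBounded (connectedComponentIn Eᶜ z)

lemma setup_of {Ω : Set ℂ} (hΩopen : IsOpen Ω) (hΩconn : IsConnected Ω)
    {γ : ℝ → ℂ} {L : ℝ} (hL : 0 < L) (hγ : LipschitzWith 1 γ) (hcl : γ 0 = γ L)
    (hinj : InjOn γ (Ico 0 L))
    {U : Set ℂ} (hUbdd : Bornology.IsBounded U)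
    (hUcomp : ∃ x : ℂ, U = connectedComponentIn ((γ '' Set.Icc 0 L)ᶜ) x)
    {E : Set ℂ} (hE : E = closure U)
    (hfront : frontier E = γ '' Set.Icc 0 L)
    {V₀ : Set (OnePoint ℂ)}
    (hV₀ : V₀ = connectedComponentIn (((fun z : ℂ => (z : OnePoint ℂ)) '' Ω)ᶜ) OnePoint.infty)
    (hcover : ((fun z : ℂ => (z : OnePoint ℂ)) '' Ω)ᶜ
      = V₀ ∪ (fun z : ℂ => (z : OnePoint ℂ)) '' E)
    (hEcomp : ∃ z ∈ E, (fun z : ℂ => (z : OnePoint ℂ)) '' E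
      = connectedComponentIn (((fun z : ℂ => (z : OnePoint ℂ)) '' Ω)ᶜ) (z : OnePoint ℂ)) :
    Setup Ω E U V₀ γ L := by
  set ι : ℂ → OnePoint ℂ := fun z : ℂ => (z : OnePoint ℂ) with hι
  have hιinj : Function.Injective ι := OnePoint.coe_injective
  have hιc : Continuous ι := OnePoint.continuous_coe
  have hΓ : IsCompact (γ '' Icc 0 L) := isCompact_Icc.image hγ.continuous
  have hEcl : IsClosed E := hE ▸ isClosed_closure
  have hEc : IsCompact E := hE ▸ hUbdd.isCompact_closure
  obtain ⟨x, hx⟩ := hUcomp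
  have hUo : IsOpen U := hx ▸ hΓ.isClosed.isOpen_compl.connectedComponentIn
  have hUc : IsPreconnected U := hx ▸ isPreconnected_connectedComponentIn
  obtain ⟨z₀, hz₀, hEz⟩ := hEcomp
  have hUne : U.Nonempty := by
    rw [hE] at hz₀
    exact closure_nonempty_iff.1 ⟨_, hz₀⟩
  have hUd : Disjoint U (γ '' Icc 0 L) := by
    rw [hx]
    exact disjoint_left.2 fun z hz => connectedComponentIn_subset _ _ hz
  have hEU : E = U ∪ γ '' Icc 0 L := by
    apply Subset.antisymm
    · intro z hz
      by_contra hn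
      rw [mem_union, not_or] at hn
      have hzo : IsOpen (connectedComponentIn (γ '' Icc 0 L)ᶜ z) :=
        hΓ.isClosed.isOpen_compl.connectedComponentIn
      have hzm : z ∈ connectedComponentIn (γ '' Icc 0 L)ᶜ z := mem_connectedComponentIn hn.2
      rw [hE] at hz
      obtain ⟨y, hy1, hy2⟩ := mem_closure_iff.1 hz _ hzo hzm
      have e1 := connectedComponentIn_eq hy1
      rw [hx] at hy2
      have e2 := connectedComponentIn_eq hy2
      apply hn.1
      rw [hx, e2, ← e1]
      exact hzm
    · apply union_subset
      · rw [hE]; exact subset_closure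
      · rw [← hfront]; exact hEcl.frontier_subset
  have hΩcl : IsClosed (ι '' Ω)ᶜ := (OnePoint.isOpen_image_coe.2 hΩopen).isClosed_compl
  have hinf : OnePoint.infty ∈ (ι '' Ω)ᶜ := by simp [hι]
  have hVinf : OnePoint.infty ∈ V₀ := hV₀ ▸ mem_connectedComponentIn hinf
  have hdis : Disjoint Ω E := by
    rw [disjoint_left]
    intro z hz hzE
    have : ι z ∈ (ι '' Ω)ᶜ := by rw [hcover]; exact Or.inr ⟨z, hzE, rfl⟩
    exact this ⟨z, hz, rfl⟩
  have hVE : ∀ z ∈ E, ι z ∉ V₀ := by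
    intro z hz hzV
    rw [hV₀] at hzV
    have e1 := connectedComponentIn_eq hzV
    have hz2 : ι z ∈ ι '' E := ⟨z, hz, rfl⟩
    rw [hEz] at hz2
    have e2 := connectedComponentIn_eq hz2
    have : OnePoint.infty ∈ ι '' E := by
      rw [hEz, e2, ← e1]
      exact mem_connectedComponentIn hinf
    obtain ⟨y, -, hy⟩ := this
    exact OnePoint.coe_ne_infty y hy
  have hVG : ∀ z : ℂ, (z : OnePoint ℂ) ∈ V₀ ↔ z ∉ Ω ∪ E := by
    intro z
    constructor
    · rintro hz (h | h)
      · have : ι z ∈ (ι '' Ω)ᶜ := by rw [hcover]; exact Or.inl hz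
        exact this ⟨z, h, rfl⟩
      · exact hVE z h hz
    · intro hz
      rw [mem_union, not_or] at hz
      have : ι z ∈ (ι '' Ω)ᶜ := by
        rintro ⟨y, hy, hyz⟩
        exact hz.1 (hιinj hyz ▸ hy)
      rw [hcover] at this
      rcases this with h | ⟨y, hy, hyz⟩
      · exact h
      · exact absurd (hιinj hyz ▸ hy) hz.2
  have hVcl : IsClosed V₀ := by
    rw [hV₀, connectedComponentIn_eq_image hinf]
    exact hΩcl.isClosedEmbedding_subtypeVal.isClosedMap _ isClosed_connectedComponent
  have hGo : IsOpen (Ω ∪ E) := by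
    have : Ω ∪ E = ι ⁻¹' V₀ᶜ := by
      ext z
      rw [mem_preimage, mem_compl_iff, hVG, not_not]
    rw [this]
    exact hVcl.isOpen_compl.preimage hιc
  have hEconn : IsPreconnected E := hE ▸ hUc.closure
  have hGc : IsPreconnected (Ω ∪ E) := by
    have hp : γ 0 ∈ γ '' Icc 0 L := ⟨0, ⟨le_rfl, hL.le⟩, rfl⟩
    have hpE : γ 0 ∈ E := hEU ▸ Or.inr hp
    have hpΩ : γ 0 ∈ closure Ω := by
      rw [mem_closure_iff]
      intro o ho hpo
      rw [← hfront, hEcl.frontier_eq] at hp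
      by_contra hne
      apply hp.2
      rw [mem_interior]
      refine ⟨o ∩ (Ω ∪ E), ?_, ho.inter hGo, hpo, Or.inr hpE⟩
      rintro y ⟨hy, hy1 | hy2⟩
      · exact absurd ⟨y, hy, hy1⟩ hne
      · exact hy2
    have h1 : IsPreconnected (insert (γ 0) Ω) :=
      hΩconn.isPreconnected.subset_closure (subset_insert _ _)
        (insert_subset hpΩ subset_closure)
    have := IsPreconnected.union (γ 0) (mem_insert _ _) hpE h1 hEconn
    rw [insert_union, insert_eq_of_mem (mem_union_right Ω hpE)] at this
    exact this
  have hVc : IsPreconnected V₀ := hV₀ ▸ isPreconnected_connectedComponentIn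
  refine ⟨hΩopen, hΩconn, hL, hγ, hcl, hinj, hUo, hUc, hUne, hEc, hEU, hUd, hdis, hGo, hGc,
    hVc, hVinf, hVG, ?_⟩
  intro z hz hb
  set W := connectedComponentIn Eᶜ z with hW
  have hWo : IsOpen W := hEcl.isOpen_compl.connectedComponentIn
  have hzW : z ∈ W := mem_connectedComponentIn hz
  have hWcl : closure W ⊆ W ∪ E := by
    intro y hy
    by_contra hn
    rw [mem_union, not_or] at hn
    have hyo : IsOpen (connectedComponentIn Eᶜ y) := hEcl.isOpen_compl.connectedComponentIn
    have hym : y ∈ connectedComponentIn Eᶜ y := mem_connectedComponentIn hn.2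
    obtain ⟨t, ht1, ht2⟩ := mem_closure_iff.1 hy _ hyo hym
    have e1 := connectedComponentIn_eq ht1
    have e2 := connectedComponentIn_eq ht2
    apply hn.1
    rw [hW, e2, ← e1]
    exact hym
  have h1 := no_bdd hVc hVinf hWo hb (by
    intro y hy hyW
    rw [hVG, not_not]
    exact Or.inr ((hWcl hy).resolve_left hyW))
  have hWE : W ⊆ Eᶜ := connectedComponentIn_subset _ _
  have hWΩ : W ⊆ Ω := by
    intro y hy
    have := h1 y hy
    rw [hVG, not_not] at this
    exact this.resolve_right (hWE hy)
  have hΩW : Ω ⊆ W :=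
    hΩconn.isPreconnected.subset_connectedComponentIn (hWΩ hzW) (fun y hy => disjoint_left.1 hdis hy)
  have hΩeq : Ω = W := Subset.antisymm hΩW hWΩ
  have hGcl : IsClosed (Ω ∪ E) := by
    rw [← closure_subset_iff_isClosed, closure_union, hEcl.closure_eq, hΩeq]
    exact union_subset hWcl subset_union_right
  have hGu : Ω ∪ E = univ := IsClopen.eq_univ ⟨hGcl, hGo⟩ ⟨z, Or.inl (hWΩ hzW)⟩
  have hGb : Bornology.IsBounded (Ω ∪ E) := by
    rw [hΩeq]; exact hb.union hEc.isBounded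
  rw [hGu] at hGb
  exact NormedSpace.unbounded_univ ℝ ℂ hGb

lemma poly_antideriv (P : ℂ[X]) : ∃ Q : ℂ[X], derivative Q = P := by
  induction P using Polynomial.induction_on' with
  | add p q hp hq =>
    obtain ⟨Q1, h1⟩ := hp
    obtain ⟨Q2, h2⟩ := hq
    exact ⟨Q1 + Q2, by rw [derivative_add, h1, h2]⟩
  | monomial n a =>
    refine ⟨monomial (n+1) (a / (n+1)), ?_⟩
    rw [derivative_monomial]
    have : (n + 1 : ℂ) ≠ 0 := by exact_mod_cast Nat.succ_ne_zero n
    simp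
    field_simp

lemma curve_null {γ : ℝ → ℂ} (hγ : LipschitzWith 1 γ) (L : ℝ) : volume (γ '' Icc 0 L) = 0 := by
  have h0 : μH[((2:NNReal) : ℝ)] (Icc (0:ℝ) L) = 0 := by
    apply hausdorffMeasure_of_dimH_lt
    refine (dimH_mono (subset_univ _)).trans_lt ?_
    rw [Real.dimH_univ]
    norm_num
  have h1 : μH[((2:NNReal) : ℝ)] (γ '' Icc 0 L) = 0 := by
    have := hγ.hausdorffMeasure_image_le (d := ((2:NNReal) : ℝ)) (by positivity) (Icc 0 L)
    rw [h0, mul_zero] at this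
    exact le_antisymm this (zero_le)
  have e : ((2:NNReal) : ℝ) = (Module.finrank ℝ ℂ : ℝ) := by
    rw [Complex.finrank_real_complex]; norm_num
  rw [e] at h1
  exact Measure.absolutelyContinuous_isAddHaarMeasure volume _ h1

lemma N_locconst {γ : ℝ → ℂ} {L : ℝ} (hL : 0 < L) (hγ : LipschitzWith 1 γ) (hcl : γ 0 = γ L)
    {z₀ z : ℂ} (h : ∀ ζ ∈ γ '' Icc 0 L, ‖z - z₀‖ < ‖ζ - z₀‖) :
    cInt γ L (fun ζ => 1 / (ζ - z)) = cInt γ L (fun ζ => 1 / (ζ - z₀)) := by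
  have hne0 : ∀ ζ, ‖z - z₀‖ < ‖ζ - z₀‖ → ζ - z₀ ≠ 0 := fun ζ hζ h0 => by
    rw [h0, norm_zero] at hζ
    exact absurd hζ (not_lt.2 (norm_nonneg _))
  have hne : ∀ ζ, ‖z - z₀‖ < ‖ζ - z₀‖ → ζ - z ≠ 0 := fun ζ hζ h0 => by
    rw [sub_eq_zero.1 h0] at hζ
    exact lt_irrefl _ hζ
  have hc : ∀ w, (∀ ζ ∈ γ '' Icc 0 L, ζ - w ≠ 0) →
      ContinuousOn (fun ζ => 1 / (ζ - w)) (γ '' Icc 0 L) := fun w hw =>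
    continuousOn_const.div (by fun_prop) hw
  rw [← sub_eq_zero, ← cInt_sub hL hγ (hc z fun ζ hζ => hne ζ (h ζ hζ))
    (hc z₀ fun ζ hζ => hne0 ζ (h ζ hζ))]
  refine cInt_deriv hL hγ hcl (W := {ζ | ‖z - z₀‖ < ‖ζ - z₀‖})
    (F := fun ζ => Complex.log ((ζ - z) / (ζ - z₀)))
    (isOpen_lt continuous_const (by fun_prop)) (fun ζ hζ => h ζ hζ) ?_
  intro ζ hζ
  have hζ : ‖z - z₀‖ < ‖ζ - z₀‖ := hζ
  have a0 := hne0 ζ hζ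
  have a1 := hne ζ hζ
  have hd : HasDerivAt (fun ζ => (ζ - z) / (ζ - z₀))
      ((1 * (ζ - z₀) - (ζ - z) * 1) / (ζ - z₀)^2) ζ :=
    ((hasDerivAt_id ζ).sub_const z).div ((hasDerivAt_id ζ).sub_const z₀) a0
  have hs : (ζ - z) / (ζ - z₀) ∈ Complex.slitPlane := by
    left
    have e : (ζ - z) / (ζ - z₀) = 1 - (z - z₀) / (ζ - z₀) := by field_simp; ring
    have n : ‖(z - z₀) / (ζ - z₀)‖ < 1 := by
      rw [norm_div, div_lt_one (norm_pos_iff.2 a0)]; exact hζ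
    rw [e]
    have := Complex.re_le_norm ((z - z₀) / (ζ - z₀))
    simp only [Complex.sub_re, Complex.one_re]
    linarith
  convert! hd.clog hs using 1
  field_simp

section
variable {Ω E U : Set ℂ} {V : Set (OnePoint ℂ)} {γ : ℝ → ℂ} {L : ℝ}

lemma Setup.ΓE (S : Setup Ω E U V γ L) : γ '' Icc 0 L ⊆ E := by
  rw [S.EU]; exact subset_union_right

lemma Setup.Γc (S : Setup Ω E U V γ L) : IsCompact (γ '' Icc 0 L) :=
  isCompact_Icc.image S.lip.continuous

lemma Setup.vanish (S : Setup Ω E U V γ L) {h : ℂ → ℂ} (hc : ContinuousOn h (γ '' Icc 0 L))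
    (h0 : ∀ P : ℂ[X], cInt γ L (fun z => P.eval z * h z) = 0) {z : ℂ} (hz : z ∉ E) :
    cInt γ L (fun ζ => h ζ / (ζ - z)) = 0 := by
  obtain ⟨C, hC⟩ := S.Γc.exists_bound_of_continuousOn hc
  have hC0 : 0 ≤ C := (norm_nonneg _).trans (hC (γ 0) ⟨0, ⟨le_rfl, S.L0.le⟩, rfl⟩)
  have hcz : ContinuousOn (fun ζ => h ζ / (ζ - z)) (γ '' Icc 0 L) :=
    hc.div (by fun_prop) fun ζ hζ => sub_ne_zero.2 fun e => hz (e ▸ S.ΓE hζ)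
  rw [← norm_le_zero_iff]
  apply le_of_forall_pos_le_add
  intro ε hε
  obtain ⟨P, hP⟩ := pole_push S.Ec hz (S.Eb z hz) (ε := ε / ((C + 1) * L)) (by
    have := S.L0; positivity)
  have e1 : cInt γ L (fun ζ => h ζ / (ζ - z)) =
      cInt γ L (fun ζ => h ζ / (ζ - z) - P.eval ζ * h ζ) := by
    rw [cInt_sub S.L0 S.lip hcz (k := fun ζ => P.eval ζ * h ζ) (P.continuous.continuousOn.mul hc), h0, sub_zero]
  rw [e1]
  have := cInt_norm_le S.L0 S.lip (h := fun ζ => h ζ / (ζ - z) - P.eval ζ * h ζ)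
    (C := C * (ε / ((C + 1) * L))) (by
      intro ζ hζ
      have e2 : h ζ / (ζ - z) - P.eval ζ * h ζ = h ζ * (1 / (ζ - z) - P.eval ζ) := by ring
      rw [e2, norm_mul]
      exact mul_le_mul (hC ζ hζ) (hP ζ (S.ΓE hζ)).le (norm_nonneg _) hC0)
  refine this.trans ?_
  have hL := S.L0
  have : C * (ε / ((C + 1) * L)) * L = ε * (C / (C + 1)) := by field_simp
  rw [this, zero_add]
  have : C / (C + 1) ≤ 1 := by rw [div_le_one (by positivity)]; linarith
  nlinarith

lemma Setup.N_out (S : Setup Ω E U V γ L) {z : ℂ} (hz : z ∉ E) :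
    cInt γ L (fun ζ => 1 / (ζ - z)) = 0 := by
  refine S.vanish (h := fun _ => 1) continuousOn_const (fun P => ?_) hz
  obtain ⟨Q, hQ⟩ := poly_antideriv P
  refine cInt_deriv S.L0 S.lip S.cl (F := fun z => Q.eval z) isOpen_univ (subset_univ _) ?_
  intro z _
  have := Q.hasDerivAt z
  rw [hQ] at this
  simpa using this

lemma Setup.N_in (S : Setup Ω E U V γ L) : ∃ c : ℂ, ∀ z ∈ U, cInt γ L (fun ζ => 1 / (ζ - z)) = c := by
  obtain ⟨z₁, h₁⟩ := S.Une
  refine ⟨cInt γ L (fun ζ => 1 / (ζ - z₁)), fun z hz => ?_⟩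
  refine S.Uc.induction₂ (fun x y => cInt γ L (fun ζ => 1 / (ζ - x)) = cInt γ L (fun ζ => 1 / (ζ - y)))
    ?_ (fun x y z _ _ _ h1 h2 => h1.trans h2) (fun x y _ _ h => h.symm) hz h₁
  intro x hx
  apply eventually_nhdsWithin_of_eventually_nhds
  obtain ⟨r, hr, hb⟩ := Metric.isOpen_iff.1 S.Γc.isClosed.isOpen_compl x (disjoint_left.1 S.Ud hx)
  filter_upwards [Metric.ball_mem_nhds x hr] with y hy
  symm
  apply N_locconst S.L0 S.lip S.cl
  intro ζ hζ
  rw [Metric.mem_ball, dist_eq_norm] at hy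
  refine hy.trans_le ?_
  by_contra hlt
  exact hb (by rw [Metric.mem_ball, dist_eq_norm]; exact not_le.1 hlt) hζ

lemma Setup.green (S : Setup Ω E U V γ L) : ∃ c : ℂ, ∀ p : ℂ → ℂ, ContDiff ℝ 1 p → HasCompactSupport p →
    2 * Real.pi * cInt γ L p = c * ∫ z in E, dbar p z := by
  obtain ⟨c, hc⟩ := S.N_in
  refine ⟨c, fun p hp hs => ?_⟩
  rw [cInt_pompeiu S.lip S.L0 hp hs, ← integral_indicator S.Ec.measurableSet, ← integral_const_mul]
  apply integral_congr_ae
  have h0 : ∀ᵐ z, z ∉ γ '' Icc 0 L := measure_eq_zero_iff_ae_notMem.1 (curve_null S.lip L)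
  filter_upwards [h0] with z hz
  by_cases hzE : z ∈ E
  · rw [indicator_of_mem hzE, hc z, mul_comm]
    rw [S.EU] at hzE
    exact hzE.resolve_right hz
  · rw [indicator_of_notMem hzE, S.N_out hzE]
    simp
end

lemma tietze_ext {K : Set ℂ} (hK : IsClosed K) {ψ : ℂ → ℂ} (h : ContinuousOn ψ K) :
    ∃ Ψ : ℂ → ℂ, Continuous Ψ ∧ EqOn Ψ ψ K := by
  obtain ⟨g, hg⟩ := ContinuousMap.exists_restrict_eq hK ⟨K.domRestrict ψ, h.domRestrict⟩
  refine ⟨g, g.continuous, fun z hz => ?_⟩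
  have := congrArg (fun q : C(K, ℂ) => q ⟨z, hz⟩) hg
  simpa using this

lemma cutoff_ball (R : ℝ) : ∃ χ : ℂ → ℂ, ContDiff ℝ ∞ χ ∧ HasCompactSupport χ ∧
    ∀ z ∈ Metric.closedBall (0:ℂ) R, χ z = 1 := by
  let b : ContDiffBump (0:ℂ) := ⟨max R 1, max R 1 + 1, by positivity, by linarith⟩
  refine ⟨fun z => (b z : ℂ), Complex.ofRealCLM.contDiff.comp b.contDiff, ?_, ?_⟩
  · exact b.hasCompactSupport.comp_left (g := fun x : ℝ => (x : ℂ)) (by simp)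
  · intro z hz
    change ((b z : ℝ) : ℂ) = 1
    rw [b.one_of_mem_closedBall (Metric.closedBall_subset_closedBall (le_max_left _ _) hz)]
    simp

lemma smooth_approx {K : Set ℂ} (hK : IsCompact K) {ψ : ℂ → ℂ} (h : ContinuousOn ψ K) {ε : ℝ} (hε : 0 < ε) :
    ∃ p : ℂ → ℂ, ContDiff ℝ ∞ p ∧ HasCompactSupport p ∧ ∀ z ∈ K, ‖p z - ψ z‖ < ε := by
  obtain ⟨Ψ, hΨ, he⟩ := tietze_ext hK.isClosed h
  obtain ⟨g, hg, hd, -⟩ := hΨ.exists_contDiff_approx ⊤ (continuous_const (y := ε)) (fun _ => hε)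
  obtain ⟨R, hR⟩ := hK.isBounded.subset_closedBall 0
  obtain ⟨χ, h1, h2, h3⟩ := cutoff_ball R
  refine ⟨fun z => χ z * g z, h1.mul hg, h2.mul_right, fun z hz => ?_⟩
  have := hd z
  rw [dist_eq_norm, he hz] at this
  change ‖χ z * g z - ψ z‖ < ε
  rwa [h3 z (hR hz), one_mul]

section
variable {Ω E U : Set ℂ} {V : Set (OnePoint ℂ)} {γ : ℝ → ℂ} {L : ℝ}

lemma Setup.not_all (S : Setup Ω E U V γ L) :
    ¬ ∀ p : ℂ → ℂ, ContDiff ℝ 1 p → HasCompactSupport p → cInt γ L p = 0 := by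
  intro h0
  have hall : ∀ ψ : ℂ → ℂ, Continuous ψ → cInt γ L ψ = 0 := by
    intro ψ hψ
    rw [← norm_le_zero_iff]
    apply le_of_forall_pos_le_add
    intro ε hε
    have hL := S.L0
    obtain ⟨p, hp, hps, hd⟩ := smooth_approx S.Γc hψ.continuousOn (ε := ε / L) (by positivity)
    have hp1 : ContDiff ℝ 1 p := hp.of_le (by exact_mod_cast le_top)
    have e := cInt_sub S.L0 S.lip hp.continuous.continuousOn hψ.continuousOn
    rw [h0 p hp1 hps, zero_sub] at e
    have := cInt_norm_le S.L0 S.lip (fun z hz => (hd z hz).le)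
    rw [e, norm_neg] at this
    rw [zero_add]
    refine this.trans (le_of_eq ?_)
    field_simp
  have hae : ∀ᵐ x, x ∈ Ioo 0 L → deriv γ x = 0 := by
    apply isOpen_Ioo.ae_eq_zero_of_integral_contDiff_smul_eq_zero
    · have h1 : LocallyIntegrable (deriv γ) := by
        rw [MeasureTheory.locallyIntegrable_iff]
        intro k hk
        obtain ⟨R, hR⟩ := hk.isBounded.subset_closedBall 0
        refine Measure.integrableOn_of_bounded (M := 1) hk.measure_lt_top.ne
          (measurable_deriv γ).aestronglyMeasurable (Eventually.of_forall fun x => cInt_bound S.lip x)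
      exact h1.locallyIntegrableOn _
    · intro g hg hgs hsub
      haveI : CompactSpace (Icc 0 L) := isCompact_iff_compactSpace.1 isCompact_Icc
      let q : Icc 0 L → γ '' Icc 0 L := fun x => ⟨γ x, mem_image_of_mem γ x.2⟩
      have hqc : Continuous q := (S.lip.continuous.comp continuous_subtype_val).subtype_mk _
      have hqs : Function.Surjective q := by
        rintro ⟨_, x, hx, rfl⟩
        exact ⟨⟨x, hx⟩, rfl⟩
      have hq : IsQuotientMap q := hqc.isClosedMap.isQuotientMap hqc hqs
      have hg0 : ∀ x, x ∉ Ioo 0 L → g x = 0 := fun x hx =>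
        image_eq_zero_of_notMem_tsupport fun h => hx (hsub h)
      let G : C(Icc 0 L, ℂ) := ⟨fun x => (g x : ℂ), by
        have := hg.continuous
        fun_prop⟩
      have hfac : Function.FactorsThrough G q := by
        rintro ⟨x, hx⟩ ⟨y, hy⟩ hxy
        have hxy : γ x = γ y := congrArg Subtype.val hxy
        change ((g x : ℝ) : ℂ) = ((g y : ℝ) : ℂ)
        by_cases hxL : x = L
        · by_cases hyL : y = L
          · rw [hxL, hyL]
          · have hy' : y ∈ Ico 0 L := ⟨hy.1, lt_of_le_of_ne hy.2 hyL⟩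
            rw [hxL, ← S.cl] at hxy
            have := S.inj ⟨le_rfl, S.L0⟩ hy' hxy
            rw [hg0 x (by simp [hxL]), hg0 y (by simp [← this])]
        · have hx' : x ∈ Ico 0 L := ⟨hx.1, lt_of_le_of_ne hx.2 hxL⟩
          by_cases hyL : y = L
          · rw [hyL, ← S.cl] at hxy
            have := S.inj hx' ⟨le_rfl, S.L0⟩ hxy
            rw [hg0 x (by simp [this]), hg0 y (by simp [hyL])]
          · have hy' : y ∈ Ico 0 L := ⟨hy.1, lt_of_le_of_ne hy.2 hyL⟩
            rw [S.inj hx' hy' hxy]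
      let q' : C(Icc 0 L, γ '' Icc 0 L) := ⟨q, hqc⟩
      have hq' : IsQuotientMap q' := hq
      obtain ⟨Ψ, hΨ⟩ := ContinuousMap.exists_restrict_eq S.Γc.isClosed (hq'.lift G hfac)
      have hΨg : ∀ x ∈ Icc 0 L, Ψ (γ x) = g x := by
        intro x hx
        have h1 := congrArg (fun k : C(γ '' Icc 0 L, ℂ) => k (q ⟨x, hx⟩)) hΨ
        have h2 := congrArg (fun k : C(Icc 0 L, ℂ) => k ⟨x, hx⟩) (hq'.lift_comp G hfac)
        exact h1.trans h2
      have h1 := hall Ψ Ψ.continuous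
      unfold cInt at h1
      rw [intervalIntegral.integral_of_le S.L0.le] at h1
      rw [← h1, ← integral_indicator measurableSet_Ioc]
      congr 1
      ext x
      by_cases hx : x ∈ Ioc 0 L
      · rw [indicator_of_mem hx, hΨg x ⟨hx.1.le, hx.2⟩, Complex.real_smul]
      · rw [indicator_of_notMem hx, hg0 x (fun h => hx ⟨h.1, h.2.le⟩), zero_smul]
  have hL := S.L0
  have hm : L / 2 ∈ Ico 0 L := ⟨by linarith, by linarith⟩
  have h1 := gamma_ftc S.L0 S.lip 0 ⟨le_rfl, hL.le⟩ (L/2) ⟨hm.1, hm.2.le⟩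
  have h2 : ∫ x in (0:ℝ)..(L/2), deriv γ x = 0 := by
    rw [intervalIntegral.integral_of_le hm.1]
    apply setIntegral_eq_zero_of_ae_eq_zero
    filter_upwards [hae] with x hx hx2
    exact hx ⟨hx2.1, hx2.2.trans_lt hm.2⟩
  rw [h2] at h1
  have := S.inj hm ⟨le_rfl, hL⟩ (sub_eq_zero.1 h1.symm)
  linarith

lemma Setup.green' (S : Setup Ω E U V γ L) : ∃ κ : ℂ, κ ≠ 0 ∧ ∀ p : ℂ → ℂ, ContDiff ℝ 1 p → HasCompactSupport p →
    ∫ z in E, dbar p z = κ * cInt γ L p := by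
  obtain ⟨c, hc⟩ := S.green
  have hpi : (2 * Real.pi : ℂ) ≠ 0 := by
    have := Real.pi_ne_zero
    simp [this]
  have hc0 : c ≠ 0 := by
    rintro rfl
    apply S.not_all
    intro p hp hs
    have := hc p hp hs
    rw [zero_mul] at this
    exact (mul_eq_zero.1 this).resolve_left hpi
  refine ⟨2 * Real.pi / c, div_ne_zero hpi hc0, fun p hp hs => ?_⟩
  have := hc p hp hs
  field_simp
  rw [mul_comm]
  exact this.symm
end

lemma dbar_prod_le {ι : Type*} (s : Finset ι) (g : ι → ℂ → ℂ) (hc : ∀ i, ContDiff ℝ 1 (g i))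
    (h1 : ∀ i z, ‖g i z‖ ≤ 1) (z : ℂ) :
    ‖dbar (fun z => ∏ i ∈ s, g i z) z‖ ≤ ∑ i ∈ s, ‖dbar (g i) z‖ := by
  classical
  have hd : ∀ i, Differentiable ℝ (g i) := fun i => (hc i).differentiable one_ne_zero
  induction s using Finset.induction_on with
  | empty =>
    simp [dbar]
  | insert a s ha ih =>
    have hdp : Differentiable ℝ (fun z => ∏ i ∈ s, g i z) :=
      (contDiff_prod (fun i _ => hc i)).differentiable one_ne_zero
    have hp1 : ‖∏ i ∈ s, g i z‖ ≤ 1 := by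
      rw [norm_prod]
      exact Finset.prod_le_one (fun _ _ => norm_nonneg _) (fun i _ => h1 i z)
    simp only [Finset.prod_insert ha, Finset.sum_insert ha]
    rw [dbar_mul (hd a z) (hdp z)]
    refine (norm_add_le _ _).trans (add_le_add ?_ ?_)
    · rw [norm_mul]; exact mul_le_of_le_one_right (norm_nonneg _) hp1
    · rw [norm_mul]; exact (mul_le_of_le_one_left (norm_nonneg _) (h1 a z)).trans ih

lemma dbar_scale {b : ℂ → ℂ} (hb : Differentiable ℝ b) (r : ℝ) (w z : ℂ) :
    dbar (fun z => b (r • (z - w))) z = r * dbar b (r • (z - w)) := by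
  have h : HasFDerivAt (fun z => b (r • (z - w)))
      ((fderiv ℝ b (r • (z - w))).comp (r • ContinuousLinearMap.id ℝ ℂ)) z := by
    refine HasFDerivAt.comp z (hb _).hasFDerivAt ?_
    exact ((hasFDerivAt_id z).sub_const w).const_smul r
  unfold dbar
  rw [h.fderiv]
  simp
  ring

lemma eta0 {γ : ℝ → ℂ} (hγ : LipschitzWith 1 γ) {L : ℝ} (hL : 0 < L) :
    ∃ C : ℝ, ∀ ε > 0, ∃ η : ℂ → ℂ, ContDiff ℝ 1 η ∧ (∀ z ∈ γ '' Icc 0 L, ∀ᶠ y in 𝓝 z, η y = 0) ∧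
      (∀ z, ‖η z‖ ≤ 1) ∧ Integrable (dbar η) ∧ ∫ z, ‖dbar η z‖ ≤ C ∧
      (∀ z, η z ≠ 1 → ∃ ζ ∈ γ '' Icc 0 L, dist z ζ < ε) := by
  let b₀ : ContDiffBump (0:ℂ) := ⟨2, 3, by norm_num, by norm_num⟩
  let b : ℂ → ℂ := fun z => (b₀ z : ℂ)
  have hb : ContDiff ℝ 1 b := Complex.ofRealCLM.contDiff.comp b₀.contDiff
  have hbs : HasCompactSupport b := b₀.hasCompactSupport.comp_left (g := fun x : ℝ => (x : ℂ)) (by simp)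
  have hbd := hb.differentiable one_ne_zero
  have hbi : Integrable (fun z => ‖dbar b z‖) :=
    ((dbar_continuous hb).integrable_of_hasCompactSupport (dbar_hcs hbs)).norm
  refine ⟨L * ∫ z, ‖dbar b z‖, fun ε hε => ?_⟩
  obtain ⟨n, hn⟩ := exists_nat_gt (3 * L / ε)
  have hn0 : (0:ℝ) < n := lt_of_le_of_lt (by positivity) hn
  set r : ℝ := n / L with hr
  have hr0 : 0 < r := by positivity
  have hnn : 0 < n := by exact_mod_cast hn0
  let w : ℕ → ℂ := fun j => γ (j / r)
  let g : ℕ → ℂ → ℂ := fun j z => 1 - b (r • (z - w j))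
  have hgc : ∀ j, ContDiff ℝ 1 (g j) := fun j => contDiff_const.sub (hb.comp (by fun_prop))
  have hg1 : ∀ j z, ‖g j z‖ ≤ 1 := fun j z => by
    have h1 := b₀.nonneg (x := r • (z - w j))
    have h2 := b₀.le_one (x := r • (z - w j))
    have : g j z = ((1 - b₀ (r • (z - w j)) : ℝ) : ℂ) := by simp [g, b]
    rw [this, Complex.norm_real, Real.norm_eq_abs, abs_le]
    constructor <;> linarith
  have hgd : ∀ j z, ‖dbar (g j) z‖ = r * ‖dbar b (r • (z - w j))‖ := fun j z => by
    have : dbar (g j) z = - (r * dbar b (r • (z - w j))) := by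
      rw [← dbar_scale hbd]
      unfold dbar
      simp only [g]
      rw [fderiv_const_sub]
      simp
      ring
    rw [this, norm_neg, norm_mul, Complex.norm_real, Real.norm_of_nonneg hr0.le]
  have hgi : ∀ j, Integrable (fun z => ‖dbar (g j) z‖) := fun j => by
    simp only [hgd]
    exact ((hbi.comp_smul hr0.ne').comp_sub_right (w j)).const_mul r
  have hgI : ∀ j, ∫ z, ‖dbar (g j) z‖ = r⁻¹ * ∫ z, ‖dbar b z‖ := fun j => by
    simp only [hgd]
    rw [integral_const_mul, integral_sub_right_eq_self (fun z => ‖dbar b (r • z)‖) (w j),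
      Measure.integral_comp_smul volume (fun z => ‖dbar b z‖) r, Complex.finrank_real_complex,
      abs_of_pos (by positivity), smul_eq_mul]
    field_simp
  have hwΓ : ∀ j < n, w j ∈ γ '' Icc 0 L := fun j hj => by
    refine ⟨_, ⟨by positivity, ?_⟩, rfl⟩
    rw [div_le_iff₀ hr0, hr]
    field_simp
    exact_mod_cast hj.le
  have hηc : ContDiff ℝ 1 (fun z => ∏ j ∈ Finset.range n, g j z) := contDiff_prod (fun j _ => hgc j)
  have hle := dbar_prod_le (Finset.range n) g hgc hg1
  have hsi : Integrable (fun z => ∑ j ∈ Finset.range n, ‖dbar (g j) z‖) :=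
    integrable_finsetSum _ (fun j _ => hgi j)
  have hηi : Integrable (dbar (fun z => ∏ j ∈ Finset.range n, g j z)) :=
    hsi.mono' (dbar_continuous hηc).aestronglyMeasurable (Eventually.of_forall hle)
  refine ⟨fun z => ∏ j ∈ Finset.range n, g j z, hηc, ?_, ?_, hηi, ?_, ?_⟩
  · rintro _ ⟨x, hx, rfl⟩
    obtain ⟨j, hj, hxj⟩ : ∃ j < n, |x - j / r| ≤ 1 / r := by
      have hxr : x * r ≤ n := by
        rw [hr]
        have := mul_le_mul_of_nonneg_right hx.2 (show 0 ≤ (n:ℝ) / L by positivity)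
        refine this.trans (le_of_eq ?_)
        field_simp
      have key : ∀ j : ℕ, (j:ℝ) ≤ x * r → x * r ≤ j + 1 → |x - j / r| ≤ 1 / r := fun j h1 h2 => by
        have : x - j / r = (x * r - j) / r := by field_simp
        rw [this, abs_div, abs_of_pos hr0, abs_of_nonneg (by linarith)]
        gcongr
        linarith
      have hxr0 : 0 ≤ x * r := mul_nonneg hx.1 hr0.le
      have f1 := Nat.floor_le hxr0
      have f2 := (Nat.lt_floor_add_one (x * r)).le
      by_cases hlt : ⌊x * r⌋₊ < n
      · exact ⟨_, hlt, key _ f1 f2⟩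
      · have : (n:ℝ) ≤ ⌊x * r⌋₊ := by exact_mod_cast not_lt.1 hlt
        have e : x * r = n := le_antisymm hxr (this.trans f1)
        have e2 : ((n - 1 : ℕ) : ℝ) = n - 1 := by
          rw [Nat.cast_sub hnn]; simp
        refine ⟨n - 1, by omega, key _ ?_ ?_⟩
        · rw [e, e2]; linarith
        · rw [e, e2]; linarith
    have h1 : ‖γ x - w j‖ ≤ 1 / r := by
      have := hγ.dist_le_mul x (j / r)
      rw [dist_eq_norm, Real.dist_eq] at this
      simp only [NNReal.coe_one, one_mul] at this
      exact this.trans hxj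
    have hev : ∀ᶠ y in 𝓝 (γ x), ‖y - w j‖ < 2 / r := by
      have : Continuous fun y : ℂ => ‖y - w j‖ := by fun_prop
      refine this.tendsto (γ x) |>.eventually_lt_const (h1.trans_lt ?_)
      gcongr; norm_num
    filter_upwards [hev] with y hy
    apply Finset.prod_eq_zero (Finset.mem_range.2 hj)
    have : b₀ (r • (y - w j)) = 1 := by
      apply b₀.one_of_mem_closedBall
      rw [mem_closedBall_zero_iff, norm_smul, Real.norm_of_nonneg hr0.le]
      change _ ≤ (2:ℝ)
      rw [lt_div_iff₀ hr0] at hy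
      linarith
    simp only [g, b, this]
    simp
  · intro z
    simp only [norm_prod]
    exact Finset.prod_le_one (fun _ _ => norm_nonneg _) (fun i _ => hg1 i z)
  · refine (integral_mono hηi.norm hsi hle).trans ?_
    rw [integral_finsetSum _ (fun j _ => hgi j)]
    simp only [hgI, Finset.sum_const, Finset.card_range, nsmul_eq_mul]
    rw [hr]
    apply le_of_eq
    field_simp
  · intro z hz
    obtain ⟨j, hj, hj1⟩ : ∃ j < n, g j z ≠ 1 := by
      by_contra hcon
      push Not at hcon
      exact hz (Finset.prod_eq_one fun j hj => hcon j (Finset.mem_range.1 hj))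
    refine ⟨w j, hwΓ j hj, ?_⟩
    by_contra hge
    apply hj1
    have : b₀ (r • (z - w j)) = 0 := by
      apply b₀.zero_of_le_dist
      rw [dist_zero_right, norm_smul, Real.norm_of_nonneg hr0.le]
      change (3:ℝ) ≤ _
      rw [dist_eq_norm, not_lt] at hge
      have h3 : 3 ≤ r * ε := by
        rw [div_lt_iff₀ hε] at hn
        rw [hr, div_mul_eq_mul_div, le_div_iff₀ hL]
        exact hn.le
      nlinarith
    simp only [g, b, this]
    simp

section
variable {Ω E U : Set ℂ} {V : Set (OnePoint ℂ)} {γ : ℝ → ℂ} {L : ℝ}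

lemma Setup.eta (S : Setup Ω E U V γ L) :
    ∃ C : ℝ, ∀ ε > 0, ∃ η : ℂ → ℂ, ContDiff ℝ 1 η ∧ (∀ z ∈ E, ∀ᶠ y in 𝓝 z, η y = 0) ∧
      (∀ z, ‖η z‖ ≤ 1) ∧ Integrable (dbar η) ∧ ∫ z, ‖dbar η z‖ ≤ C ∧
      (∀ z ∉ E, η z ≠ 1 → Metric.infDist z E < ε) := by
  classical
  obtain ⟨C, hC⟩ := eta0 S.lip S.L0
  refine ⟨C, fun ε hε => ?_⟩
  obtain ⟨η₀, h1, h2, h3, h4, h5, h6⟩ := hC ε hε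
  let η : ℂ → ℂ := fun z => if z ∈ U then 0 else η₀ z
  have hin : ∀ z ∈ E, ∀ᶠ y in 𝓝 z, η y = 0 := by
    intro z hz
    rw [S.EU] at hz
    rcases hz with hz | hz
    · filter_upwards [S.Uo.mem_nhds hz] with y hy
      simp [η, hy]
    · filter_upwards [h2 z hz] with y hy
      simp [η, hy]
  have hout : ∀ z ∉ E, η =ᶠ[𝓝 z] η₀ := by
    intro z hz
    filter_upwards [S.Ec.isClosed.isOpen_compl.mem_nhds hz] with y hy
    have : y ∉ U := fun h => hy (S.EU ▸ Or.inl h)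
    simp [η, this]
  have hηc : ContDiff ℝ 1 η := by
    rw [contDiff_iff_contDiffAt]
    intro z
    by_cases hz : z ∈ E
    · exact (contDiffAt_const (c := (0:ℂ))).congr_of_eventuallyEq (hin z hz)
    · exact h1.contDiffAt.congr_of_eventuallyEq (hout z hz)
  have hle : ∀ z, ‖dbar η z‖ ≤ ‖dbar η₀ z‖ := by
    intro z
    by_cases hz : z ∈ E
    · have : dbar η z = dbar (fun _ => 0) z := dbar_congr (hin z hz)
      rw [this]
      simp [dbar]
    · rw [dbar_congr (hout z hz)]
  have hi : Integrable (dbar η) := h4.mono (dbar_continuous hηc).aestronglyMeasurable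
    (Eventually.of_forall hle)
  refine ⟨η, hηc, hin, ?_, hi, (integral_mono hi.norm h4.norm hle).trans h5, ?_⟩
  · intro z
    by_cases hz : z ∈ U
    · simp [η, hz]
    · simp only [η, hz, if_false]; exact h3 z
  · intro z hz hz1
    have : z ∉ U := fun h => hz (S.EU ▸ Or.inl h)
    simp only [η, this, if_false] at hz1
    obtain ⟨ζ, hζ, hd⟩ := h6 z hz1
    exact (Metric.infDist_le_dist_of_mem (S.ΓE hζ)).trans_lt hd
end

structure CutSeq (E : Set ℂ) (C : ℝ) (η : ℕ → ℂ → ℂ) : Prop where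
  smooth : ∀ k, ContDiff ℝ 1 (η k)
  zero : ∀ k, ∀ z ∈ E, ∀ᶠ y in 𝓝 z, η k y = 0
  le1 : ∀ k z, ‖η k z‖ ≤ 1
  bound : ∀ k, ∫ z, ‖dbar (η k) z‖ ≤ C
  one : ∀ k, ∀ z ∉ E, η k z ≠ 1 → Metric.infDist z E < 1 / (k + 1)

lemma mem_cth {E : Set ℂ} (hE : E.Nonempty) {r : ℝ} (hr : 0 ≤ r) {z : ℂ} :
    z ∈ Metric.cthickening r E ↔ Metric.infDist z E ≤ r := by
  rw [Metric.mem_cthickening_iff, Metric.infDist,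
    ENNReal.le_ofReal_iff_toReal_le (Metric.infEDist_ne_top hE) hr]

section
variable {Ω E U : Set ℂ} {V : Set (OnePoint ℂ)} {γ : ℝ → ℂ} {L : ℝ}

lemma Setup.cutSeq (S : Setup Ω E U V γ L) : ∃ C η, CutSeq E C η := by
  obtain ⟨C, hC⟩ := S.eta
  choose η h1 h2 h3 h4 h5 h6 using fun k : ℕ => hC (1 / (k + 1)) (by positivity)
  exact ⟨C, η, h1, h2, h3, h5, h6⟩

lemma CutSeq.dbarE {C : ℝ} {η : ℕ → ℂ → ℂ} (H : CutSeq E C η) (k : ℕ) {z : ℂ} (hz : z ∈ E) :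
    dbar (η k) z = 0 := by
  have : dbar (η k) z = dbar (fun _ => 0) z := dbar_congr (H.zero k z hz)
  rw [this]; simp [dbar]

lemma CutSeq.dbar_far {C : ℝ} {η : ℕ → ℂ → ℂ} (H : CutSeq E C η) 
    (k : ℕ) {z : ℂ} (hz : 1 / (k + 1 : ℝ) < Metric.infDist z E) : dbar (η k) z = 0 := by
  have : dbar (η k) z = dbar (fun _ => 1) z := by
    apply dbar_congr
    have ho : IsOpen {y | 1 / (k + 1 : ℝ) < Metric.infDist y E} :=
      isOpen_lt continuous_const (Metric.continuous_infDist_pt E)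
    filter_upwards [ho.mem_nhds hz] with y hy
    have hy : 1 / (k + 1 : ℝ) < Metric.infDist y E := hy
    have hyE : y ∉ E := fun h => by
      rw [Metric.infDist_zero_of_mem h] at hy
      have : (0:ℝ) < 1 / (k + 1) := by positivity
      linarith
    by_contra hne
    exact absurd (H.one k y hyE hne) (not_lt.2 hy.le)
  rw [this]; simp [dbar]

lemma CutSeq.hcs {C : ℝ} {η : ℕ → ℂ → ℂ} (H : CutSeq E C η) (hE : E.Nonempty) (hEc : IsCompact E)
    (k : ℕ) : HasCompactSupport (dbar (η k)) := by
  apply HasCompactSupport.intro (hEc.cthickening (r := 1 / (k + 1 : ℝ)))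
  intro z hz
  apply H.dbar_far
  rw [mem_cth hE (by positivity), not_le] at hz
  exact hz

lemma CutSeq.lim_one {C : ℝ} {η : ℕ → ℂ → ℂ} (H : CutSeq E C η) (hE : E.Nonempty) (hEc : IsClosed E)
    {z : ℂ} (hz : z ∉ E) : ∀ᶠ k in atTop, η k z = 1 := by
  have hp : 0 < Metric.infDist z E := (hEc.notMem_iff_infDist_pos hE).1 hz
  have := tendsto_one_div_add_atTop_nhds_zero_nat (𝕜 := ℝ)
  filter_upwards [this.eventually_lt_const hp] with k hk
  by_contra hne
  exact absurd (H.one k z hz hne) (not_lt.2 hk.le)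

lemma Setup.Ene (S : Setup Ω E U V γ L) : E.Nonempty := ⟨γ 0, S.ΓE ⟨0, ⟨le_rfl, S.L0.le⟩, rfl⟩⟩

lemma lim_smooth (S : Setup Ω E U V γ L) {C : ℝ} {η : ℕ → ℂ → ℂ} (H : CutSeq E C η)
    {p : ℂ → ℂ} (hp : ContDiff ℝ 1 p) (hps : HasCompactSupport p) :
    Tendsto (fun k => ∫ z, p z * dbar (η k) z) atTop (𝓝 (∫ z in E, dbar p z)) := by
  have hpc := dbar_continuous hp
  have hpi : Integrable (dbar p) := hpc.integrable_of_hasCompactSupport (dbar_hcs hps)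
  have e : ∀ k, ∫ z, p z * dbar (η k) z = - ∫ z, dbar p z * η k z := by
    intro k
    have h0 := integral_dbar_zero (φ := fun z => p z * η k z) (hp.mul (H.smooth k)) hps.mul_right
    have h1 : ∀ z, dbar (fun z => p z * η k z) z = dbar p z * η k z + p z * dbar (η k) z := fun z =>
      dbar_mul (hp.differentiable one_ne_zero z) ((H.smooth k).differentiable one_ne_zero z)
    simp only [h1] at h0
    rw [integral_add] at h0
    · linear_combination h0
    · exact (hpc.mul (H.smooth k).continuous).integrable_of_hasCompactSupport (dbar_hcs hps).mul_right
    · exact (hp.continuous.mul (dbar_continuous (H.smooth k))).integrable_of_hasCompactSupport hps.mul_right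
  simp only [e]
  have h2 : ∫ z in E, dbar p z = - ∫ z in Eᶜ, dbar p z := by
    have := integral_add_compl S.Ec.measurableSet hpi
    rw [integral_dbar_zero hp hps] at this
    linear_combination this
  rw [h2, ← integral_indicator S.Ec.measurableSet.compl]
  apply Tendsto.neg
  apply tendsto_integral_of_dominated_convergence (fun z => ‖dbar p z‖)
  · intro k; exact (hpc.mul (H.smooth k).continuous).aestronglyMeasurable
  · exact hpi.norm
  · intro k
    refine Eventually.of_forall fun z => ?_
    rw [norm_mul]
    exact mul_le_of_le_one_right (norm_nonneg _) (H.le1 k z)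
  · refine Eventually.of_forall fun z => ?_
    apply tendsto_nhds_of_eventually_eq
    by_cases hz : z ∈ E
    · refine Eventually.of_forall fun k => ?_
      rw [(H.zero k z hz).self_of_nhds, indicator_of_notMem (by simpa using hz), mul_zero]
    · filter_upwards [H.lim_one S.Ene S.Ec.isClosed hz] with k hk
      rw [hk, indicator_of_mem (by simpa using hz), mul_one]

lemma lim_cont (S : Setup Ω E U V γ L) {C : ℝ} {η : ℕ → ℂ → ℂ} (H : CutSeq E C η) {κ : ℂ}
    (hκ : ∀ p : ℂ → ℂ, ContDiff ℝ 1 p → HasCompactSupport p → ∫ z in E, dbar p z = κ * cInt γ L p)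
    {ψ : ℂ → ℂ} (hψ : Continuous ψ) :
    Tendsto (fun k => ∫ z, ψ z * dbar (η k) z) atTop (𝓝 (κ * cInt γ L ψ)) := by
  have hC0 : 0 ≤ C := le_trans (by positivity) (H.bound 0)
  rw [Metric.tendsto_atTop']
  intro ε hε
  have hL := S.L0
  set e := ε / (2 * (C + ‖κ‖ * L + 1)) with he
  have hD : 0 < C + ‖κ‖ * L + 1 := by positivity
  have he0 : 0 < e := by positivity
  obtain ⟨p, hp', hps, hpψ⟩ := smooth_approx (S.Ec.cthickening (r := 1)) hψ.continuousOn he0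
  have hp : ContDiff ℝ 1 p := hp'.of_le (by exact_mod_cast le_top)
  have h1 := lim_smooth S H hp hps
  rw [hκ p hp hps, Metric.tendsto_atTop'] at h1
  obtain ⟨N, hN⟩ := h1 (ε / 2) (by positivity)
  refine ⟨N, fun k hk => ?_⟩
  have hk := hN k hk
  rw [dist_eq_norm] at hk ⊢
  have hdc := dbar_continuous (H.smooth k)
  have hds := H.hcs S.Ene S.Ec k
  have i1 : ∀ q : ℂ → ℂ, Continuous q → Integrable (fun z => q z * dbar (η k) z) := fun q hq =>
    (hq.mul hdc).integrable_of_hasCompactSupport hds.mul_left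
  have a1 : ‖(∫ z, ψ z * dbar (η k) z) - ∫ z, p z * dbar (η k) z‖ ≤ e * C := by
    rw [← integral_sub (i1 _ hψ) (i1 _ hp.continuous)]
    have : ∀ z, ‖ψ z * dbar (η k) z - p z * dbar (η k) z‖ ≤ e * ‖dbar (η k) z‖ := by
      intro z
      rw [← sub_mul, norm_mul]
      by_cases hz : z ∈ Metric.cthickening 1 E
      · have := (hpψ z hz).le
        rw [norm_sub_rev] at this
        gcongr
      · rw [mem_cth S.Ene zero_le_one, not_le] at hz
        rw [H.dbar_far k]
        · simp
        · refine lt_of_le_of_lt ?_ hz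
          rw [div_le_one (by positivity)]
          have : (0:ℝ) ≤ k := by positivity
          linarith
    refine (norm_integral_le_of_norm_le ((hdc.integrable_of_hasCompactSupport hds).norm.const_mul e)
      (Eventually.of_forall this)).trans ?_
    rw [integral_const_mul]
    exact mul_le_mul_of_nonneg_left (H.bound k) he0.le
  have a2 : ‖κ * cInt γ L p - κ * cInt γ L ψ‖ ≤ ‖κ‖ * (e * L) := by
    rw [← mul_sub, norm_mul, ← cInt_sub S.L0 S.lip hp.continuous.continuousOn hψ.continuousOn]
    gcongr
    apply cInt_norm_le S.L0 S.lip
    intro z hz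
    exact (hpψ z (Metric.self_subset_cthickening _ (S.ΓE hz))).le
  have a3 : (∫ z, ψ z * dbar (η k) z) - κ * cInt γ L ψ =
      ((∫ z, ψ z * dbar (η k) z) - ∫ z, p z * dbar (η k) z) +
      ((∫ z, p z * dbar (η k) z) - κ * cInt γ L p) + (κ * cInt γ L p - κ * cInt γ L ψ) := by ring
  rw [a3]
  refine (norm_add₃_le).trans_lt ?_
  have a4 : e * C + ‖κ‖ * (e * L) < ε / 2 := by
    have : e * (C + ‖κ‖ * L + 1) = ε / 2 := by rw [he]; field_simp
    nlinarith
  linarith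

lemma lim_on (S : Setup Ω E U V γ L) {C : ℝ} {η : ℕ → ℂ → ℂ} (H : CutSeq E C η) {κ : ℂ}
    (hκ : ∀ p : ℂ → ℂ, ContDiff ℝ 1 p → HasCompactSupport p → ∫ z in E, dbar p z = κ * cInt γ L p)
    {r : ℝ} (hr : 0 < r) {ψ : ℂ → ℂ} (hψ : ContinuousOn ψ (Metric.cthickening r E \ U)) :
    Tendsto (fun k => ∫ z, ψ z * dbar (η k) z) atTop (𝓝 (κ * cInt γ L ψ)) := by
  obtain ⟨Ψ, hΨ, he⟩ := tietze_ext (Metric.isClosed_cthickening.sdiff S.Uo) hψ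
  have h1 := lim_cont S H hκ hΨ
  have hsub : γ '' Icc 0 L ⊆ Metric.cthickening r E \ U := fun z hz =>
    ⟨Metric.self_subset_cthickening _ (S.ΓE hz), disjoint_right.1 S.Ud hz⟩
  rw [cInt_congr S.L0 (he.mono hsub)] at h1
  refine h1.congr' ?_
  have := tendsto_one_div_add_atTop_nhds_zero_nat (𝕜 := ℝ)
  filter_upwards [this.eventually_lt_const hr] with k hk
  congr 1
  ext z
  by_cases hz : z ∈ Metric.cthickening r E \ U
  · rw [he hz]
  · have : dbar (η k) z = 0 := by
      by_cases hzE : z ∈ E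
      · exact H.dbarE k hzE
      · apply H.dbar_far
        have : z ∉ Metric.cthickening r E := fun h => hz ⟨h, fun hU => hzE (S.EU ▸ Or.inl hU)⟩
        rw [mem_cth S.Ene hr.le, not_le] at this
        exact hk.trans this
    rw [this, mul_zero, mul_zero]
end

lemma chi_exists {K O : Set ℂ} (hK : IsCompact K) (hne : K.Nonempty) (hO : IsOpen O) (hKO : K ⊆ O) :
    ∃ r > 0, ∃ χ : ℂ → ℂ, ContDiff ℝ ∞ χ ∧ HasCompactSupport χ ∧ tsupport χ ⊆ O ∧
      ∀ z ∈ Metric.cthickening r K, χ z = 1 := by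
  obtain ⟨r, hr, hsub⟩ := hK.exists_cthickening_subset_open hO hKO
  have hss : Metric.cthickening (r / 2) K ⊆ Metric.thickening r K :=
    Metric.cthickening_subset_thickening' hr (by linarith) K
  obtain ⟨f, hf, -, hsup, hone⟩ := exists_contMDiff_support_eq_eq_one_iff (n := (⊤ : ℕ∞)) (modelWithCornersSelf ℝ ℂ)
    (s := Metric.thickening r K) (t := Metric.cthickening (r / 2) K) Metric.isOpen_thickening
    Metric.isClosed_cthickening hss
  have hfd : ContDiff ℝ ∞ f := contMDiff_iff_contDiff.1 hf
  have hts : tsupport (fun z => (f z : ℂ)) ⊆ Metric.cthickening r K := by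
    refine closure_minimal ?_ Metric.isClosed_cthickening
    intro z hz
    have : z ∈ Function.support f := fun h => hz (by simp [h])
    rw [hsup] at this
    exact Metric.thickening_subset_cthickening _ _ this
  refine ⟨r / 2, by positivity, fun z => (f z : ℂ), Complex.ofRealCLM.contDiff.comp hfd, ?_,
    hts.trans hsub, ?_⟩
  · exact (hK.cthickening (r := r)).of_isClosed_subset (isClosed_tsupport _) hts
  · intro z hz
    have := (hone z).1 hz
    simp [this]

lemma holo_contDiffAt {H : ℂ → ℂ} {Ω : Set ℂ} (hΩ : IsOpen Ω) (hH : DifferentiableOn ℂ H Ω) {z : ℂ}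
    (hz : z ∈ Ω) (n : ℕ∞ω) : ContDiffAt ℝ n H z :=
  ((hH.analyticAt (hΩ.mem_nhds hz)).contDiffAt (n := n)).restrict_scalars ℝ

lemma glue_contDiff {H u : ℂ → ℂ} {Ω : Set ℂ} (hΩ : IsOpen Ω) (hH : DifferentiableOn ℂ H Ω)
    {n : ℕ∞ω} (hu : ContDiff ℝ n u) (hs : tsupport u ⊆ Ω) : ContDiff ℝ n (fun z => H z * u z) := by
  rw [contDiff_iff_contDiffAt]
  intro z
  by_cases hz : z ∈ tsupport u
  · exact (holo_contDiffAt hΩ hH (hs hz) n).mul hu.contDiffAt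
  · refine (contDiffAt_const (c := (0:ℂ))).congr_of_eventuallyEq ?_
    rw [notMem_tsupport_iff_eventuallyEq] at hz
    filter_upwards [hz] with y hy
    simp [hy]

lemma dbar_contDiff {φ : ℂ → ℂ} (h : ContDiff ℝ ∞ φ) : ContDiff ℝ ∞ (dbar φ) := by
  have h1 : ContDiff ℝ ∞ (fderiv ℝ φ) := h.fderiv_right (m := ∞) (by simp)
  unfold dbar
  exact (h1.clm_apply contDiff_const).add (contDiff_const.mul (h1.clm_apply contDiff_const))

section
variable {Ω E U : Set ℂ} {V : Set (OnePoint ℂ)} {γ : ℝ → ℂ} {L : ℝ}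

structure Chi (Ω E : Set ℂ) (r : ℝ) (χ : ℂ → ℂ) : Prop where
  r0 : 0 < r
  smooth : ContDiff ℝ ∞ χ
  hcs : HasCompactSupport χ
  sub : tsupport χ ⊆ Ω ∪ E
  one : ∀ z ∈ Metric.cthickening r E, χ z = 1

lemma Setup.chi (S : Setup Ω E U V γ L) : ∃ r χ, Chi Ω E r χ := by
  obtain ⟨r, h1, χ, h2, h3, h4, h5⟩ := chi_exists S.Ec S.Ene S.Go subset_union_right
  exact ⟨r, χ, h1, h2, h3, h4, h5⟩

lemma Chi.dbar_near {r : ℝ} {χ : ℂ → ℂ} (X : Chi Ω E r χ) {z : ℂ} (hz : z ∈ Metric.thickening r E) :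
    dbar χ z = 0 := by
  have : dbar χ z = dbar (fun _ => 1) z := by
    apply dbar_congr
    filter_upwards [Metric.isOpen_thickening.mem_nhds hz] with y hy
    exact X.one y (Metric.thickening_subset_cthickening _ _ hy)
  rw [this]; simp [dbar]

lemma Chi.dbar_sub {r : ℝ} {χ : ℂ → ℂ} (X : Chi Ω E r χ) : tsupport (dbar χ) ⊆ Ω := by
  intro z hz
  refine (X.sub (dbar_tsupport _ hz)).resolve_right fun hE => ?_
  rw [← not_not (a := z ∈ tsupport (dbar χ))] at hz
  apply hz
  rw [notMem_tsupport_iff_eventuallyEq]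
  filter_upwards [Metric.isOpen_thickening.mem_nhds (Metric.self_subset_thickening X.r0 E hE)] with y hy
  exact X.dbar_near hy

lemma w_props (S : Setup Ω E U V γ L) {C : ℝ} {η : ℕ → ℂ → ℂ} (Hη : CutSeq E C η)
    {r : ℝ} {χ : ℂ → ℂ} (X : Chi Ω E r χ) {H : ℂ → ℂ} (hH : DifferentiableOn ℂ H Ω) :
    ∀ᶠ k in atTop, ContDiff ℝ 1 (fun z => χ z * η k z * H z) ∧
      HasCompactSupport (fun z => χ z * η k z * H z) ∧
      ∀ z, dbar (fun z => χ z * η k z * H z) z = H z * dbar χ z + H z * dbar (η k) z := by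
  have := tendsto_one_div_add_atTop_nhds_zero_nat (𝕜 := ℝ)
  filter_upwards [this.eventually_lt_const X.r0] with k hk
  have hχ1 : ContDiff ℝ 1 χ := X.smooth.of_le (by exact_mod_cast le_top)
  have hE0 : ∀ z ∈ E, (fun z => χ z * η k z * H z) =ᶠ[𝓝 z] fun _ => 0 := fun z hz => by
    filter_upwards [Hη.zero k z hz] with y hy
    simp [hy]
  have hG0 : ∀ z ∉ tsupport χ, (fun z => χ z * η k z * H z) =ᶠ[𝓝 z] fun _ => 0 := fun z hz => by
    rw [notMem_tsupport_iff_eventuallyEq] at hz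
    filter_upwards [hz] with y hy
    simp [hy]
  have hfarχ : ∀ z, z ∉ Metric.cthickening r E → dbar (η k) z = 0 := fun z hz => by
    rw [mem_cth S.Ene X.r0.le, not_le] at hz
    exact Hη.dbar_far k (hk.trans hz)
  refine ⟨?_, ?_, ?_⟩
  · rw [contDiff_iff_contDiffAt]
    intro z
    by_cases hz : z ∈ E
    · exact (contDiffAt_const (c := (0:ℂ))).congr_of_eventuallyEq (hE0 z hz)
    by_cases hz2 : z ∈ tsupport χ
    · have hzΩ : z ∈ Ω := (X.sub hz2).resolve_right hz
      exact (hχ1.contDiffAt.mul (Hη.smooth k).contDiffAt).mul (holo_contDiffAt S.Ωo hH hzΩ 1)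
    · exact (contDiffAt_const (c := (0:ℂ))).congr_of_eventuallyEq (hG0 z hz2)
  · exact X.hcs.mul_right.mul_right
  · intro z
    by_cases hz : z ∈ E
    · rw [dbar_congr (hE0 z hz), X.dbar_near (Metric.self_subset_thickening X.r0 E hz), Hη.dbarE k hz]
      simp [dbar]
    by_cases hz2 : z ∈ tsupport χ
    · have hzΩ : z ∈ Ω := (X.sub hz2).resolve_right hz
      have hHd : DifferentiableAt ℂ H z := hH.differentiableAt (S.Ωo.mem_nhds hzΩ)
      have d1 := hχ1.differentiable one_ne_zero z
      have d2 := (Hη.smooth k).differentiable one_ne_zero z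
      rw [dbar_mul (p := fun z => χ z * η k z) (d1.mul d2) (hHd.restrictScalars ℝ), dbar_mul d1 d2,
        dbar_holo hHd]
      have e1 : dbar χ z * η k z = dbar χ z := by
        by_cases hzt : z ∈ Metric.thickening r E
        · rw [X.dbar_near hzt, zero_mul]
        · have : η k z = 1 := by
            by_contra hne
            apply hzt
            rw [Metric.mem_thickening_iff_infEDist_lt, ENNReal.lt_ofReal_iff_toReal_lt (Metric.infEDist_ne_top S.Ene)]
            exact (Hη.one k z hz hne).trans hk
          rw [this, mul_one]
      have e2 : χ z * dbar (η k) z = dbar (η k) z := by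
        by_cases hzt : z ∈ Metric.cthickening r E
        · rw [X.one z hzt, one_mul]
        · rw [hfarχ z hzt, mul_zero]
      rw [e1, e2]; ring
    · have h1 : dbar χ z = 0 := by
        have := notMem_subset (dbar_tsupport χ) hz2
        exact image_eq_zero_of_notMem_tsupport this
      have h2 : dbar (η k) z = 0 := by
        apply hfarχ
        intro h
        have := X.one z h
        rw [image_eq_zero_of_notMem_tsupport hz2] at this
        exact zero_ne_one this
      rw [dbar_congr (hG0 z hz2), h1, h2]
      simp [dbar]

lemma Chi.T_cont (S : Setup Ω E U V γ L) {r : ℝ} {χ : ℂ → ℂ} (X : Chi Ω E r χ) {H : ℂ → ℂ}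
    (hH : DifferentiableOn ℂ H Ω) :
    Continuous (fun z => H z * dbar χ z) ∧ HasCompactSupport (fun z => H z * dbar χ z) :=
  ⟨(glue_contDiff S.Ωo hH (dbar_contDiff X.smooth) X.dbar_sub).continuous, (dbar_hcs X.hcs).mul_left⟩

lemma Chi.cth_sub (S : Setup Ω E U V γ L) {r : ℝ} {χ : ℂ → ℂ} (X : Chi Ω E r χ) :
    Metric.cthickening r E \ U ⊆ Ω ∪ γ '' Icc 0 L := by
  rintro z ⟨hz, hzU⟩
  have : z ∈ tsupport χ := subset_tsupport _ (by simp [X.one z hz])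
  rcases X.sub this with h | h
  · exact Or.inl h
  · rw [S.EU] at h; exact Or.inr (h.resolve_left hzU)

lemma K1 (S : Setup Ω E U V γ L) {C : ℝ} {η : ℕ → ℂ → ℂ} (Hη : CutSeq E C η) {κ : ℂ}
    (hκ : ∀ p : ℂ → ℂ, ContDiff ℝ 1 p → HasCompactSupport p → ∫ z in E, dbar p z = κ * cInt γ L p)
    {r : ℝ} {χ : ℂ → ℂ} (X : Chi Ω E r χ) {H : ℂ → ℂ} (hH : DifferentiableOn ℂ H Ω)
    (hHc : ContinuousOn H (Ω ∪ γ '' Icc 0 L)) :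
    ∫ z, H z * dbar χ z = - (κ * cInt γ L H) := by
  have h1 := lim_on S Hη hκ X.r0 (hHc.mono (X.cth_sub S))
  have hT := X.T_cont S hH
  have iT : Integrable (fun z => H z * dbar χ z) := hT.1.integrable_of_hasCompactSupport hT.2
  have h2 : (fun k => ∫ z, H z * dbar (η k) z) =ᶠ[atTop] fun _ => - ∫ z, H z * dbar χ z := by
    filter_upwards [w_props S Hη X hH] with k hk
    have h0 := integral_dbar_zero hk.1 hk.2.1
    have iw : Integrable (dbar (fun z => χ z * η k z * H z)) := (dbar_continuous hk.1).integrable_of_hasCompactSupport (dbar_hcs hk.2.1)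
    have ie : Integrable (fun z => H z * dbar (η k) z) := by
      refine (iw.sub iT).congr (Eventually.of_forall fun z => ?_)
      simp only [Pi.sub_apply, hk.2.2 z]; ring
    simp only [hk.2.2] at h0
    rw [integral_add iT ie] at h0
    linear_combination h0
  have := tendsto_nhds_unique (h1.congr' h2) tendsto_const_nhds
  linear_combination this

lemma K2 (S : Setup Ω E U V γ L) {C : ℝ} {η : ℕ → ℂ → ℂ} (Hη : CutSeq E C η) {κ : ℂ}
    (hκ : ∀ p : ℂ → ℂ, ContDiff ℝ 1 p → HasCompactSupport p → ∫ z in E, dbar p z = κ * cInt γ L p)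
    {r : ℝ} {χ : ℂ → ℂ} (X : Chi Ω E r χ) {H : ℂ → ℂ} (hH : DifferentiableOn ℂ H Ω)
    (hHc : ContinuousOn H (Ω ∪ γ '' Icc 0 L)) {z : ℂ} (hz : z ∈ Ω) :
    -(2 * Real.pi) * (χ z * H z) = (∫ ζ, H ζ * dbar χ ζ / (ζ - z)) + κ * cInt γ L (fun ζ => H ζ / (ζ - z)) := by
  have hzE : z ∉ E := disjoint_left.1 S.dis hz
  have hp : 0 < Metric.infDist z E := (S.Ec.isClosed.notMem_iff_infDist_pos S.Ene).1 hzE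
  set r' := min r (Metric.infDist z E / 2) with hr'
  have hr'0 : 0 < r' := lt_min X.r0 (by positivity)
  have hc : ContinuousOn (fun ζ => H ζ / (ζ - z)) (Metric.cthickening r' E \ U) := by
    refine ContinuousOn.div (hHc.mono ((sdiff_subset_sdiff_left
      (Metric.cthickening_mono (min_le_left _ _) _)).trans (X.cth_sub S))) (by fun_prop) ?_
    rintro ζ ⟨hζ, -⟩ h0
    rw [sub_eq_zero] at h0
    rw [h0, mem_cth S.Ene hr'0.le] at hζ
    have := min_le_right r (Metric.infDist z E / 2)
    linarith
  have h1 := lim_on S Hη hκ hr'0 hc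
  have hT := X.T_cont S hH
  have iT : Integrable (fun z => H z * dbar χ z) := hT.1.integrable_of_hasCompactSupport hT.2
  obtain ⟨B, hB⟩ := hT.2.exists_bound_of_continuous hT.1
  have iTz := kernel_integrable hB iT z
  have h2 : (fun k => ∫ ζ, H ζ / (ζ - z) * dbar (η k) ζ) =ᶠ[atTop]
      fun _ => -(2 * Real.pi) * (χ z * H z) - ∫ ζ, H ζ * dbar χ ζ / (ζ - z) := by
    filter_upwards [w_props S Hη X hH, Hη.lim_one S.Ene S.Ec.isClosed hzE] with k hk hk1
    have h0 := cauchy_pompeiu hk.1 hk.2.1 z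
    have wc := dbar_continuous hk.1
    have ws := dbar_hcs hk.2.1
    have iw : Integrable (dbar (fun z => χ z * η k z * H z)) := wc.integrable_of_hasCompactSupport ws
    obtain ⟨B', hB'⟩ := ws.exists_bound_of_continuous wc
    have iwz := kernel_integrable hB' iw z
    have ie : Integrable (fun ζ => H ζ / (ζ - z) * dbar (η k) ζ) := by
      refine (iwz.sub iTz).congr (Eventually.of_forall fun ζ => ?_)
      simp only [Pi.sub_apply, hk.2.2 ζ]; ring
    have e : ∀ ζ, dbar (fun z => χ z * η k z * H z) ζ / (ζ - z) =
        H ζ * dbar χ ζ / (ζ - z) + H ζ / (ζ - z) * dbar (η k) ζ := fun ζ => by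
      rw [hk.2.2 ζ]; ring
    simp only [e] at h0
    rw [integral_add iTz ie, hk1, mul_one] at h0
    linear_combination h0
  have := tendsto_nhds_unique (h1.congr' h2) tendsto_const_nhds
  linear_combination -this
end

section
variable {Ω E U : Set ℂ} {V : Set (OnePoint ℂ)} {γ : ℝ → ℂ} {L : ℝ}

lemma Chi.fd_sub {r : ℝ} {χ : ℂ → ℂ} (X : Chi Ω E r χ) (v : ℂ) :
    tsupport (fun z => fderiv ℝ χ z v) ⊆ Ω := by
  intro z hz
  have h1 : tsupport (fun z => fderiv ℝ χ z v) ⊆ tsupport χ := tsupport_fderiv_apply_subset ℝ v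
  refine (X.sub (h1 hz)).resolve_right fun hE => ?_
  rw [← not_not (a := z ∈ tsupport (fun z => fderiv ℝ χ z v))] at hz
  apply hz
  rw [notMem_tsupport_iff_eventuallyEq]
  filter_upwards [Metric.isOpen_thickening.mem_nhds (Metric.self_subset_thickening X.r0 E hE)] with y hy
  have : χ =ᶠ[𝓝 y] fun _ => 1 := by
    filter_upwards [Metric.isOpen_thickening.mem_nhds hy] with x hx
    exact X.one x (Metric.thickening_subset_cthickening _ _ hx)
  simp [this.fderiv_eq]

lemma Chi.deriv_zero {r : ℝ} {χ : ℂ → ℂ} (X : Chi Ω E r χ) (hΩ : IsOpen Ω) {F : ℂ → ℂ}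
    (hF : DifferentiableOn ℂ F Ω) : ∫ z, deriv F z * dbar χ z = 0 := by
  have hfd : ContDiff ℝ ∞ (fderiv ℝ χ) := X.smooth.fderiv_right (m := ∞) (by simp)
  have hv : ∀ v : ℂ, ContDiff ℝ ∞ (fun z => fderiv ℝ χ z v) := fun v => hfd.clm_apply contDiff_const
  have hp : ∀ v : ℂ, ContDiff ℝ 1 (fun z => F z * fderiv ℝ χ z v) := fun v =>
    (glue_contDiff hΩ hF (hv v) (X.fd_sub v)).of_le (by exact_mod_cast le_top)
  have hs : ∀ v : ℂ, HasCompactSupport (fun z => F z * fderiv ℝ χ z v) := fun v =>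
    (X.hcs.fderiv_apply ℝ v).mul_left
  have key : ∀ z, deriv F z * dbar χ z = -Complex.I * fderiv ℝ (fun z => F z * fderiv ℝ χ z 1) z Complex.I
      + Complex.I * fderiv ℝ (fun z => F z * fderiv ℝ χ z Complex.I) z 1 := by
    intro z
    by_cases hz : z ∈ Ω
    · have hFd : DifferentiableAt ℂ F z := hF.differentiableAt (hΩ.mem_nhds hz)
      have dF : ∀ v, fderiv ℝ F z v = v * deriv F z := fun v => by
        rw [hFd.fderiv_restrictScalars ℝ, ContinuousLinearMap.coe_restrictScalars', fderiv_eq_smul_deriv]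
        simp
      have hd : ∀ v, DifferentiableAt ℝ (fun z => fderiv ℝ χ z v) z := fun v =>
        (hv v).differentiable (by simp) z
      have dfd : DifferentiableAt ℝ (fderiv ℝ χ) z := hfd.differentiable (by simp) z
      have d2 : ∀ v w, fderiv ℝ (fun z => fderiv ℝ χ z v) z w = fderiv ℝ (fderiv ℝ χ) z w v := fun v w => by
        rw [fderiv_clm_apply dfd (by fun_prop)]
        simp
      have sy := (X.smooth.contDiffAt (x := z)).isSymmSndFDerivAt (by simp only [minSmoothness_of_isRCLikeNormedField]; exact WithTop.coe_le_coe.2 (le_top : (2:ℕ∞) ≤ ⊤)) Complex.I 1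
      rw [fderiv_fun_mul (hFd.restrictScalars ℝ) (hd _), fderiv_fun_mul (hFd.restrictScalars ℝ) (hd _)]
      simp only [add_apply, smul_apply, dF, d2, smul_eq_mul, dbar]
      rw [sy]
      linear_combination (deriv F z * fderiv ℝ χ z 1) * Complex.I_mul_I
    · have h1 : dbar χ z = 0 := image_eq_zero_of_notMem_tsupport (fun h => hz (X.dbar_sub h))
      have h2 : ∀ v, fderiv ℝ (fun z => F z * fderiv ℝ χ z v) z = 0 := fun v => by
        have : (fun z => F z * fderiv ℝ χ z v) =ᶠ[𝓝 z] fun _ => 0 := by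
          have := notMem_tsupport_iff_eventuallyEq.1 (fun h => hz (X.fd_sub v h))
          filter_upwards [this] with y hy
          simp [hy]
        rw [this.fderiv_eq]; simp
      simp [h1, h2]
  have hi : ∀ v w : ℂ, Integrable (fun z => fderiv ℝ (fun z => F z * fderiv ℝ χ z v) z w) := fun v w =>
    (((hp v).continuous_fderiv one_ne_zero).clm_apply continuous_const).integrable_of_hasCompactSupport
      ((hs v).fderiv_apply ℝ w)
  simp_rw [key]
  rw [integral_add ((hi _ _).const_mul _) ((hi _ _).const_mul _), integral_const_mul, integral_const_mul,
    integral_fderiv_zero (hp _) (hs _), integral_fderiv_zero (hp _) (hs _)]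
  simp

lemma iter_holo (hΩ : IsOpen Ω) {φ : ℂ → ℂ} (hφ : DifferentiableOn ℂ φ Ω) (n : ℕ) :
    DifferentiableOn ℂ (iteratedDeriv n φ) Ω := by
  induction n with
  | zero => simpa using hφ
  | succ n ih => rw [iteratedDeriv_succ]; exact ih.deriv hΩ

lemma poly_prim (hΩ : IsOpen Ω) {φ : ℂ → ℂ} (hφ : DifferentiableOn ℂ φ Ω) (n : ℕ) (P : ℂ[X])
    (hP : P.natDegree ≤ n) : ∃ F : ℂ → ℂ, DifferentiableOn ℂ F Ω ∧
      ∀ z ∈ Ω, deriv F z = P.eval z * iteratedDeriv (n + 1) φ z := by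
  induction n generalizing P with
  | zero =>
    have : P.derivative = 0 := derivative_of_natDegree_zero (by omega)
    refine ⟨fun z => P.eval z * φ z, P.differentiable.differentiableOn.mul hφ, fun z hz => ?_⟩
    have hd := hφ.differentiableAt (hΩ.mem_nhds hz)
    rw [deriv_fun_mul P.differentiable.differentiableAt hd]
    simp [this, iteratedDeriv_one]
  | succ n ih =>
    obtain ⟨F, hF, hF'⟩ := ih P.derivative (by have := natDegree_derivative_le P; omega)
    have h1 := iter_holo hΩ hφ (n + 1)
    refine ⟨fun z => P.eval z * iteratedDeriv (n + 1) φ z - F z,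
      (P.differentiable.differentiableOn.mul h1).sub hF, fun z hz => ?_⟩
    have hd := h1.differentiableAt (hΩ.mem_nhds hz)
    rw [deriv_fun_sub (P.differentiable.differentiableAt.fun_mul hd) (hF.differentiableAt (hΩ.mem_nhds hz)), hF' z hz,
      deriv_fun_mul P.differentiable.differentiableAt hd, iteratedDeriv_succ (n := n + 1)]
    simp

lemma i_ii (S : Setup Ω E U V γ L) {f : ℂ → ℂ} (hf : DifferentiableOn ℂ f Ω)
    (hfc : ContinuousOn f (Ω ∪ γ '' Icc 0 L))
    (hi : ∀ n : ℕ, 1 ≤ n → ∃ φ : ℂ → ℂ, DifferentiableOn ℂ φ Ω ∧ ∀ z ∈ Ω, iteratedDeriv n φ z = f z)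
    (P : ℂ[X]) : cInt γ L (fun z => P.eval z * f z) = 0 := by
  obtain ⟨C, η, Hη⟩ := S.cutSeq
  obtain ⟨κ, hκ0, hκ⟩ := S.green'
  obtain ⟨r, χ, X⟩ := S.chi
  obtain ⟨φ, hφ, hφf⟩ := hi (P.natDegree + 1) (by omega)
  obtain ⟨F, hF, hF'⟩ := poly_prim S.Ωo hφ _ P le_rfl
  have h1 := K1 S Hη hκ X (H := fun z => P.eval z * f z) (P.differentiable.differentiableOn.mul hf)
    (P.continuous.continuousOn.mul hfc)
  have h2 := X.deriv_zero S.Ωo hF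
  have h3 : ∀ z, P.eval z * f z * dbar χ z = deriv F z * dbar χ z := fun z => by
    by_cases hz : z ∈ Ω
    · rw [hF' z hz, hφf z hz]
    · have h1 : dbar χ z = 0 := image_eq_zero_of_notMem_tsupport (fun h => hz (X.dbar_sub h))
      simp [h1]
  simp only [h3, h2] at h1
  simpa [hκ0] using h1.symm
end

lemma cauchy_holo {T : ℂ → ℂ} (hc : Continuous T) (hs : HasCompactSupport T) :
    DifferentiableOn ℂ (fun z => ∫ ζ, T ζ / (ζ - z)) (tsupport T)ᶜ := by
  intro z₀ hz₀
  apply DifferentiableAt.differentiableWithinAt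
  obtain ⟨d, hd, hb⟩ := Metric.isOpen_iff.1 (isClosed_tsupport T).isOpen_compl z₀ hz₀
  have hi : Integrable T := hc.integrable_of_hasCompactSupport hs
  have far : ∀ z ∈ Metric.ball z₀ (d / 2), ∀ ζ, T ζ ≠ 0 → d / 2 ≤ ‖ζ - z‖ := by
    intro z hz ζ hζ
    have h1 : ζ ∉ Metric.ball z₀ d := fun h => hb h (subset_tsupport _ hζ)
    rw [Metric.mem_ball, dist_eq_norm] at hz
    rw [Metric.mem_ball, dist_eq_norm, not_lt] at h1
    have := norm_sub_le_norm_sub_add_norm_sub ζ z z₀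
    linarith
  have hm : ∀ z, AEStronglyMeasurable (fun ζ => T ζ / (ζ - z)) := fun z => by
    have : Measurable fun ζ : ℂ => T ζ / (ζ - z) := hc.measurable.div (by fun_prop)
    exact this.aestronglyMeasurable
  refine (hasDerivAt_integral_of_dominated_loc_of_deriv_le (μ := volume) (F := fun z ζ => T ζ / (ζ - z))
    (F' := fun z ζ => T ζ / (ζ - z) ^ 2) (bound := fun ζ => ‖T ζ‖ / (d / 2) ^ 2)
    (Metric.ball_mem_nhds z₀ (half_pos hd)) (Eventually.of_forall hm) ?_ ?_ ?_ (hi.norm.div_const _) ?_).2.differentiableAt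
  · obtain ⟨B, hB⟩ := hs.exists_bound_of_continuous hc
    exact kernel_integrable hB hi z₀
  · have : Measurable fun ζ : ℂ => T ζ / (ζ - z₀) ^ 2 := hc.measurable.div (by fun_prop)
    exact this.aestronglyMeasurable
  · refine Eventually.of_forall fun ζ z hz => ?_
    by_cases h0 : T ζ = 0
    · simp [h0]
    rw [norm_div, norm_pow]
    have := far z hz ζ h0
    gcongr
  · refine Eventually.of_forall fun ζ z hz => ?_
    by_cases h0 : T ζ = 0
    · simp only [h0, zero_div]; exact hasDerivAt_const _ _
    have h1 := far z hz ζ h0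
    have h2 : ζ - z ≠ 0 := fun h => by rw [h, norm_zero] at h1; linarith
    have h3 : HasDerivAt (fun z => ζ - z) (-1) z := (hasDerivAt_id z).const_sub ζ
    have := (hasDerivAt_const z (T ζ)).fun_div h3 h2
    convert! this using 1
    simp

section
variable {Ω E U : Set ℂ} {V : Set (OnePoint ℂ)} {γ : ℝ → ℂ} {L : ℝ}

lemma ii_iii (S : Setup Ω E U V γ L) {f : ℂ → ℂ} (hf : DifferentiableOn ℂ f Ω)
    (hfc : ContinuousOn f (Ω ∪ γ '' Icc 0 L))
    (hi : ∀ P : ℂ[X], cInt γ L (fun z => P.eval z * f z) = 0) :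
    ∃ g : ℂ → ℂ, DifferentiableOn ℂ g (Ω ∪ E) ∧ EqOn g f Ω := by
  classical
  obtain ⟨C, η, Hη⟩ := S.cutSeq
  obtain ⟨κ, hκ0, hκ⟩ := S.green'
  obtain ⟨r, χ, X⟩ := S.chi
  have hT := X.T_cont S hf
  have hts : tsupport (fun z => f z * dbar χ z) ⊆ Ω := (tsupport_mul_subset_right).trans X.dbar_sub
  have hh := (cauchy_holo hT.1 hT.2).const_mul (-(2 * (Real.pi : ℂ)))⁻¹
  set h : ℂ → ℂ := fun z => (-(2 * (Real.pi : ℂ)))⁻¹ * ∫ ζ, f ζ * dbar χ ζ / (ζ - z) with hdef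
  have hpi : (-(2 * (Real.pi : ℂ))) ≠ 0 := by
    simp [Real.pi_ne_zero]
  have key : ∀ z ∈ Ω, χ z * f z = h z := fun z hz => by
    have h1 := K2 S Hη hκ X hf hfc hz
    rw [S.vanish (hfc.mono subset_union_right) hi (disjoint_left.1 S.dis hz), mul_zero, add_zero] at h1
    rw [hdef]
    simp only
    rw [← h1, inv_mul_cancel_left₀ hpi]
  refine ⟨fun z => if z ∈ Ω then f z else h z, ?_, fun z hz => if_pos hz⟩
  intro z hz
  apply DifferentiableAt.differentiableWithinAt
  by_cases hzΩ : z ∈ Ω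
  · refine (hf.differentiableAt (S.Ωo.mem_nhds hzΩ)).congr_of_eventuallyEq ?_
    filter_upwards [S.Ωo.mem_nhds hzΩ] with y hy
    exact if_pos hy
  · have hE : z ∈ E := hz.resolve_left hzΩ
    have : DifferentiableAt ℂ h z := hh.differentiableAt
      ((isClosed_tsupport _).isOpen_compl.mem_nhds fun h => hzΩ (hts h))
    refine this.congr_of_eventuallyEq ?_
    filter_upwards [Metric.isOpen_thickening.mem_nhds (Metric.self_subset_thickening X.r0 E hE)] with y hy
    have h1 := X.one y (Metric.thickening_subset_cthickening _ _ hy)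
    by_cases hy : y ∈ Ω
    · rw [if_pos hy, ← key y hy, h1, one_mul]
    · rw [if_neg hy]
end

lemma int_mem_poly {K : Set ℂ} (hK : IsCompact K) (hub : ∀ z ∉ K, ¬ Bornology.IsBounded (connectedComponentIn Kᶜ z))
    {T : ℂ → ℂ} (hc : Continuous T) (hs : HasCompactSupport T) (hd : Disjoint (tsupport T) K)
    {ε : ℝ} (hε : 0 < ε) : ∃ P : ℂ[X], ∀ z ∈ K, ‖(∫ ζ, T ζ / (ζ - z)) - P.eval z‖ < ε := by
  have hKs : CompactSpace K := isCompact_iff_compactSpace.1 hK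
  have hjc : Continuous (fun p : ℂ × K => T p.1 / (p.1 - (p.2 : ℂ))) := by
    rw [continuous_iff_continuousAt]
    rintro ⟨ζ, z⟩
    by_cases hζ : ζ ∈ tsupport T
    · refine ContinuousAt.div (by fun_prop) (by fun_prop) ?_
      exact sub_ne_zero.2 fun h => disjoint_left.1 hd hζ (by rw [show ζ = (z : ℂ) from h]; exact z.2)
    · refine (continuousAt_const (y := (0:ℂ))).congr ?_
      have h1 : ∀ᶠ x in 𝓝 ζ, T x = 0 := notMem_tsupport_iff_eventuallyEq.1 hζ
      have h2 : ∀ᶠ p : ℂ × K in 𝓝 (ζ, z), T p.1 = 0 := (continuous_fst.tendsto (ζ, z)).eventually h1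
      filter_upwards [h2] with p hp
      simp [hp]
  let Φ : C(ℂ, C(K, ℂ)) := ContinuousMap.curry ⟨_, hjc⟩
  have hΦ : ∀ ζ (z : K), Φ ζ z = T ζ / (ζ - (z : ℂ)) := fun _ _ => rfl
  let S : Submodule ℂ C(K, ℂ) := Subalgebra.toSubmodule (polynomialFunctions K).topologicalClosure
  have hScl : IsClosed (S : Set C(K, ℂ)) := (polynomialFunctions K).isClosed_topologicalClosure
  have : CompleteSpace S := hScl.completeSpace_coe
  have hmem : ∀ ζ, Φ ζ ∈ S := fun ζ => by
    by_cases hζ : T ζ = 0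
    · have : Φ ζ = 0 := by ext z; simp [hΦ, hζ]
      rw [this]; exact S.zero_mem
    · have hζK : ζ ∉ K := fun h => disjoint_left.1 hd (subset_tsupport _ hζ) h
      have hcont : Continuous (fun z : K => 1 / ((z : ℂ) - ζ)) := by
        apply Continuous.div continuous_const (by fun_prop)
        intro z; exact sub_ne_zero.2 fun h => hζK (h ▸ z.2)
      have h1 := pole_mem hKs hζK (hub ζ hζK) ⟨_, hcont⟩ (fun _ => rfl)
      have h2 : Φ ζ = (-T ζ) • (⟨_, hcont⟩ : C(K, ℂ)) := by
        ext z
        rw [hΦ]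
        simp only [ContinuousMap.coe_smul, ContinuousMap.coe_mk, Pi.smul_apply, smul_eq_mul]
        rw [← neg_sub (z : ℂ) ζ, div_neg]; ring
      rw [h2]
      exact S.smul_mem _ h1
  let Ψ : ℂ → S := fun ζ => ⟨Φ ζ, hmem ζ⟩
  have hΨc : Continuous Ψ := Φ.continuous.subtype_mk _
  have hΨs : HasCompactSupport Ψ := by
    refine hs.mono fun ζ hζ h0 => hζ ?_
    apply Subtype.ext
    change Φ ζ = 0
    ext z; simp [hΦ, h0]
  have hΨi : Integrable Ψ := hΨc.integrable_of_hasCompactSupport hΨs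
  have hev : ∀ z : K, ((∫ ζ, Ψ ζ : S) : C(K, ℂ)) z = ∫ ζ, T ζ / (ζ - (z : ℂ)) := fun z => by
    have := ((ContinuousMap.evalCLM ℂ z).comp S.subtypeL).integral_comp_comm hΨi
    exact this.symm
  obtain ⟨P, hP⟩ := mem_closure_poly hKs (g := ((∫ ζ, Ψ ζ : S) : C(K, ℂ))) (∫ ζ, Ψ ζ : S).2 hε
  refine ⟨P, fun z hz => ?_⟩
  have := hP ⟨z, hz⟩
  rwa [hev] at this

lemma runge {K G : Set ℂ} (hK : IsCompact K) (hub : ∀ z ∉ K, ¬ Bornology.IsBounded (connectedComponentIn Kᶜ z))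
    (hG : IsOpen G) (hKG : K ⊆ G) {g : ℂ → ℂ} (hg : DifferentiableOn ℂ g G) {ε : ℝ} (hε : 0 < ε) :
    ∃ P : ℂ[X], ∀ z ∈ K, ‖g z - P.eval z‖ < ε := by
  rcases K.eq_empty_or_nonempty with rfl | hne
  · exact ⟨0, fun z hz => absurd hz (notMem_empty _)⟩
  obtain ⟨r, hr, χ, h1, h2, h3, h4⟩ := chi_exists hK hne hG hKG
  have hφ : ContDiff ℝ 1 (fun z => g z * χ z) := (glue_contDiff hG hg h1 h3).of_le (by exact_mod_cast le_top)
  have hφs : HasCompactSupport (fun z => g z * χ z) := h2.mul_left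
  have hd : Disjoint (tsupport (dbar (fun z => g z * χ z))) K := by
    rw [disjoint_right]
    intro z hz
    rw [notMem_tsupport_iff_eventuallyEq]
    filter_upwards [Metric.isOpen_thickening.mem_nhds (Metric.self_subset_thickening hr K hz)] with y hy
    have hyG : y ∈ G := h3 (subset_tsupport _ (by
      simp [h4 y (Metric.thickening_subset_cthickening _ _ hy)]))
    have : (fun z => g z * χ z) =ᶠ[𝓝 y] g := by
      filter_upwards [Metric.isOpen_thickening.mem_nhds hy] with x hx
      rw [h4 x (Metric.thickening_subset_cthickening _ _ hx), mul_one]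
    rw [dbar_congr this]
    exact dbar_holo (hg.differentiableAt (hG.mem_nhds hyG))
  have hpi : (-(2 * (Real.pi : ℂ))) ≠ 0 := by
    simp [Real.pi_ne_zero]
  have hpn : 0 < ‖-(2 * (Real.pi : ℂ))‖ := norm_pos_iff.2 hpi
  obtain ⟨P, hP⟩ := int_mem_poly hK hub (dbar_continuous hφ) (dbar_hcs hφs) hd (mul_pos hpn hε)
  refine ⟨C (-(2 * (Real.pi : ℂ)))⁻¹ * P, fun z hz => ?_⟩
  have := hP z hz
  rw [cauchy_pompeiu hφ hφs, h4 z (Metric.self_subset_cthickening K hz), mul_one] at this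
  have e : -(2 * (Real.pi : ℂ)) * g z - P.eval z =
      -(2 * (Real.pi : ℂ)) * (g z - (C (-(2 * (Real.pi : ℂ)))⁻¹ * P).eval z) := by
    rw [eval_mul, eval_C, mul_sub, mul_inv_cancel_left₀ hpi]
  rw [e, norm_mul] at this
  exact lt_of_mul_lt_mul_left this hpn.le

def exh (G : Set ℂ) (n : ℕ) : Set ℂ := {z | ‖z‖ ≤ n ∧ ∀ w ∉ G, 1 / ((n : ℝ) + 1) ≤ dist z w}

lemma exh_sub (G : Set ℂ) (n : ℕ) : exh G n ⊆ G := by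
  intro z hz
  by_contra h
  have := hz.2 z h
  rw [dist_self] at this
  have : 0 < 1 / ((n : ℝ) + 1) := by positivity
  linarith

lemma exh_compact (G : Set ℂ) (n : ℕ) : IsCompact (exh G n) := by
  have hcl : IsClosed (exh G n) := by
    have : exh G n = {z | ‖z‖ ≤ n} ∩ ⋂ w ∈ Gᶜ, {z | 1 / ((n : ℝ) + 1) ≤ dist z w} := by
      ext z; simp [exh]
    rw [this]
    refine (isClosed_le continuous_norm continuous_const).inter (isClosed_biInter fun w _ => ?_)
    exact isClosed_le continuous_const (by fun_prop)
  refine (isCompact_closedBall (0:ℂ) n).of_isClosed_subset hcl fun z hz => ?_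
  simpa using hz.1

lemma exh_mono (G : Set ℂ) {m n : ℕ} (h : m ≤ n) : exh G m ⊆ exh G n := by
  intro z hz
  have h' : (m : ℝ) ≤ n := by exact_mod_cast h
  exact ⟨hz.1.trans h', fun w hw => le_trans (one_div_le_one_div_of_le (by positivity) (by linarith)) (hz.2 w hw)⟩

lemma exh_ball {G : Set ℂ} (hG : IsOpen G) {z : ℂ} (hz : z ∈ G) :
    ∃ d > 0, ∃ n, Metric.ball z d ⊆ exh G n := by
  obtain ⟨d, hd, hb⟩ := Metric.isOpen_iff.1 hG z hz
  obtain ⟨n, hn⟩ := exists_nat_ge (max (‖z‖ + d) (1 / (d / 2)))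
  refine ⟨d / 2, half_pos hd, n, fun y hy => ⟨?_, fun w hw => ?_⟩⟩
  · rw [Metric.mem_ball, dist_eq_norm] at hy
    have h1 := (le_max_left _ _).trans hn
    have := norm_le_norm_add_norm_sub' y z
    linarith
  · have h1 := (le_max_right _ _).trans hn
    have h2 : 1 / ((n : ℝ) + 1) ≤ d / 2 := by
      rw [one_div_le (by positivity) (by positivity)]
      linarith
    have h3 : d ≤ dist w z := by
      by_contra h
      exact hw (hb (not_le.1 h))
    rw [Metric.mem_ball] at hy
    have := dist_triangle w y z
    rw [dist_comm w y] at this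
    linarith

lemma exh_unb {G : Set ℂ} {V : Set (OnePoint ℂ)} (hV : IsPreconnected V) (hinf : OnePoint.infty ∈ V)
    (hVG : ∀ z : ℂ, (z : OnePoint ℂ) ∈ V ↔ z ∉ G) (n : ℕ) :
    ∀ z ∉ exh G n, ¬ Bornology.IsBounded (connectedComponentIn (exh G n)ᶜ z) := by
  intro z hz hb
  have hop : IsOpen (exh G n)ᶜ := (exh_compact G n).isClosed.isOpen_compl
  have hW := hop.connectedComponentIn (x := z)
  have hall := no_bdd hV hinf hW hb (fun x hx hxW => by
    rw [hVG, not_not]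
    by_contra hxG
    have hxK : x ∈ (exh G n)ᶜ := fun h => hxG (exh_sub G n h)
    obtain ⟨y, hy1, hy2⟩ := mem_closure_iff.1 hx _ hop.connectedComponentIn (mem_connectedComponentIn hxK)
    rw [connectedComponentIn_eq hy2, ← connectedComponentIn_eq hy1] at hxW
    exact hxW (mem_connectedComponentIn hxK))
  by_cases hn : ‖z‖ ≤ n
  · have : ∃ w ∉ G, dist z w < 1 / ((n : ℝ) + 1) := by
      by_contra! h
      exact hz ⟨hn, h⟩
    obtain ⟨w, hw, hdw⟩ := this
    have hr : 0 < 1 / ((n : ℝ) + 1) := by positivity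
    have hsub : Metric.ball w (1 / ((n : ℝ) + 1)) ⊆ connectedComponentIn (exh G n)ᶜ z := by
      refine (convex_ball w _).isPreconnected.subset_connectedComponentIn hdw fun y hy hyK => ?_
      have := hyK.2 w hw
      rw [Metric.mem_ball] at hy
      linarith
    exact hall w (hsub (Metric.mem_ball_self hr)) ((hVG w).2 hw)
  · push Not at hn
    have hzp : 0 < ‖z‖ := lt_of_le_of_lt (Nat.cast_nonneg n) hn
    have hsub : (fun t : ℝ => (t : ℂ) * z) '' Ici 1 ⊆ connectedComponentIn (exh G n)ᶜ z := by
      refine (isPreconnected_Ici.image _ (by fun_prop)).subset_connectedComponentIn ⟨1, self_mem_Ici, by simp⟩ ?_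
      rintro _ ⟨t, ht, rfl⟩ hK
      have h1 := hK.1
      rw [mem_Ici] at ht
      rw [norm_mul, Complex.norm_real, Real.norm_of_nonneg (by linarith)] at h1
      nlinarith
    obtain ⟨R, hR⟩ := (Metric.isBounded_iff_subset_closedBall 0).1 hb
    have ht : (1:ℝ) ≤ |R| / ‖z‖ + 1 := by have : 0 ≤ |R| / ‖z‖ := by positivity
                                          linarith
    have := hR (hsub ⟨|R| / ‖z‖ + 1, ht, rfl⟩)
    rw [mem_closedBall_zero_iff, norm_mul, Complex.norm_real, Real.norm_of_nonneg (by linarith), add_mul,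
      div_mul_cancel₀ _ hzp.ne'] at this
    have := le_abs_self R
    linarith

lemma prim_exists {G : Set ℂ} {V : Set (OnePoint ℂ)} (hG : IsOpen G) (hGc : IsPreconnected G)
    (hV : IsPreconnected V) (hinf : OnePoint.infty ∈ V)
    (hVG : ∀ z : ℂ, (z : OnePoint ℂ) ∈ V ↔ z ∉ G) {g : ℂ → ℂ} (hg : DifferentiableOn ℂ g G) :
    ∃ F : ℂ → ℂ, ∀ z ∈ G, HasDerivAt F (g z) z := by
  rcases G.eq_empty_or_nonempty with rfl | ⟨z₀, hz₀⟩
  · exact ⟨0, fun z hz => absurd hz (notMem_empty _)⟩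
  have hP : ∀ n : ℕ, ∃ P : ℂ[X], ∀ z ∈ exh G n, ‖g z - P.eval z‖ < 1 / ((n : ℝ) + 1) := fun n =>
    runge (exh_compact G n) (exh_unb hV hinf hVG n) hG (exh_sub G n) hg (by positivity)
  choose P hP using hP
  have hQ : ∀ n : ℕ, ∃ Q : ℂ[X], derivative Q = P n ∧ Q.eval z₀ = 0 := fun n => by
    obtain ⟨Q, hQ⟩ := poly_antideriv (P n)
    exact ⟨Q - C (Q.eval z₀), by simp [hQ], by simp⟩
  choose Q hQ hQ0 using hQ
  have hder : ∀ n z, HasDerivAt (fun z => (Q n).eval z) ((P n).eval z) z := fun n z => by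
    have := (Q n).hasDerivAt z
    rwa [hQ n] at this
  have huni : ∀ m, TendstoUniformlyOn (fun n z => (P n).eval z) g atTop (exh G m) := fun m => by
    rw [Metric.tendstoUniformlyOn_iff]
    intro ε hε
    have := tendsto_one_div_add_atTop_nhds_zero_nat (𝕜 := ℝ)
    filter_upwards [this.eventually_lt_const hε, eventually_ge_atTop m] with n hn hmn z hz
    rw [dist_eq_norm]
    exact (hP n z (exh_mono G hmn hz)).trans hn
  have hloc : TendstoLocallyUniformlyOn (fun n z => (P n).eval z) g atTop G := by
    intro u hu z hz
    obtain ⟨d, hd, m, hb⟩ := exh_ball hG hz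
    exact ⟨Metric.ball z d, mem_nhdsWithin_of_mem_nhds (Metric.ball_mem_nhds z hd),
      ((huni m).mono hb) u hu⟩
  have hstep : ∀ x d m, Metric.ball x d ⊆ exh G m → CauchySeq (fun n => (Q n).eval x) →
      ∀ y ∈ Metric.ball x d, CauchySeq (fun n => (Q n).eval y) := by
    intro x d m hb hx y hy
    have := uniformCauchySeqOn_ball_of_deriv (f := fun n z => (Q n).eval z) (f' := fun n z => (P n).eval z)
      (((huni m).mono hb).uniformCauchySeqOn) (fun n y _ => hder n y) hx
    exact this.cauchySeq hy
  have hconv : ∀ z ∈ G, CauchySeq (fun n => (Q n).eval z) := by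
    intro z hz
    have h0 : CauchySeq (fun n => (Q n).eval z₀) := by
      simp only [hQ0]; exact (tendsto_const_nhds (x := (0:ℂ))).cauchySeq
    refine (hGc.induction₂ (fun x y => (CauchySeq (fun n => (Q n).eval x) ↔ CauchySeq (fun n => (Q n).eval y)))
      ?_ (fun x y z _ _ _ h1 h2 => h1.trans h2) (fun x y _ _ h => h.symm) hz₀ hz).1 h0
    intro x hx
    obtain ⟨d, hd, m, hb⟩ := exh_ball hG hx
    apply eventually_nhdsWithin_of_eventually_nhds
    filter_upwards [Metric.ball_mem_nhds x (half_pos hd)] with y hy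
    refine ⟨fun h => hstep x d m hb h y (Metric.ball_subset_ball (by linarith) hy), fun h => ?_⟩
    refine hstep y (d / 2) m (Subset.trans ?_ hb) h x (Metric.mem_ball_comm.1 hy)
    apply Metric.ball_subset_ball'
    rw [Metric.mem_ball] at hy
    linarith
  refine ⟨fun z => limUnder atTop (fun n => (Q n).eval z), fun z hz => ?_⟩
  exact hasDerivAt_of_tendstoLocallyUniformlyOn hG hloc (Eventually.of_forall fun n x _ => hder n x)
    (fun x hx => (hconv x hx).tendsto_limUnder) hz

lemma iter_prim {G : Set ℂ} {V : Set (OnePoint ℂ)} (hG : IsOpen G) (hGc : IsPreconnected G)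
    (hV : IsPreconnected V) (hinf : OnePoint.infty ∈ V)
    (hVG : ∀ z : ℂ, (z : OnePoint ℂ) ∈ V ↔ z ∉ G) (n : ℕ) {g : ℂ → ℂ} (hg : DifferentiableOn ℂ g G) :
    ∃ φ : ℂ → ℂ, DifferentiableOn ℂ φ G ∧ ∀ z ∈ G, iteratedDeriv n φ z = g z := by
  induction n generalizing g with
  | zero => exact ⟨g, hg, fun z _ => by simp⟩
  | succ n ih =>
    obtain ⟨F, hF⟩ := prim_exists hG hGc hV hinf hVG hg
    obtain ⟨φ, h1, h2⟩ := ih (g := F) (fun z hz => (hF z hz).differentiableAt.differentiableWithinAt)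
    refine ⟨φ, h1, fun z hz => ?_⟩
    rw [iteratedDeriv_succ, ← (hF z hz).deriv]
    apply Filter.EventuallyEq.deriv_eq
    filter_upwards [hG.mem_nhds hz] with y hy
    exact h2 y hy

end HelperLemmas

open OnePoint in
/-- Let `Ω ⊆ ℂ` be a domain whose complement in the Riemann sphere `ℂ ∪ {∞}` has exactly two
connected components: `V₀ ∋ ∞` and (the copy of) `E`, where `E` is the closure of the Jordan
domain `U` bounded by a rectifiable Jordan curve `δ` and the boundary of `E` is the image `δ*`
of `δ`. Let `f` be holomorphic on `Ω` and continuous on `Ω ∪ δ*`. Then the following are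
equivalent: (i) `f` admits one-valued primitives of all orders on `Ω`;
(ii) `∫_δ P(z) f(z) dz = 0` for every analytic polynomial `P`;
(iii) `f` extends holomorphically to `Ω ∪ E`. -/
theorem statement7 (Ω : Set ℂ) (hΩopen : IsOpen Ω) (hΩconn : IsConnected Ω)
    (δ : ℝ → ℂ) (a b : ℝ) (hδ : IsRectifiableJordanCurve δ a b)
    (U : Set ℂ) (hUbdd : Bornology.IsBounded U)
    (hUcomp : ∃ x : ℂ, U = connectedComponentIn ((δ '' Set.Icc a b)ᶜ) x)
    (E : Set ℂ) (hE : E = closure U)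
    (hfront : frontier E = δ '' Set.Icc a b)
    (V₀ : Set (OnePoint ℂ))
    (hV₀ : V₀ = connectedComponentIn (((fun z : ℂ => (z : OnePoint ℂ)) '' Ω)ᶜ) ∞)
    (hcover : ((fun z : ℂ => (z : OnePoint ℂ)) '' Ω)ᶜ
      = V₀ ∪ (fun z : ℂ => (z : OnePoint ℂ)) '' E)
    (hEcomp : ∃ z ∈ E, (fun z : ℂ => (z : OnePoint ℂ)) '' E
      = connectedComponentIn (((fun z : ℂ => (z : OnePoint ℂ)) '' Ω)ᶜ) (z : OnePoint ℂ))
    (f : ℂ → ℂ) (hf : DifferentiableOn ℂ f Ω)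
    (hfcont : ContinuousOn f (Ω ∪ δ '' Set.Icc a b)) :
    ((∀ n : ℕ, 1 ≤ n → ∃ φ : ℂ → ℂ, DifferentiableOn ℂ φ Ω ∧
        ∀ z ∈ Ω, iteratedDeriv n φ z = f z) ↔
      (∀ P : Polynomial ℂ, IsRSIntegral (fun z => P.eval z * f z) δ a b 0)) ∧
    ((∀ P : Polynomial ℂ, IsRSIntegral (fun z => P.eval z * f z) δ a b 0) ↔
      (∃ g : ℂ → ℂ, DifferentiableOn ℂ g (Ω ∪ E) ∧ Set.EqOn g f Ω)) := by
  obtain ⟨L, γ, s, hL, hγ, hsc, hsm, hsa, hsb, hγs, him, hinj, hcl⟩ := exists_reparam hδ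
  rw [← him] at hUcomp hfront hfcont
  have S := setup_of hΩopen hΩconn hL hγ hcl hinj hUbdd hUcomp hE hfront hV₀ hcover hEcomp
  have hPc : ∀ P : ℂ[X], ContinuousOn (fun z => P.eval z * f z) (γ '' Icc 0 L) := fun P =>
    P.continuous.continuousOn.mul (hfcont.mono subset_union_right)
  have hrs : ∀ P : ℂ[X], IsRSIntegral (fun z => P.eval z * f z) δ a b
      (cInt γ L (fun z => P.eval z * f z)) := fun P =>
    rs_cInt hL hγ hsc hsm hsa hsb hγs (hPc P)
  have h12 : (∀ n : ℕ, 1 ≤ n → ∃ φ : ℂ → ℂ, DifferentiableOn ℂ φ Ω ∧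
        ∀ z ∈ Ω, iteratedDeriv n φ z = f z) →
      (∀ P : Polynomial ℂ, IsRSIntegral (fun z => P.eval z * f z) δ a b 0) := fun h P => by
    have := hrs P
    rwa [i_ii S hf hfcont h P] at this
  have h23 : (∀ P : Polynomial ℂ, IsRSIntegral (fun z => P.eval z * f z) δ a b 0) →
      (∃ g : ℂ → ℂ, DifferentiableOn ℂ g (Ω ∪ E) ∧ Set.EqOn g f Ω) := fun h =>
    ii_iii S hf hfcont fun P => rs_unique hδ.1 (hrs P) (h P)
  have h31 : (∃ g : ℂ → ℂ, DifferentiableOn ℂ g (Ω ∪ E) ∧ Set.EqOn g f Ω) →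
      (∀ n : ℕ, 1 ≤ n → ∃ φ : ℂ → ℂ, DifferentiableOn ℂ φ Ω ∧
        ∀ z ∈ Ω, iteratedDeriv n φ z = f z) := by
    rintro ⟨g, hg, hgf⟩ n _
    obtain ⟨φ, h1, h2⟩ := iter_prim S.Go S.Gc S.Vc S.Vinf S.VG n hg
    exact ⟨φ, h1.mono subset_union_left, fun z hz => (h2 z (Or.inl hz)).trans (hgf hz)⟩
  exact ⟨⟨h12, fun h => h31 (h23 h)⟩, ⟨h23, fun h => h12 (h31 h)⟩⟩
end
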